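/- Let G be a finitely generated co-Hopfian virtually free group with Out(G) finite. Then G is prime: for every group G' that is elementarily equivalent to G, there exists an elementary embedding of G into G'. -/

import Mathlib

open FirstOrder Language

/-- Function symbols of the first-order language of groups:
a binary multiplication, a unary inverse and a constant for the identity. -/
inductive GroupFunc : ℕ → Type
  | mul : GroupFunc 2
  | inv : GroupFunc 1
  | one : GroupFunc 0

/-- The first-order language of groups. -/
def groupLang : FirstOrder.Language :=
  { Functions := GroupFunc
    Relations := fun _ => Empty }

/-- Every group is a structure for the language of groups in the natural way. -/
instance groupLangStructure (G : Type*) [Group G] : groupLang.Structure G where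
  funMap {n} f v :=
    match f with
    | .mul => v 0 * v 1
    | .inv => (v 0)⁻¹
    | .one => 1
  RelMap {n} r _ := r.elim

/-- Existential formulas: iterated existential quantifications of a
quantifier-free formula. -/
inductive IsExistentialQF {α : Type*} : ∀ {n : ℕ}, groupLang.BoundedFormula α n → Prop
  | of_isQF {n : ℕ} {φ : groupLang.BoundedFormula α n} (h : φ.IsQF) : IsExistentialQF φ
  | ex {n : ℕ} {φ : groupLang.BoundedFormula α (n + 1)} (h : IsExistentialQF φ) :
      IsExistentialQF φ.ex

/-- Universal formulas: iterated universal quantifications of a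
quantifier-free formula. -/
inductive IsUniversalQF {α : Type*} : ∀ {n : ℕ}, groupLang.BoundedFormula α n → Prop
  | of_isQF {n : ℕ} {φ : groupLang.BoundedFormula α n} (h : φ.IsQF) : IsUniversalQF φ
  | all {n : ℕ} {φ : groupLang.BoundedFormula α (n + 1)} (h : IsUniversalQF φ) :
      IsUniversalQF φ.all

/-- ∀∃-formulas: iterated universal quantifications of an existential formula. -/
inductive IsAE {α : Type*} : ∀ {n : ℕ}, groupLang.BoundedFormula α n → Prop
  | of_existential {n : ℕ} {φ : groupLang.BoundedFormula α n} (h : IsExistentialQF φ) : IsAE φ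
  | all {n : ℕ} {φ : groupLang.BoundedFormula α (n + 1)} (h : IsAE φ) : IsAE φ.all

/-- A group is virtually free if it has a free subgroup of finite index. -/
def VirtuallyFree (G : Type*) [Group G] : Prop :=
  ∃ H : Subgroup G, H.FiniteIndex ∧ Nonempty (IsFreeGroup H)

/-- A group is co-Hopfian if every injective endomorphism is surjective. -/
def CoHopfian (G : Type*) [Group G] : Prop :=
  ∀ φ : G →* G, Function.Injective φ → Function.Surjective φ

/-- Two homomorphisms `φ, φ' : G → G'` are equivalent if they coincide up to
conjugation on every finite subgroup of `G`. -/
def HomEquiv {G G' : Type*} [Group G] [Group G'] (φ φ' : G →* G') : Prop :=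
  ∀ H : Subgroup G, (H : Set G).Finite →
    ∃ g' : G', ∀ h ∈ H, φ' h = g' * φ h * g'⁻¹

/-- Two groups are ∀∃-equivalent if they satisfy the same ∀∃-sentences. -/
def AEEquivalent (G : Type*) (G' : Type*) [Group G] [Group G'] : Prop :=
  ∀ φ : groupLang.Sentence, IsAE φ → (G ⊨ φ ↔ G' ⊨ φ)

/-- Two groups are ∃-equivalent if they satisfy the same existential sentences. -/
def ExistentiallyEquivalent (G : Type*) (G' : Type*) [Group G] [Group G'] : Prop :=
  ∀ φ : groupLang.Sentence, IsExistentialQF φ → (G ⊨ φ ↔ G' ⊨ φ)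

/-- An endomorphism is rigid-testing: `G` is rigid if every endomorphism
equivalent to the identity is an automorphism. -/
def Rigid (G : Type*) [Group G] : Prop :=
  ∀ φ : G →* G, HomEquiv φ (MonoidHom.id G) → Function.Bijective φ

/-- `Out G` is finite, expressed as: the inner automorphisms form a finite index
subgroup of `Aut G`. -/
def OutFinite (G : Type*) [Group G] : Prop :=
  (MulAut.conj : G →* MulAut G).range.FiniteIndex

/-- Iterated composition of an endomorphism. -/
def homPow {G : Type*} [Group G] (φ : G →* G) : ℕ → (G →* G)
  | 0 => MonoidHom.id G
  | n + 1 => φ.comp (homPow φ n)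

/-- An endomorphism `φ` of `G` is class-permuting if some positive power of `φ`
is equivalent to the identity of `G`. -/
def ClassPermuting {G : Type*} [Group G] (φ : G →* G) : Prop :=
  ∃ n : ℕ, 1 ≤ n ∧ HomEquiv (homPow φ n) (MonoidHom.id G)

/-- A maximal finite subgroup: a finite subgroup maximal with respect to
inclusion among finite subgroups. -/
def MaximalFiniteSubgroup {G : Type*} [Group G] (A : Subgroup G) : Prop :=
  (A : Set G).Finite ∧ ∀ B : Subgroup G, (B : Set G).Finite → A ≤ B → A = B

/-- Two subgroups are conjugate. -/
def SubgroupConj {G : Type*} [Group G] (A B : Subgroup G) : Prop :=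
  ∃ g : G, B = A.map (MulAut.conj g).toMonoidHom

/-- A group is strongly co-Hopfian if there is a finite subset `F` of
`G \ {1}` such that every endomorphism whose kernel misses `F` is an
automorphism. -/
def StronglyCoHopfian (G : Type*) [Group G] : Prop :=
  ∃ F : Finset G, (1 : G) ∉ F ∧
    ∀ φ : G →* G, (∀ f ∈ F, φ f ≠ 1) → Function.Bijective φ

/-- A group is finitely presented. -/
def GroupFinitelyPresented (G : Type*) [Group G] : Prop :=
  ∃ (n : ℕ) (rels : Finset (FreeGroup (Fin n))),
    Nonempty (PresentedGroup (rels : Set (FreeGroup (Fin n))) ≃* G)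

/-!
A finitely generated virtually free group `G` acts on a tree with finite vertex stabilizers in such
a way that every edge is translated along its axis by some element. The tree is encoded by its
half-trees, which are optimally nested cuts of a Cayley graph, that is, certain subsets of `G`.

The centralizer of each edge stabilizer is finite. Indeed, an infinite one contains an element `z`
of infinite order. If `z` translates the edge, then multiplying by `z` along the edges of its orbit
yields an injective endomorphism which is not surjective. Otherwise, after collapsing the other
orbits and possibly replacing the edge by a translate, `z` fixes the initial vertex of the edge. The
Dehn twists by the powers of `z` are then injective, hence automorphisms since `G` is co-Hopfian,
and as `Out(G)` is finite, two of them differ by an inner automorphism, a contradiction.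

Finite subgroups of `G` lie in finitely many conjugacy classes. Hence, up to conjugation, there are
only finitely many endomorphisms mapping the edge stabilizers to subgroups with finite centralizers:
on an element which glues two edges, such an endomorphism is determined up to one of these
centralizers by its values on finite subgroups. So there is a finite set `F` of nontrivial elements
such that every such endomorphism which kills no element of `F` is injective, hence an automorphism.

The orbit under `Aut(G)` of a finite generating tuple is therefore definable by finitely many
relators, bounds for the orders of the centralizers of finitely many edge stabilizers, and the
nontriviality of the elements of `F`. So the tuple has an isolated type, and `G` is a prime model.
-/

/-! ### Definable sets of generating tuples -/

/-- If `s` generates `M` and some `∅`-definable set of tuples consists of translates of `s` under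
automorphisms, then `s` has an isolated type; a realization of this type in a model of the theory
of `M` generates an elementary copy of `M`. -/
theorem nonempty_elementaryEmbedding_of_definable {L : FirstOrder.Language} {M N σ : Type*}
    [L.Structure M] [L.Structure N] [Finite σ] {s : σ → M}
    (hgen : ∀ m : M, ∃ t : L.Term σ, t.realize s = m) {T : Set (σ → M)}
    (hT : (∅ : Set M).Definable L T) (hsT : s ∈ T)
    (hauto : ∀ x ∈ T, ∃ a : M ≃[L] M, x = a ∘ s) (h : M ≅[L] N) :
    Nonempty (M ↪ₑ[L] N) := by
  obtain ⟨θ, rfl⟩ := Set.empty_definable_iff.1 hT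
  choose t ht using hgen
  have transfer (ψ : L.Formula σ) : (∃ x : σ → M, ψ.Realize x) ↔ ∃ y : σ → N, ψ.Realize y := by
    have := elementarilyEquivalent_iff.1 h ((ψ.relabel (Sum.inr : σ → Empty ⊕ σ)).iExs σ)
    simpa [Sentence.Realize, Formula.realize_iExs, Formula.realize_relabel, Function.comp_def]
      using this
  obtain ⟨y, hy⟩ := (transfer θ).1 ⟨s, hsT⟩
  have preserves {n : ℕ} (φ : L.Formula (Fin n)) (m : Fin n → M) (hm : φ.Realize m) :
      φ.Realize fun i => (t (m i)).realize y := by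
    by_contra hφ
    let ψ : L.Formula σ := BoundedFormula.subst φ fun i => t (m i)
    obtain ⟨x, hx⟩ := (transfer (θ ⊓ ψ.not)).2 ⟨y, by
      rw [Formula.realize_inf, Formula.realize_not]
      exact ⟨hy, fun h => hφ (BoundedFormula.realize_subst.1 h)⟩⟩
    rw [Formula.realize_inf, Formula.realize_not] at hx
    obtain ⟨a, rfl⟩ := hauto x hx.1
    apply hx.2
    rw [StrongHomClass.realize_formula a]
    refine BoundedFormula.realize_subst.2 ?_
    simp only [ht]
    exact hm
  refine ⟨⟨fun m => (t m).realize y, fun n φ m => ⟨fun hφ => ?_, preserves φ m⟩⟩⟩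
  by_contra hm
  exact Formula.realize_not.1 (preserves φ.not m (Formula.realize_not.2 hm)) hφ

/-- A group isomorphism, viewed as an isomorphism of structures for the language of groups. -/
def groupLangEquiv {G H : Type*} [Group G] [Group H] (a : G ≃* H) : G ≃[groupLang] H where
  toEquiv := a.toEquiv
  map_fun' f x := by
    cases f
    · exact a.map_mul _ _
    · exact a.map_inv _
    · exact a.map_one
  map_rel' r := r.elim

theorem exists_term_realize_eq_lift {σ : Type*} (w : FreeGroup σ) (G : Type*) [Group G] :
    ∃ t : groupLang.Term σ, ∀ x : σ → G, t.realize x = FreeGroup.lift x w := by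
  induction w using FreeGroup.induction_on with
  | of i => exact ⟨Term.var i, fun x => by simp⟩
  | C1 =>
    refine ⟨Term.func (L := groupLang) (l := 0) GroupFunc.one Fin.elim0, fun x => ?_⟩
    rw [map_one]; rfl
  | mul v w hv hw =>
    obtain ⟨t, ht⟩ := hv
    obtain ⟨t', ht'⟩ := hw
    refine ⟨Term.func (L := groupLang) (l := 2) GroupFunc.mul ![t, t'], fun x => ?_⟩
    rw [map_mul, ← ht, ← ht']; rfl
  | inv_of i hi =>
    obtain ⟨t, ht⟩ := hi
    refine ⟨Term.func (L := groupLang) (l := 1) GroupFunc.inv ![t], fun x => ?_⟩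
    rw [map_inv, ← ht]; rfl

section Definable

variable {G : Type*} [Group G] {σ : Type*}

theorem definable_lift_eq_lift (v w : FreeGroup σ) :
    (∅ : Set G).Definable groupLang {x : σ → G | FreeGroup.lift x v = FreeGroup.lift x w} := by
  obtain ⟨t, ht⟩ := exists_term_realize_eq_lift v G
  obtain ⟨t', ht'⟩ := exists_term_realize_eq_lift w G
  refine Set.empty_definable_iff.2 ⟨t.equal t', ?_⟩
  ext x
  simp [Formula.realize_equal, ht, ht']

theorem definable_lift_eq_one (w : FreeGroup σ) :
    (∅ : Set G).Definable groupLang {x : σ → G | FreeGroup.lift x w = 1} := by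
  simpa only [map_one] using definable_lift_eq_lift (G := G) w 1

theorem definable_injective_and_mem_centralizer {A : Set (FreeGroup σ)} (hA : A.Finite) (m : ℕ) :
    (∅ : Set G).Definable groupLang {y : σ ⊕ Fin m → G | Function.Injective (y ∘ Sum.inr) ∧
      ∀ i, y (Sum.inr i) ∈ Set.centralizer (FreeGroup.lift (y ∘ Sum.inl) '' A)} := by
  have := hA.to_subtype
  have lift_inl (y : σ ⊕ Fin m → G) (w : FreeGroup σ) :
      FreeGroup.lift y (FreeGroup.map Sum.inl w) = FreeGroup.lift (y ∘ Sum.inl) w := by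
    rw [← MonoidHom.comp_apply]
    congr 1
    ext; simp
  convert (Set.definable_iInter_of_finite
      fun p : {p : Fin m × Fin m // p.1 ≠ p.2} => (definable_lift_eq_lift (G := G)
        (FreeGroup.of (Sum.inr p.1.1 : σ ⊕ Fin m)) (FreeGroup.of (Sum.inr p.1.2))).compl).inter
    (Set.definable_iInter_of_finite fun p : Fin m × A => definable_lift_eq_lift (G := G)
      (FreeGroup.map Sum.inl p.2.1 * FreeGroup.of (Sum.inr p.1 : σ ⊕ Fin m))
      (FreeGroup.of (Sum.inr p.1) * FreeGroup.map Sum.inl p.2.1)) using 1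
  ext y
  simp [lift_inl, Set.mem_centralizer_iff, Function.Injective, not_imp_not]

theorem definable_encard_centralizer_le [Finite σ] {A : Set (FreeGroup σ)} (hA : A.Finite)
    (m : ℕ) : (∅ : Set G).Definable groupLang
      {x : σ → G | (Set.centralizer (FreeGroup.lift x '' A)).encard ≤ m} := by
  convert ((definable_injective_and_mem_centralizer (G := G) hA (m + 1)).image_comp
    (Sum.inl : σ → σ ⊕ Fin (m + 1))).compl using 1
  ext x
  rw [Set.mem_compl_iff, Set.mem_ofPred_eq, ← not_lt, not_iff_not]
  constructor
  · intro hx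
    obtain ⟨t, htx, ht⟩ := Set.exists_subset_encard_eq (Order.add_one_le_of_lt hx)
    have : Finite t := Set.finite_of_encard_eq_coe (k := m + 1) (mod_cast ht)
    have e := (Finite.equivFinOfCardEq (α := t) (n := m + 1) (by
      rw [Nat.card_coe_set_eq, Set.ncard_def, ht]; rfl)).symm
    exact ⟨Sum.elim x (fun i => e i), ⟨Subtype.val_injective.comp e.injective,
      fun i => htx (e i).2⟩, rfl⟩
  · rintro ⟨y, ⟨hinj, hy⟩, rfl⟩
    calc (m : ℕ∞) < (m + 1 : ℕ) := by exact_mod_cast m.lt_succ_self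
      _ = ENat.card (Fin (m + 1)) := by simp
      _ ≤ (Set.range (y ∘ Sum.inr)).encard := hinj.encard_range
      _ ≤ _ := Set.encard_le_encard (Set.range_subset_iff.2 hy)

end Definable

/-! ### Finite presentability -/

section FinitePresentation

variable {G : Type*} [Group G]

theorem ker_le_of_map_mul_mk {P : Type*} [Group P] {π : P →* G} {N : Subgroup P} [N.Normal]
    {C : Set P} (hC : Subgroup.closure C = ⊤) (ψ : G → P ⧸ N) (hone : ψ 1 = 1)
    (hmul : ∀ g, ∀ c ∈ C, ψ (g * π c) = ψ g * QuotientGroup.mk c) : π.ker ≤ N := by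
  have hψ (p : P) : ψ (π p) = QuotientGroup.mk p := by
    have hp : p ∈ Subgroup.closure C := hC ▸ Subgroup.mem_top p
    induction hp using Subgroup.closure_induction_right with
    | one => rw [map_one, hone]; rfl
    | mul_right p _ c hc ih => rw [map_mul, hmul _ c hc, ih]; rfl
    | mul_inv_cancel p _ c hc ih =>
      rw [map_mul, map_inv, QuotientGroup.mk_mul, QuotientGroup.mk_inv, eq_mul_inv_iff_mul_eq,
        ← hmul _ c hc, inv_mul_cancel_right, ih]
  intro p hp
  rw [← QuotientGroup.eq_one_iff, ← hψ, hp, hone]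

open Monoid in
/-- A presentation of `H` is completed to one of `G` by a transversal `R` of `H` and relations
which rewrite each `r * c`, with `c` a generator, in the normal form `h * r'`. -/
theorem isFinitelyPresented_of_finiteIndex (H : Subgroup G) [H.FiniteIndex]
    [hH : Group.IsFinitelyPresented H] : Group.IsFinitelyPresented G := by
  obtain ⟨n, φ, hφ, -⟩ := hH.out
  obtain ⟨R, hR, -⟩ := H.exists_isComplement_right 1
  have := hR.finite_right.to_subtype
  let π : Coprod H (FreeGroup R) →* G := Coprod.lift H.subtype (FreeGroup.lift (↑))
  let C : Set (Coprod H (FreeGroup R)) :=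
    Coprod.inl '' Set.range (φ ∘ FreeGroup.of) ∪ Coprod.inr '' Set.range FreeGroup.of
  have hC : Subgroup.closure C = ⊤ := by
    rw [Subgroup.closure_union, ← MonoidHom.map_closure, ← MonoidHom.map_closure, Set.range_comp,
      ← MonoidHom.map_closure, FreeGroup.closure_range_of, FreeGroup.closure_range_of,
      ← MonoidHom.range_eq_map, MonoidHom.range_eq_top.2 hφ, ← MonoidHom.range_eq_map,
      ← MonoidHom.range_eq_map, Coprod.range_inl_sup_range_inr]
  let normalForm (g : G) : Coprod H (FreeGroup R) :=
    Coprod.inl (hR.equiv g).1 * Coprod.inr (FreeGroup.of (hR.equiv g).2)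
  have π_normalForm (g : G) : π (normalForm g) = g := by
    simp [π, normalForm, hR.equiv_fst_mul_equiv_snd]
  have normalForm_mul (h : H) (g : G) : normalForm (h * g) = Coprod.inl h * normalForm g := by
    simp [normalForm, hR.equiv_mul_left, mul_assoc]
  let rels : Set (Coprod H (FreeGroup R)) := insert (normalForm 1) <|
    Set.image2 (fun (r : R) c => Coprod.inr (FreeGroup.of r) * c * (normalForm (r * π c))⁻¹)
      Set.univ C
  have hCfin : C.Finite :=
    ((Set.finite_range _).image _).union ((Set.finite_range _).image _)
  refine .of_surjective π (fun g => ⟨_, π_normalForm g⟩)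
    ⟨rels, (Set.finite_univ.image2 _ hCfin).insert _, le_antisymm ?_ ?_⟩
  · refine Subgroup.normalClosure_le_normal ?_
    rintro _ (rfl | ⟨r, -, c, -, rfl⟩)
    · exact π_normalForm 1
    · simp [π_normalForm, MonoidHom.mem_ker, π]
  · refine ker_le_of_map_mul_mk hC (fun g => QuotientGroup.mk (normalForm g)) ?_ fun g c hc => ?_
    · exact (QuotientGroup.eq_one_iff _).2 (Subgroup.subset_normalClosure (Set.mem_insert _ _))
    · have hrel : (QuotientGroup.mk (Coprod.inr (FreeGroup.of (hR.equiv g).2) * c) :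
          _ ⧸ Subgroup.normalClosure rels) =
          QuotientGroup.mk (normalForm ((hR.equiv g).2 * π c)) := by
        rw [← mul_inv_eq_one, ← QuotientGroup.mk_inv, ← QuotientGroup.mk_mul,
          QuotientGroup.eq_one_iff]
        exact Subgroup.subset_normalClosure
          (Set.mem_insert_of_mem _ (Set.mem_image2_of_mem (Set.mem_univ _) hc))
      have hg : g * π c = (hR.equiv g).1 * ((hR.equiv g).2 * π c) := by
        rw [← mul_assoc, hR.equiv_fst_mul_equiv_snd]
      rw [hg, normalForm_mul, QuotientGroup.mk_mul, ← hrel, ← QuotientGroup.mk_mul, ← mul_assoc,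
        QuotientGroup.mk_mul]

theorem finite_of_fg_freeGroup {β : Type*} [hβ : Group.FG (FreeGroup β)] : Finite β := by
  obtain ⟨S, hS⟩ := Group.fg_def.1 hβ
  have : Finite (FreeGroup β →* Multiplicative (ZMod 2)) :=
    .of_injective (fun f (x : S) => f x) fun _ _ hfg =>
      MonoidHom.eq_of_eqOn_dense hS fun x hx => congrFun hfg ⟨x, hx⟩
  have : Finite (β → Multiplicative (ZMod 2)) := .of_equiv _ FreeGroup.lift.symm
  classical
  refine .of_injective (fun b : β => Pi.mulSingle b (Multiplicative.ofAdd (1 : ZMod 2)))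
    fun b c hbc => by_contra fun hne => ?_
  simpa [hne] using congrFun hbc b

theorem VirtuallyFree.exists_freeGroup_mulEquiv (hvf : VirtuallyFree G) (hfg : Group.FG G) :
    ∃ (n : ℕ) (H : Subgroup G), H.FiniteIndex ∧ Nonempty (FreeGroup (Fin n) ≃* H) := by
  obtain ⟨H, hH, ⟨_⟩⟩ := hvf
  have e := IsFreeGroup.toFreeGroup H
  have : Group.FG (FreeGroup (IsFreeGroup.Generators H)) :=
    Group.fg_of_surjective (f := e.toMonoidHom) e.surjective
  have : Finite (IsFreeGroup.Generators H) := finite_of_fg_freeGroup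
  exact ⟨_, H, hH, ⟨(FreeGroup.freeGroupCongr (Finite.equivFin _).symm).trans e.symm⟩⟩

theorem VirtuallyFree.isFinitelyPresented (hvf : VirtuallyFree G) (hfg : Group.FG G) :
    Group.IsFinitelyPresented G := by
  obtain ⟨n, H, _, ⟨e⟩⟩ := hvf.exists_freeGroup_mulEquiv hfg
  have := Group.IsFinitelyPresented.equiv e
  exact isFinitelyPresented_of_finiteIndex H

end FinitePresentation

/-! ### Optimally nested cuts of a graph -/

section Cuts

variable {V : Type*} {Γ : Set (V × V)}

/-- The edge boundary of a set `C` of vertices in the directed graph with edge set `Γ`. -/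
def edgeBoundary (Γ : Set (V × V)) (C : Set V) : Set (V × V) :=
  {e ∈ Γ | ¬ (e.1 ∈ C ↔ e.2 ∈ C)}

/-- The subgraph of `Γ` spanned by the vertex set `B` is connected (possibly empty). This is phrased
as indecomposability: a set `A` with no boundary edge inside `B` contains `B` or misses it. -/
def IsConnectedIn (Γ : Set (V × V)) (B : Set V) : Prop :=
  ∀ A, (∀ e ∈ edgeBoundary Γ A, ¬ (e.1 ∈ B ∧ e.2 ∈ B)) → B ⊆ A ∨ B ⊆ Aᶜ

/-- Two sets are nested if one of the four corners which they cut out is empty. -/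
def Nested (A B : Set V) : Prop := A ⊆ B ∨ A ⊆ Bᶜ ∨ Aᶜ ⊆ B ∨ Aᶜ ⊆ Bᶜ

/-- The tight cuts of `Γ` with at most `k` boundary edges: both sides are connected. -/
def tightCuts (Γ : Set (V × V)) (k : ℕ) : Set (Set V) :=
  {C | IsConnectedIn Γ C ∧ IsConnectedIn Γ Cᶜ ∧ (edgeBoundary Γ C).Finite ∧
    (edgeBoundary Γ C).ncard ≤ k}

theorem edgeBoundary_compl (Γ : Set (V × V)) (C : Set V) :
    edgeBoundary Γ Cᶜ = edgeBoundary Γ C := by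
  ext e
  simp [edgeBoundary, not_iff_not]

theorem edgeBoundary_sdiff_singleton (e : V × V) (C : Set V) :
    edgeBoundary (Γ \ {e}) C = edgeBoundary Γ C \ {e} := by
  ext f
  simp only [edgeBoundary, Set.mem_sdiff, Set.mem_ofPred_eq]
  tauto

theorem edgeBoundary_nonempty (hΓ : IsConnectedIn Γ Set.univ) {C : Set V} (hC : C.Nonempty)
    (hC' : Cᶜ.Nonempty) : (edgeBoundary Γ C).Nonempty := by
  by_contra! hempty
  rcases hΓ C (by simp [hempty]) with h | h
  · obtain ⟨x, hx⟩ := hC'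
    exact hx (h (Set.mem_univ x))
  · obtain ⟨x, hx⟩ := hC
    exact h (Set.mem_univ x) hx

theorem nested_compl_left {A B : Set V} : Nested Aᶜ B ↔ Nested A B := by
  simp only [Nested, _root_.compl_compl]
  tauto

theorem nested_compl_right {A B : Set V} : Nested A Bᶜ ↔ Nested A B := by
  simp only [Nested, _root_.compl_compl]
  tauto

theorem Nested.inter {X C D : Set V} (hC : Nested X C) (hD : Nested X D) (hCD : ¬ Nested C D) :
    Nested X (C ∩ D) := by
  simp only [Nested, Set.subset_def, Set.mem_compl_iff, Set.mem_inter_iff] at *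
  grind

theorem Nested.inter_or_inter_compl {X C D : Set V} (hC : Nested X C) :
    Nested X (C ∩ D) ∨ Nested X (Cᶜ ∩ Dᶜ) := by
  simp only [Nested, Set.subset_def, Set.mem_compl_iff, Set.mem_inter_iff] at *
  grind

theorem IsConnectedIn.sdiff_singleton {B : Set V} (hB : IsConnectedIn Γ B) {e : V × V}
    (he : ¬ (e.1 ∈ B ∧ e.2 ∈ B)) : IsConnectedIn (Γ \ {e}) B := by
  intro A hA
  refine hB A fun f hf => ?_
  by_cases hfe : f = e
  · rwa [hfe]
  · exact hA f (edgeBoundary_sdiff_singleton e A ▸ ⟨hf, hfe⟩)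

theorem eq_or_eq_compl_of_edgeBoundary_eq_empty {A C : Set V} (hA : edgeBoundary Γ A = ∅)
    (hAne : A.Nonempty) (hAne' : Aᶜ.Nonempty) (hC : IsConnectedIn Γ C)
    (hC' : IsConnectedIn Γ Cᶜ) : C = A ∨ C = Aᶜ := by
  have hCA := hC A (by simp [hA])
  have hCA' := hC' A (by simp [hA])
  clear hC hC'
  simp only [Set.Subset.antisymm_iff, Set.Nonempty, Set.subset_def, Set.mem_compl_iff] at *
  grind

/-- The cuts through `e` are tight cuts of `Γ \ {e}` with fewer boundary edges if `e` does not
disconnect `Γ`, and otherwise they are one of the two components of `Γ \ {e}`. -/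
theorem finite_tightCuts_succ {k : ℕ} {e : V × V} (he : e ∈ Γ)
    (ih : IsConnectedIn (Γ \ {e}) Set.univ →
      {C ∈ tightCuts (Γ \ {e}) k | ¬ (e.1 ∈ C ↔ e.2 ∈ C)}.Finite) :
    {C ∈ tightCuts Γ (k + 1) | ¬ (e.1 ∈ C ↔ e.2 ∈ C)}.Finite := by
  have hconn : ∀ C ∈ {C ∈ tightCuts Γ (k + 1) | ¬ (e.1 ∈ C ↔ e.2 ∈ C)},
      IsConnectedIn (Γ \ {e}) C ∧ IsConnectedIn (Γ \ {e}) Cᶜ := by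
    rintro C ⟨⟨hC, hC', -⟩, heC⟩
    exact ⟨hC.sdiff_singleton (by tauto),
      hC'.sdiff_singleton (by simp only [Set.mem_compl_iff]; tauto)⟩
  by_cases hΓe : IsConnectedIn (Γ \ {e}) Set.univ
  · refine (ih hΓe).subset fun C hC => ?_
    obtain ⟨⟨-, -, hfin, hcard⟩, heC⟩ := id hC
    refine ⟨⟨(hconn C hC).1, (hconn C hC).2, ?_, ?_⟩, heC⟩ <;> rw [edgeBoundary_sdiff_singleton]
    · exact hfin.subset Set.sdiff_subset
    · have he' : e ∈ edgeBoundary Γ C := ⟨he, heC⟩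
      rw [Set.ncard_sdiff_singleton_of_mem he']
      lia
  · unfold IsConnectedIn at hΓe
    push Not at hΓe
    obtain ⟨A, hA, hAne', hAne⟩ := hΓe
    refine (Set.toFinite {A, Aᶜ}).subset fun C hC => ?_
    refine eq_or_eq_compl_of_edgeBoundary_eq_empty (Γ := Γ \ {e}) ?_ ?_ ?_
      (hconn C hC).1 (hconn C hC).2
    · exact Set.eq_empty_of_forall_notMem fun f hf => by simpa using hA f hf
    · simpa [Set.subset_def, Set.Nonempty] using hAne
    · simpa [Set.subset_def, Set.Nonempty] using hAne'

theorem finite_tightCuts (k : ℕ) (hΓ : IsConnectedIn Γ Set.univ) (a b : V) :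
    {C ∈ tightCuts Γ k | ¬ (a ∈ C ↔ b ∈ C)}.Finite := by
  induction k generalizing Γ a b with
  | zero =>
    convert Set.finite_empty
    refine Set.eq_empty_of_forall_notMem fun C ⟨⟨_, _, hfin, hcard⟩, _⟩ => ?_
    have hne : (edgeBoundary Γ C).Nonempty := by
      by_cases ha : a ∈ C
      · exact edgeBoundary_nonempty hΓ ⟨a, ha⟩ ⟨b, by simp_all⟩
      · exact edgeBoundary_nonempty hΓ ⟨b, by simp_all⟩ ⟨a, ha⟩
    exact (Set.ncard_pos hfin).2 hne |>.not_ge hcard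
  | succ k ih =>
    let A : Set V := {c | {C ∈ tightCuts Γ (k + 1) | ¬ (a ∈ C ↔ c ∈ C)}.Finite}
    have hA (c d : V) (hcd : {C ∈ tightCuts Γ (k + 1) | ¬ (c ∈ C ↔ d ∈ C)}.Finite) (hc : c ∈ A) :
        d ∈ A :=
      (hc.union hcd).subset fun C ⟨hC, hCad⟩ => by
        simp only [Set.mem_union, Set.mem_ofPred_eq, hC, true_and]
        tauto
    refine (hΓ A fun e he => ?_).resolve_right (fun h => h (Set.mem_univ a) (by simp [A]))
      (Set.mem_univ b)
    have hfin := finite_tightCuts_succ he.1 fun hΓe => ih hΓe e.1 e.2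
    refine absurd ⟨hA e.1 e.2 hfin, hA e.2 e.1 ?_⟩ he.2
    simpa only [iff_comm] using hfin

theorem edgeBoundary_submodular {C D : Set V} (hC : (edgeBoundary Γ C).Finite)
    (hD : (edgeBoundary Γ D).Finite) :
    (edgeBoundary Γ (C ∩ D)).Finite ∧ (edgeBoundary Γ (Cᶜ ∩ Dᶜ)).Finite ∧
      (edgeBoundary Γ (C ∩ D)).ncard + (edgeBoundary Γ (Cᶜ ∩ Dᶜ)).ncard ≤
        (edgeBoundary Γ C).ncard + (edgeBoundary Γ D).ncard := by
  have hunion : edgeBoundary Γ (C ∩ D) ∪ edgeBoundary Γ (Cᶜ ∩ Dᶜ) ⊆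
      edgeBoundary Γ C ∪ edgeBoundary Γ D := by
    intro e
    simp only [edgeBoundary, Set.mem_union, Set.mem_ofPred_eq, Set.mem_inter_iff, Set.mem_compl_iff]
    tauto
  have hinter : edgeBoundary Γ (C ∩ D) ∩ edgeBoundary Γ (Cᶜ ∩ Dᶜ) ⊆
      edgeBoundary Γ C ∩ edgeBoundary Γ D := by
    intro e
    simp only [edgeBoundary, Set.mem_ofPred_eq, Set.mem_inter_iff, Set.mem_compl_iff]
    tauto
  have hfin := (hC.union hD).subset hunion
  have hfin₁ := hfin.subset Set.subset_union_left
  have hfin₂ := hfin.subset Set.subset_union_right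
  refine ⟨hfin₁, hfin₂, ?_⟩
  rw [← Set.ncard_union_add_ncard_inter _ _ hfin₁ hfin₂,
    ← Set.ncard_union_add_ncard_inter _ _ hC hD]
  exact add_le_add (Set.ncard_le_ncard hunion (hC.union hD))
    (Set.ncard_le_ncard hinter (hC.inter_of_left _))

/-- The set `C` separates the two ultrafilters in `ω`, which play the role of a pair of ends of the
graph. -/
def Separates (ω : Ultrafilter V × Ultrafilter V) (C : Set V) : Prop := ¬ (C ∈ ω.1 ↔ C ∈ ω.2)

/-- `C` has the least number of boundary edges among the sets separating `ω`. -/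
structure IsMinCut (Γ : Set (V × V)) (ω : Ultrafilter V × Ultrafilter V) (C : Set V) : Prop where
  finite : (edgeBoundary Γ C).Finite
  separates : Separates ω C
  le : ∀ D, (edgeBoundary Γ D).Finite → Separates ω D →
    (edgeBoundary Γ C).ncard ≤ (edgeBoundary Γ D).ncard

/-- The minimal cuts for some pair in `Ω` which are not nested with `C`. -/
def crossingCuts (Γ : Set (V × V)) (Ω : Set (Ultrafilter V × Ultrafilter V)) (C : Set V) :
    Set (Set V) :=
  {X | (∃ ω ∈ Ω, IsMinCut Γ ω X) ∧ ¬ Nested X C}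

/-- A minimal cut for `ω` which is crossed by as few as possible of the minimal cuts for pairs
in `Ω`. -/
structure IsOptimalCut (Γ : Set (V × V)) (Ω : Set (Ultrafilter V × Ultrafilter V))
    (ω : Ultrafilter V × Ultrafilter V) (C : Set V) : Prop where
  isMinCut : IsMinCut Γ ω C
  le : ∀ D, IsMinCut Γ ω D → (crossingCuts Γ Ω C).ncard ≤ (crossingCuts Γ Ω D).ncard

variable {Ω : Set (Ultrafilter V × Ultrafilter V)} {ω ω' : Ultrafilter V × Ultrafilter V} {k : ℕ}
  {C D : Set V}

theorem inter_mem_ultrafilter_iff {p : Ultrafilter V} : C ∩ D ∈ p ↔ C ∈ p ∧ D ∈ p :=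
  Filter.inter_mem_iff

@[simp]
theorem separates_compl : Separates ω Cᶜ ↔ Separates ω C := by
  simp only [Separates, Ultrafilter.compl_mem_iff_notMem, not_iff_not]

theorem Separates.nonempty (hC : Separates ω C) : C.Nonempty := by
  rw [Set.nonempty_iff_ne_empty]
  rintro rfl
  exact hC (iff_of_false ω.1.empty_notMem ω.2.empty_notMem)

theorem IsMinCut.compl (hC : IsMinCut Γ ω C) : IsMinCut Γ ω Cᶜ :=
  ⟨by simpa [edgeBoundary_compl] using hC.finite, by simpa using hC.separates,
    by simpa [edgeBoundary_compl] using hC.le⟩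

theorem IsMinCut.of_ncard_le (hC : IsMinCut Γ ω C) (hfin : (edgeBoundary Γ D).Finite)
    (hD : Separates ω D) (hDC : (edgeBoundary Γ D).ncard ≤ (edgeBoundary Γ C).ncard) :
    IsMinCut Γ ω D :=
  ⟨hfin, hD, fun X hX hXs => hDC.trans (hC.le X hX hXs)⟩

theorem crossingCuts_compl (C : Set V) : crossingCuts Γ Ω Cᶜ = crossingCuts Γ Ω C := by
  simp only [crossingCuts, nested_compl_right]

theorem IsOptimalCut.compl (hC : IsOptimalCut Γ Ω ω C) : IsOptimalCut Γ Ω ω Cᶜ :=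
  ⟨hC.isMinCut.compl, by simpa [crossingCuts_compl] using hC.le⟩

theorem IsMinCut.isConnectedIn (hΓ : IsConnectedIn Γ Set.univ) (hC : IsMinCut Γ ω C) :
    IsConnectedIn Γ C := by
  intro A hA
  by_contra! h
  have hne₁ : (C ∩ A).Nonempty := by
    simpa [Set.not_subset, Set.inter_nonempty] using h.2
  have hne₂ : (C ∩ Aᶜ).Nonempty := by
    simpa [Set.not_subset, Set.inter_nonempty] using h.1
  have hCne : Cᶜ.Nonempty := hC.compl.separates.nonempty
  have hunion : edgeBoundary Γ (C ∩ A) ∪ edgeBoundary Γ (C ∩ Aᶜ) ⊆ edgeBoundary Γ C := by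
    rintro e (⟨he, h⟩ | ⟨he, h⟩) <;> refine ⟨he, ?_⟩ <;> have := fun h => hA e ⟨he, h⟩ <;>
      simp only [Set.mem_inter_iff, Set.mem_compl_iff] at h <;> tauto
  have hdisj : Disjoint (edgeBoundary Γ (C ∩ A)) (edgeBoundary Γ (C ∩ Aᶜ)) := by
    rw [Set.disjoint_left]
    rintro e ⟨he, h⟩ ⟨-, h'⟩
    have := fun h => hA e ⟨he, h⟩
    simp only [Set.mem_inter_iff, Set.mem_compl_iff] at h h'
    tauto
  have hfin₁ := hC.finite.subset (Set.subset_union_left.trans hunion)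
  have hfin₂ := hC.finite.subset (Set.subset_union_right.trans hunion)
  have hcard := Set.ncard_le_ncard hunion hC.finite
  rw [Set.ncard_union_eq hdisj hfin₁ hfin₂] at hcard
  have hpos₁ := (Set.ncard_pos hfin₁).2 <| edgeBoundary_nonempty hΓ hne₁ <|
    hCne.mono (Set.compl_subset_compl.2 Set.inter_subset_left)
  have hpos₂ := (Set.ncard_pos hfin₂).2 <| edgeBoundary_nonempty hΓ hne₂ <|
    hCne.mono (Set.compl_subset_compl.2 Set.inter_subset_left)
  have hsep : Separates ω (C ∩ A) ∨ Separates ω (C ∩ Aᶜ) := by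
    have := hC.separates
    simp only [Separates, inter_mem_ultrafilter_iff, Ultrafilter.compl_mem_iff_notMem] at *
    tauto
  rcases hsep with hsep | hsep
  · have := hC.le _ hfin₁ hsep
    lia
  · have := hC.le _ hfin₂ hsep
    lia

theorem IsMinCut.mem_tightCuts (hΓ : IsConnectedIn Γ Set.univ)
    (hk : ∃ D, (edgeBoundary Γ D).Finite ∧ Separates ω D ∧ (edgeBoundary Γ D).ncard ≤ k)
    (hC : IsMinCut Γ ω C) : C ∈ tightCuts Γ k := by
  obtain ⟨D, hfin, hsep, hcard⟩ := hk
  exact ⟨hC.isConnectedIn hΓ, hC.compl.isConnectedIn hΓ, hC.finite, (hC.le D hfin hsep).trans hcard⟩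

theorem exists_isOptimalCut
    (hω : ∃ C, (edgeBoundary Γ C).Finite ∧ Separates ω C) : ∃ C, IsOptimalCut Γ Ω ω C := by
  obtain ⟨C, ⟨hfin, hsep⟩, hle⟩ := exists_minimalFor_of_wellFoundedLT
    (fun C => (edgeBoundary Γ C).Finite ∧ Separates ω C) (fun C => (edgeBoundary Γ C).ncard) hω
  have hC : IsMinCut Γ ω C :=
    ⟨hfin, hsep, fun D hD hDs => (le_total _ _).elim id (hle ⟨hD, hDs⟩)⟩
  obtain ⟨D, hD, hle⟩ := exists_minimalFor_of_wellFoundedLT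
    (IsMinCut Γ ω) (fun C => (crossingCuts Γ Ω C).ncard) ⟨C, hC⟩
  exact ⟨D, hD, fun X hX => (le_total _ _).elim id (hle hX)⟩

section Nested

variable (hΓ : IsConnectedIn Γ Set.univ)
  (hΩ : ∀ ω ∈ Ω, ∃ C, (edgeBoundary Γ C).Finite ∧ Separates ω C ∧ (edgeBoundary Γ C).ncard ≤ k)
include hΓ hΩ

theorem finite_crossingCuts (hC : (edgeBoundary Γ C).Finite) : (crossingCuts Γ Ω C).Finite := by
  let B := Prod.fst '' edgeBoundary Γ C
  have hB : B.Finite := hC.image _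
  refine (hB.biUnion fun a _ => hB.biUnion fun b _ => finite_tightCuts k hΓ a b).subset ?_
  rintro X ⟨⟨ω, hω, hX⟩, hXC⟩
  have hmeet (Y : Set V) (hY : IsConnectedIn Γ Y) (hYC : ¬ Nested Y C) : ∃ a ∈ B, a ∈ Y := by
    by_contra! h
    rcases hY C fun e he heY => h e.1 ⟨e, he, rfl⟩ heY.1 with h | h
    · exact hYC (.inl h)
    · exact hYC (.inr (.inl h))
  obtain ⟨a, haB, haX⟩ := hmeet X (hX.isConnectedIn hΓ) hXC
  obtain ⟨b, hbB, hbX⟩ := hmeet Xᶜ (hX.compl.isConnectedIn hΓ) (nested_compl_left.not.2 hXC)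
  simp only [Set.mem_iUnion]
  exact ⟨a, haB, b, hbB, hX.mem_tightCuts hΓ (hΩ ω hω), fun h => hbX (h.1 haX)⟩

theorem ncard_crossingCuts_add_lt (hC : ∃ ω ∈ Ω, IsMinCut Γ ω C)
    (hD : (edgeBoundary Γ D).Finite) (hCD : ¬ Nested C D) :
    (crossingCuts Γ Ω (C ∩ D)).ncard + (crossingCuts Γ Ω (Cᶜ ∩ Dᶜ)).ncard <
      (crossingCuts Γ Ω C).ncard + (crossingCuts Γ Ω D).ncard := by
  have hfinC : (crossingCuts Γ Ω C).Finite := finite_crossingCuts hΓ hΩ hC.choose_spec.2.finite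
  have hfinD : (crossingCuts Γ Ω D).Finite := finite_crossingCuts hΓ hΩ hD
  have hunion : crossingCuts Γ Ω (C ∩ D) ∪ crossingCuts Γ Ω (Cᶜ ∩ Dᶜ) ⊆
      (crossingCuts Γ Ω C ∪ crossingCuts Γ Ω D) \ {C} := by
    rintro X (⟨hX, h⟩ | ⟨hX, h⟩) <;> refine ⟨by_contra fun hcon => ?_, ?_⟩
    · simp only [crossingCuts, Set.mem_union, Set.mem_ofPred_eq, hX, true_and, not_or,
        not_not] at hcon
      exact h (hcon.1.inter hcon.2 hCD)
    · rintro rfl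
      exact h (.inr (.inr (.inr (Set.compl_subset_compl.2 Set.inter_subset_left))))
    · simp only [crossingCuts, Set.mem_union, Set.mem_ofPred_eq, hX, true_and, not_or,
        not_not] at hcon
      exact h ((nested_compl_right.2 hcon.1).inter (nested_compl_right.2 hcon.2)
        (by rwa [nested_compl_left, nested_compl_right]))
    · rintro rfl
      exact h (.inr (.inl (Set.subset_compl_comm.1 Set.inter_subset_left)))
  have hinter : crossingCuts Γ Ω (C ∩ D) ∩ crossingCuts Γ Ω (Cᶜ ∩ Dᶜ) ⊆
      crossingCuts Γ Ω C ∩ crossingCuts Γ Ω D := by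
    rintro X ⟨⟨hX, h⟩, ⟨-, h'⟩⟩
    refine ⟨⟨hX, fun hXC => ?_⟩, ⟨hX, fun hXD => ?_⟩⟩
    · exact hXC.inter_or_inter_compl.elim h h'
    · rw [Set.inter_comm] at h h'
      exact hXD.inter_or_inter_compl.elim h h'
  have hfin := (hfinC.union hfinD).subset (hunion.trans Set.sdiff_subset)
  rw [← Set.ncard_union_add_ncard_inter _ _ (hfin.subset Set.subset_union_left)
    (hfin.subset Set.subset_union_right), ← Set.ncard_union_add_ncard_inter _ _ hfinC hfinD]
  have hmem : C ∈ crossingCuts Γ Ω C ∪ crossingCuts Γ Ω D := .inr ⟨hC, hCD⟩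
  have := Set.ncard_le_ncard hunion ((hfinC.union hfinD).subset Set.sdiff_subset)
  have := Set.ncard_le_ncard hinter (hfinC.inter_of_left _)
  have := Set.ncard_sdiff_singleton_lt_of_mem hmem (hfinC.union hfinD)
  lia

theorem IsOptimalCut.nested_of_separates_corners (hω : ω ∈ Ω) (hC : IsOptimalCut Γ Ω ω C)
    (hD : IsOptimalCut Γ Ω ω' D) (h : Separates ω (C ∩ D)) (h' : Separates ω' (Cᶜ ∩ Dᶜ)) :
    Nested C D := by
  by_contra hCD
  obtain ⟨hfin, hfin', hsub⟩ := edgeBoundary_submodular hC.isMinCut.finite hD.isMinCut.finite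
  have hle := hC.isMinCut.le _ hfin h
  have hle' := hD.isMinCut.le _ hfin' h'
  have hlt := ncard_crossingCuts_add_lt hΓ hΩ ⟨ω, hω, hC.isMinCut⟩ hD.isMinCut.finite hCD
  have hcr := hC.le _ (hC.isMinCut.of_ncard_le hfin h (by lia))
  have hcr' := hD.le _ (hD.isMinCut.of_ncard_le hfin' h' (by lia))
  lia

theorem IsOptimalCut.nested_of_separates_both (hω : ω ∈ Ω) (hC : IsOptimalCut Γ Ω ω C)
    (hD : IsOptimalCut Γ Ω ω' D) (h : Separates ω (C ∩ D)) (h' : Separates ω (Cᶜ ∩ Dᶜ))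
    (hωD : Separates ω D) (hω'C : Separates ω' C) : Nested C D := by
  by_contra hCD
  obtain ⟨hfin, hfin', hsub⟩ := edgeBoundary_submodular hC.isMinCut.finite hD.isMinCut.finite
  have hle := hC.isMinCut.le _ hfin h
  have hle' := hC.isMinCut.le _ hfin' h'
  have hleD := hC.isMinCut.le _ hD.isMinCut.finite hωD
  have hleC := hD.isMinCut.le _ hC.isMinCut.finite hω'C
  have hlt := ncard_crossingCuts_add_lt hΓ hΩ ⟨ω, hω, hC.isMinCut⟩ hD.isMinCut.finite hCD
  have hcr := hC.le _ (hC.isMinCut.of_ncard_le hfin h (by lia))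
  have hcr' := hC.le _ (hC.isMinCut.of_ncard_le hfin' h' (by lia))
  have hcrC := hD.le _ (hD.isMinCut.of_ncard_le hC.isMinCut.finite hω'C hleD)
  lia

/-- Up to complementing `C` and `D`, either `ω` and `ω'` are separated by opposite corners, or both
`C` and `D` separate both pairs and `ω` is separated by two opposite corners. -/
theorem IsOptimalCut.nested (hω : ω ∈ Ω) (hC : IsOptimalCut Γ Ω ω C)
    (hD : IsOptimalCut Γ Ω ω' D) : Nested C D := by
  have hcorners : (∃ C' ∈ ({C, Cᶜ} : Set (Set V)), ∃ D' ∈ ({D, Dᶜ} : Set (Set V)),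
      Separates ω (C' ∩ D') ∧ Separates ω' (C'ᶜ ∩ D'ᶜ)) ∨
      ((Separates ω D ∧ Separates ω' C) ∧ ∃ D' ∈ ({D, Dᶜ} : Set (Set V)),
        Separates ω (C ∩ D') ∧ Separates ω (Cᶜ ∩ D'ᶜ)) := by
    have hωC := hC.isMinCut.separates
    have hω'D := hD.isMinCut.separates
    clear hC hD hΓ hΩ hω
    simp only [Separates, Set.mem_insert_iff, Set.mem_singleton_iff, exists_eq_or_imp,
      exists_eq_left, inter_mem_ultrafilter_iff,
      Ultrafilter.compl_mem_iff_notMem] at *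
    grind
  rcases hcorners with ⟨C', hC', D', hD', h, h'⟩ | ⟨⟨hωD, hω'C⟩, D', hD', h, h'⟩
  · rcases hC' with rfl | rfl <;> rcases hD' with rfl | rfl
    · exact hC.nested_of_separates_corners hΓ hΩ hω hD h h'
    · exact nested_compl_right.1 (hC.nested_of_separates_corners hΓ hΩ hω hD.compl h h')
    · exact nested_compl_left.1 (hC.compl.nested_of_separates_corners hΓ hΩ hω hD h h')
    · exact nested_compl_left.1 <| nested_compl_right.1 <|
        hC.compl.nested_of_separates_corners hΓ hΩ hω hD.compl h h'
  · rcases hD' with rfl | rfl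
    · exact hC.nested_of_separates_both hΓ hΩ hω hD h h' hωD hω'C
    · exact nested_compl_right.1 <|
        hC.nested_of_separates_both hΓ hΩ hω hD.compl h h' (separates_compl.2 hωD) hω'C

end Nested

end Cuts

/-! ### Almost invariant sets in virtually free groups -/

section AlmostInvariant

open scoped Pointwise

variable {G : Type*} [Group G]

/-- A set `C` which is invariant under each right translation up to a finite set: a set of vertices
with finite edge boundary in the Cayley graphs of `G`, if `G` is finitely generated. -/
def IsAlmostInvariant (C : Set G) : Prop := ∀ c : G, {x | ¬ (x ∈ C ↔ x * c ∈ C)}.Finite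

theorem isAlmostInvariant_of_closure_eq_top {C S : Set G} (hS : Subgroup.closure S = ⊤)
    (hC : ∀ s ∈ S, {x | ¬ (x ∈ C ↔ x * s ∈ C)}.Finite) : IsAlmostInvariant C := by
  intro c
  have hc : c ∈ Subgroup.closure S := hS ▸ Subgroup.mem_top c
  induction hc using Subgroup.closure_induction with
  | mem s hs => exact hC s hs
  | one => simp
  | mul c d _ _ hc hd =>
    refine (hc.union (hd.preimage (mul_left_injective c).injOn)).subset fun x hx => ?_
    simp only [Set.mem_union, Set.mem_preimage, Set.mem_ofPred_eq, ← mul_assoc] at hx ⊢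
    tauto
  | inv c _ hc =>
    refine (hc.preimage (mul_left_injective c⁻¹).injOn).subset fun x hx => ?_
    simp only [Set.mem_preimage, Set.mem_ofPred_eq, inv_mul_cancel_right] at hx ⊢
    tauto

theorem IsAlmostInvariant.mul_right_mem_iff {C : Set G} (hC : IsAlmostInvariant C)
    {p : Ultrafilter G} (hp : (p : Filter G) ≤ Filter.cofinite) (c : G) :
    {x | x * c ∈ C} ∈ p ↔ C ∈ p := by
  refine Filter.congr_sets (Filter.mem_of_superset (hp (hC c).compl_mem_cofinite) fun x hx => ?_)
  exact (not_not.1 hx).symm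

theorem IsAlmostInvariant.exists_preimage_subtype_eq {H : Subgroup G} [H.FiniteIndex] {C : Set H}
    (hC : IsAlmostInvariant C) : ∃ D : Set G, IsAlmostInvariant D ∧ (↑) ⁻¹' D = C := by
  obtain ⟨R, hR, h1⟩ := H.exists_isComplement_right 1
  have := hR.finite_right.to_subtype
  refine ⟨{g | (hR.equiv g).1 ∈ C}, fun c => ?_, ?_⟩
  · refine (Set.finite_iUnion fun r : R => (hC (hR.equiv (r * c)).1).image
      fun h : H => (h * r : G)).subset fun x hx => ?_
    refine Set.mem_iUnion.2 ⟨(hR.equiv x).2, (hR.equiv x).1, ?_, hR.equiv_fst_mul_equiv_snd x⟩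
    have hxc : x * c = (hR.equiv x).1 * ((hR.equiv x).2 * c) := by
      rw [← mul_assoc, hR.equiv_fst_mul_equiv_snd]
    simpa only [Set.mem_ofPred_eq, hxc, hR.equiv_mul_left] using hx
  · ext h
    have hh : (hR.equiv h).1 = h := by
      rw [← mul_one (h : G), hR.equiv_mul_left, hR.equiv_one (one_mem H) h1]
      exact mul_one h
    simp only [Set.mem_preimage, Set.mem_ofPred_eq, hh]

/-- The limits of `y ^ n` and of `y ^ (-n)`, two ends of `G` if `y` has infinite order. -/
noncomputable def axisEnds (y : G) : Ultrafilter G × Ultrafilter G :=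
  ((Filter.hyperfilter ℕ).map (y ^ ·), (Filter.hyperfilter ℕ).map (y⁻¹ ^ ·))

theorem map_pow_hyperfilter_le_cofinite {y : G} (hy : ¬ IsOfFinOrder y) :
    ((Filter.hyperfilter ℕ).map (y ^ ·) : Filter G) ≤ Filter.cofinite :=
  ((injective_pow_iff_not_isOfFinOrder.2 hy).tendsto_cofinite).mono_left
    Filter.hyperfilter_le_cofinite

theorem axisEnds_le_cofinite {y : G} (hy : ¬ IsOfFinOrder y) :
    ((axisEnds y).1 : Filter G) ≤ Filter.cofinite ∧
      ((axisEnds y).2 : Filter G) ≤ Filter.cofinite :=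
  ⟨map_pow_hyperfilter_le_cofinite hy,
    map_pow_hyperfilter_le_cofinite (isOfFinOrder_inv_iff.not.2 hy)⟩

theorem separates_axisEnds_map {H : Type*} [Group H] (φ : H →* G) {y : H} {C : Set G} :
    Separates (axisEnds (φ y)) C ↔ Separates (axisEnds y) (φ ⁻¹' C) := by
  simp only [Separates, axisEnds, Ultrafilter.mem_map, ← map_inv, ← map_pow]
  rfl

end AlmostInvariant

section Cylinder

open scoped Pointwise

variable {β : Type*} [DecidableEq β]

/-- The set of elements of a free group whose reduced word starts with the letter `a`. -/
def cylinder (a : β × Bool) : Set (FreeGroup β) := {f | f.toWord.head? = some a}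

theorem head?_toWord_mul_of {f : FreeGroup β} (hf : 1 < f.toWord.length) (b : β) :
    (f * FreeGroup.of b).toWord.head? = f.toWord.head? := by
  have hinv (g : FreeGroup β) :
      g.toWord.head? = (g⁻¹).toWord.getLast?.map fun x => (x.1, !x.2) := by
    simp [FreeGroup.toWord_inv, FreeGroup.invRev, Function.comp_def]
  have hcons : ((f * FreeGroup.of b)⁻¹).toWord =
      FreeGroup.reduce ((b, false) :: (f⁻¹).toWord) := by
    rw [mul_inv_rev, FreeGroup.toWord_mul, FreeGroup.toWord_inv, FreeGroup.toWord_of]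
    rfl
  have hlen : 1 < (f⁻¹).toWord.length := by simpa [FreeGroup.toWord_inv] using hf
  rw [hinv, hinv f, hcons, FreeGroup.reduce.cons, FreeGroup.reduce_toWord]
  rcases hL : (f⁻¹).toWord with _ | ⟨x, _ | ⟨y, l⟩⟩
  · simp [hL] at hlen
  · simp [hL] at hlen
  · dsimp only
    split_ifs <;> simp [List.getLast?_cons_cons]

theorem isAlmostInvariant_cylinder [Finite β] (a : β × Bool) : IsAlmostInvariant (cylinder a) := by
  refine isAlmostInvariant_of_closure_eq_top (FreeGroup.closure_range_of β) ?_
  rintro _ ⟨b, rfl⟩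
  refine ((List.finite_length_le (β × Bool) 1).preimage
    FreeGroup.toWord_injective.injOn).subset fun f hf => ?_
  by_contra hlen
  exact hf (by simp only [cylinder, Set.mem_ofPred_eq, head?_toWord_mul_of (not_le.1 hlen)])

theorem toWord_pow_of_isCyclicallyReduced {w : FreeGroup β}
    (hw : FreeGroup.IsCyclicallyReduced w.toWord) (n : ℕ) :
    (w ^ n).toWord = (List.replicate n w.toWord).flatten := by
  rw [FreeGroup.toWord_pow, (hw.flatten_replicate n).isReduced.reduce_eq]

theorem exists_pow_mem_cylinder {w : FreeGroup β} (hw : FreeGroup.IsCyclicallyReduced w.toWord)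
    (hw1 : w ≠ 1) : ∃ a, ∀ n : ℕ, n ≠ 0 → w ^ n ∈ cylinder a ∧ w⁻¹ ^ n ∉ cylinder a := by
  obtain ⟨x, l, hxl⟩ := List.exists_cons_of_ne_nil (FreeGroup.toWord_eq_nil_iff.not.2 hw1)
  refine ⟨x, fun n hn => ⟨?_, fun h => ?_⟩⟩
  · simp [cylinder, toWord_pow_of_isCyclicallyReduced hw, List.head?_flatten_replicate hn, hxl]
  · simp only [cylinder, Set.mem_ofPred_eq, inv_pow, FreeGroup.toWord_inv, FreeGroup.invRev,
      toWord_pow_of_isCyclicallyReduced hw, List.head?_reverse, List.getLast?_map,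
      List.getLast?_flatten_replicate hn, Option.map_eq_some_iff] at h
    obtain ⟨y, hy, rfl⟩ := h
    simpa using hw.2 y hy (y.1, !y.2) (by simp [hxl]) rfl

theorem exists_conj_isCyclicallyReduced {f : FreeGroup β} (hf : f ≠ 1) :
    ∃ u w : FreeGroup β, f = u * w * u⁻¹ ∧ w ≠ 1 ∧ FreeGroup.IsCyclicallyReduced w.toWord := by
  have hconj := FreeGroup.reduceCyclically.conj_conjugator_reduceCyclically f.toWord
  have hred := FreeGroup.reduceCyclically.isCyclicallyReduced (FreeGroup.isReduced_toWord (x := f))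
  set u := FreeGroup.reduceCyclically.conjugator f.toWord
  set w := FreeGroup.reduceCyclically f.toWord
  have hfuw : f = FreeGroup.mk u * FreeGroup.mk w * (FreeGroup.mk u)⁻¹ := by
    rw [FreeGroup.inv_mk, FreeGroup.mul_mk, FreeGroup.mul_mk, hconj, FreeGroup.mk_toWord]
  refine ⟨_, _, hfuw, fun hw => hf ?_, ?_⟩
  · rw [hfuw, hw, mul_one, mul_inv_cancel]
  · rwa [FreeGroup.toWord_mk, hred.isReduced.reduce_eq]

omit [DecidableEq β] in
theorem not_isOfFinOrder_freeGroup {f : FreeGroup β} (hf : f ≠ 1) : ¬ IsOfFinOrder f := by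
  rwa [isOfFinOrder_iff_eq_one]

/-- Up to conjugation, `f` is cyclically reduced, and then the positive powers of `f` start with
the same letter, which differs from the first letter of the negative powers. -/
theorem exists_separates_smul_cylinder [Finite β] {f : FreeGroup β} (hf : f ≠ 1) :
    ∃ (u : FreeGroup β) (a : β × Bool), Separates (axisEnds f) (u • cylinder a) := by
  obtain ⟨u, w, rfl, hw1, hw⟩ := exists_conj_isCyclicallyReduced hf
  obtain ⟨a, ha⟩ := exists_pow_mem_cylinder hw hw1
  refine ⟨u, a, ?_⟩
  have hconj (v : FreeGroup β) (hv : v ≠ 1) :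
      u • cylinder a ∈ (Filter.hyperfilter ℕ).map ((u * v * u⁻¹) ^ ·) ↔
        cylinder a ∈ (Filter.hyperfilter ℕ).map (v ^ ·) := by
    rw [← (isAlmostInvariant_cylinder a).mul_right_mem_iff
      (map_pow_hyperfilter_le_cofinite (not_isOfFinOrder_freeGroup hv)) u⁻¹]
    simp only [Ultrafilter.mem_map, Set.preimage, conj_pow, Set.mem_smul_set_iff_inv_smul_mem,
      smul_eq_mul, Set.mem_ofPred_eq]
    simp only [mul_assoc, inv_mul_cancel_left]
  have hne : ∀ᶠ n in (Filter.hyperfilter ℕ : Filter ℕ), n ≠ 0 :=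
    Filter.hyperfilter_le_cofinite (Set.finite_singleton 0).compl_mem_cofinite
  simp only [Separates, axisEnds, conj_inv, hconj w hw1, hconj w⁻¹ (inv_ne_one.2 hw1)]
  have hpos : cylinder a ∈ (Filter.hyperfilter ℕ).map (w ^ ·) := hne.mono fun n hn => (ha n hn).1
  have hneg : (cylinder a)ᶜ ∈ (Filter.hyperfilter ℕ).map (w⁻¹ ^ ·) :=
    hne.mono fun n hn => (ha n hn).2
  exact fun h => Ultrafilter.compl_mem_iff_notMem.1 hneg (h.1 hpos)

end Cylinder

section VirtuallyFree

open scoped Pointwise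

variable {G : Type*} [Group G]

theorem VirtuallyFree.exists_finite_isAlmostInvariant (hvf : VirtuallyFree G)
    (hfg : Group.FG G) : ∃ B : Set (Set G), B.Finite ∧ (∀ C ∈ B, IsAlmostInvariant C) ∧
      ∀ y : G, ¬ IsOfFinOrder y → ∃ n : ℕ, n ≠ 0 ∧ ∃ g : G, ∃ C ∈ B,
        Separates (axisEnds (y ^ n)) (g • C) := by
  obtain ⟨m, H, _, ⟨e⟩⟩ := hvf.exists_freeGroup_mulEquiv hfg
  have hcyl (a : Fin m × Bool) : IsAlmostInvariant (e.symm ⁻¹' cylinder a) := fun c => by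
    simpa [Set.preimage] using
      (isAlmostInvariant_cylinder a (e.symm c)).preimage e.symm.injective.injOn
  choose D hD hDcyl using fun a => (hcyl a).exists_preimage_subtype_eq
  refine ⟨Set.range D, Set.finite_range D, Set.forall_mem_range.2 hD, fun y hy => ?_⟩
  obtain ⟨n, hn, -, hyn⟩ := H.exists_pow_mem_of_index_ne_zero Subgroup.FiniteIndex.index_ne_zero y
  have hf : e.symm ⟨y ^ n, hyn⟩ ≠ 1 := by
    rw [Ne, EmbeddingLike.map_eq_one_iff, Subgroup.mk_eq_one]
    exact fun h => hy (isOfFinOrder_iff_pow_eq_one.2 ⟨n, hn, h⟩)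
  obtain ⟨u, a, hua⟩ := exists_separates_smul_cylinder hf
  refine ⟨n, hn.ne', (e u : G), D a, ⟨a, rfl⟩, ?_⟩
  have hφ : y ^ n = (H.subtype.comp e.toMonoidHom) (e.symm ⟨y ^ n, hyn⟩) := by simp
  rw [hφ, separates_axisEnds_map]
  convert hua using 1
  ext f
  have hmem : ((e (u⁻¹ * f) : H) : G) ∈ D a ↔ u⁻¹ * f ∈ cylinder a := by
    simpa using Set.ext_iff.1 (hDcyl a) (e (u⁻¹ * f))
  simpa [Set.mem_smul_set_iff_inv_smul_mem] using hmem

theorem VirtuallyFree.exists_not_isOfFinOrder (hvf : VirtuallyFree G) {K : Subgroup G}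
    (hK : (K : Set G).Infinite) : ∃ y ∈ K, ¬ IsOfFinOrder y := by
  obtain ⟨H, hH, ⟨_⟩⟩ := hvf
  have hinf : Infinite K := hK.to_subtype
  obtain ⟨a, b, hab, h⟩ := Finite.exists_ne_map_eq_of_infinite fun x : K => (x : G ⧸ H)
  refine ⟨_, (a⁻¹ * b).2, fun hfin => hab ?_⟩
  let e := IsFreeGroup.toFreeGroup H
  have hmem : ((a⁻¹ * b : K) : G) ∈ H := by simpa using QuotientGroup.eq.1 h
  have hone : e ⟨_, hmem⟩ = 1 := by
    rw [← isOfFinOrder_iff_eq_one]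
    exact e.toMonoidHom.isOfFinOrder (Submonoid.isOfFinOrder_coe.1 hfin)
  rw [EmbeddingLike.map_eq_one_iff, Subgroup.mk_eq_one, OneMemClass.coe_eq_one,
    inv_mul_eq_one] at hone
  exact hone

end VirtuallyFree

/-! ### An invariant tree set -/

section Translate

open scoped Pointwise

variable {G V : Type*} [Group G] [MulAction G V] {Γ : Set (V × V)}
  {Ω : Set (Ultrafilter V × Ultrafilter V)} {ω : Ultrafilter V × Ultrafilter V} {C : Set V}

/-- The action of a permutation of the vertices on pairs of ends. -/
def translateEnds (g : G) (ω : Ultrafilter V × Ultrafilter V) : Ultrafilter V × Ultrafilter V :=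
  (ω.1.map (g • ·), ω.2.map (g • ·))

theorem separates_translateEnds {g : G} :
    Separates (translateEnds g ω) C ↔ Separates ω (g⁻¹ • C) := by
  simp only [Separates, translateEnds, Ultrafilter.mem_map, Set.preimage_smul]

theorem nested_smul {g : G} {C D : Set V} : Nested (g • C) (g • D) ↔ Nested C D := by
  simp only [Nested, ← Set.smul_set_compl, Set.smul_set_subset_smul_set_iff]

theorem edgeBoundary_smul {g : G} (hg : g • Γ = Γ) (C : Set V) :
    edgeBoundary Γ (g • C) = g • edgeBoundary Γ C := by
  ext e
  have he : e ∈ Γ ↔ g⁻¹ • e ∈ Γ := by rw [← Set.mem_smul_set_iff_inv_smul_mem, hg]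
  simp only [edgeBoundary, Set.mem_smul_set_iff_inv_smul_mem, Set.mem_ofPred_eq, he]
  rfl

theorem translateEnds_inv_translateEnds (g : G) : translateEnds g⁻¹ (translateEnds g ω) = ω := by
  simp [translateEnds, Ultrafilter.map_map, Function.comp_def]

variable (hΓ : ∀ g : G, g • Γ = Γ)
include hΓ

theorem IsMinCut.smul (g : G) (hC : IsMinCut Γ ω C) : IsMinCut Γ (translateEnds g ω) (g • C) := by
  refine ⟨edgeBoundary_smul (hΓ g) C ▸ hC.finite.smul_set, ?_, fun D hD hsep => ?_⟩
  · rw [separates_translateEnds, inv_smul_smul]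
    exact hC.separates
  · rw [edgeBoundary_smul (hΓ g), Set.ncard_smul_set, ← Set.ncard_smul_set g⁻¹ (edgeBoundary Γ D),
      ← edgeBoundary_smul (hΓ _)]
    exact hC.le _ (edgeBoundary_smul (hΓ g⁻¹) D ▸ hD.smul_set) (separates_translateEnds.1 hsep)

variable (hΩ : ∀ g : G, ∀ ω ∈ Ω, translateEnds g ω ∈ Ω)
include hΩ

theorem smul_mem_crossingCuts (g : G) {X : Set V} (hX : X ∈ crossingCuts Γ Ω C) :
    g • X ∈ crossingCuts Γ Ω (g • C) := by
  obtain ⟨⟨ω, hω, hX⟩, hXC⟩ := hX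
  exact ⟨⟨_, hΩ g ω hω, hX.smul hΓ g⟩, nested_smul.not.2 hXC⟩

theorem crossingCuts_smul (g : G) (C : Set V) :
    crossingCuts Γ Ω (g • C) = g • crossingCuts Γ Ω C := by
  ext X
  rw [Set.mem_smul_set_iff_inv_smul_mem]
  refine ⟨fun hX => ?_, fun hX => ?_⟩
  · simpa only [inv_smul_smul] using smul_mem_crossingCuts hΓ hΩ g⁻¹ hX
  · simpa only [smul_inv_smul] using smul_mem_crossingCuts hΓ hΩ g hX

theorem IsOptimalCut.smul (g : G) (hC : IsOptimalCut Γ Ω ω C) :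
    IsOptimalCut Γ Ω (translateEnds g ω) (g • C) := by
  refine ⟨hC.isMinCut.smul hΓ g, fun D hD => ?_⟩
  have hD' := hD.smul hΓ g⁻¹
  rw [translateEnds_inv_translateEnds] at hD'
  have hle := hC.le _ hD'
  rwa [crossingCuts_smul hΓ hΩ, Set.ncard_smul_set] at hle ⊢

end Translate

section TreeSet

open scoped Pointwise

variable {G : Type*} [Group G]

/-- The edges of the Cayley graph of `G` with respect to `S`. -/
def cayleyGraph (S : Set G) : Set (G × G) := {e | ∃ s ∈ S, e.2 = e.1 * s}

variable {S C : Set G}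

theorem isConnectedIn_cayleyGraph (hS : Subgroup.closure S = ⊤) :
    IsConnectedIn (cayleyGraph S) Set.univ := by
  intro A hA
  have hAmul (c x : G) : x ∈ A ↔ x * c ∈ A := by
    have hc : c ∈ Subgroup.closure S := hS ▸ Subgroup.mem_top c
    induction hc using Subgroup.closure_induction generalizing x with
    | mem s hs => exact by_contra fun h => hA (x, x * s) ⟨⟨s, hs, rfl⟩, h⟩ ⟨trivial, trivial⟩
    | one => rw [mul_one]
    | mul c d _ _ hc hd => exact mul_assoc x c d ▸ (hc x).trans (hd (x * c))
    | inv c _ hc => simpa only [inv_mul_cancel_right] using (hc (x * c⁻¹)).symm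
  by_cases h1 : 1 ∈ A
  · exact .inl fun x _ => by simpa using (hAmul x 1).1 h1
  · exact .inr fun x _ hx => h1 (by simpa using (hAmul x⁻¹ x).1 hx)

theorem smul_cayleyGraph (g : G) : g • cayleyGraph S = cayleyGraph S := by
  ext e
  simp [Set.mem_smul_set_iff_inv_smul_mem, cayleyGraph, mul_assoc]

theorem finite_edgeBoundary_cayleyGraph_iff (hS : Subgroup.closure S = ⊤) (hSfin : S.Finite) :
    (edgeBoundary (cayleyGraph S) C).Finite ↔ IsAlmostInvariant C := by
  refine ⟨fun h => isAlmostInvariant_of_closure_eq_top hS fun s hs => ?_, fun h => ?_⟩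
  · exact (h.image Prod.fst).subset fun x hx => ⟨(x, x * s), ⟨⟨s, hs, rfl⟩, hx⟩, rfl⟩
  · refine (hSfin.biUnion fun s _ => (h s).image fun x => (x, x * s)).subset ?_
    rintro ⟨x, z⟩ ⟨⟨s, hs, hz⟩, hx⟩
    obtain rfl : z = x * s := hz
    exact Set.mem_biUnion hs ⟨x, hx, rfl⟩

/-- A family of pairwise nested nonempty sets which is closed under left translation and
complementation and in which only finitely many sets separate two given points. Such a family is
the set of oriented edges of a tree on which `G` acts, ordered by inclusion of half-trees. -/
structure IsTreeSet (E : Set (Set G)) : Prop where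
  smul_mem : ∀ (g : G), ∀ C ∈ E, g • C ∈ E
  compl_mem : ∀ C ∈ E, Cᶜ ∈ E
  nonempty : ∀ C ∈ E, C.Nonempty
  nested : ∀ C ∈ E, ∀ D ∈ E, Nested C D
  finite : ∀ x y : G, {C ∈ E | x ∈ C ∧ y ∉ C}.Finite

theorem isTreeSet_isOptimalCut {Ω : Set (Ultrafilter G × Ultrafilter G)} {k : ℕ}
    (hS : Subgroup.closure S = ⊤) (hΩ : ∀ g : G, ∀ ω ∈ Ω, translateEnds g ω ∈ Ω)
    (hk : ∀ ω ∈ Ω, ∃ C, (edgeBoundary (cayleyGraph S) C).Finite ∧ Separates ω C ∧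
      (edgeBoundary (cayleyGraph S) C).ncard ≤ k) :
    IsTreeSet {C | ∃ ω ∈ Ω, IsOptimalCut (cayleyGraph S) Ω ω C} where
  smul_mem := fun g _ ⟨ω, hω, hC⟩ => ⟨_, hΩ g ω hω, hC.smul smul_cayleyGraph hΩ g⟩
  compl_mem := fun _ ⟨ω, hω, hC⟩ => ⟨ω, hω, hC.compl⟩
  nonempty := fun _ ⟨_, _, hC⟩ => hC.isMinCut.separates.nonempty
  nested := fun _ ⟨_, hω, hC⟩ _ ⟨_, _, hD⟩ =>
    hC.nested (isConnectedIn_cayleyGraph hS) hk hω hD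
  finite := fun x y =>
    (finite_tightCuts k (isConnectedIn_cayleyGraph hS) x y).subset
      fun _ ⟨⟨ω, hω, hC⟩, hx, hy⟩ =>
        ⟨hC.isMinCut.mem_tightCuts (isConnectedIn_cayleyGraph hS) (hk ω hω), fun h => hy (h.1 hx)⟩

theorem smul_mem_axisEnds_iff (hC : IsAlmostInvariant C) {y : G} (hy : ¬ IsOfFinOrder y) :
    (y • C ∈ (axisEnds y).1 ↔ C ∈ (axisEnds y).1) ∧
      (y • C ∈ (axisEnds y).2 ↔ C ∈ (axisEnds y).2) := by
  obtain ⟨h₁, h₂⟩ := axisEnds_le_cofinite hy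
  rw [← hC.mul_right_mem_iff h₁ y⁻¹, ← hC.mul_right_mem_iff h₂ y⁻¹]
  have hcomm (z : G) (hz : Commute z y⁻¹) : z ∈ y • C ↔ z * y⁻¹ ∈ C := by
    rw [Set.mem_smul_set_iff_inv_smul_mem, smul_eq_mul, hz.eq]
  exact ⟨Filter.eventually_congr <| Filter.eventually_map.2 <| .of_forall fun n =>
      hcomm _ ((Commute.refl y).inv_right.pow_left n),
    Filter.eventually_congr <| Filter.eventually_map.2 <| .of_forall fun n =>
      hcomm _ ((Commute.refl y⁻¹).pow_left n)⟩

theorem pow_mem_iff_of_smul_eq {y : G} (hyC : y • C = C) (n : ℕ) : y ^ n ∈ C ↔ 1 ∈ C := by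
  induction n with
  | zero => rw [pow_zero]
  | succ n ih => rw [← ih, ← hyC, pow_succ', ← smul_eq_mul, Set.smul_mem_smul_set_iff, hyC]

theorem not_separates_axisEnds_of_smul_eq {y : G} (hyC : y • C = C) :
    ¬ Separates (axisEnds y) C := by
  have hyC' : y⁻¹ • C = C := by rw [inv_smul_eq_iff, hyC]
  simp only [Separates, axisEnds, Ultrafilter.mem_map, Set.preimage, pow_mem_iff_of_smul_eq hyC,
    pow_mem_iff_of_smul_eq hyC', not_not]

theorem smul_ssubset_or_of_separates {y : G} (hy : ¬ IsOfFinOrder y) (hC : IsAlmostInvariant C)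
    (hsep : Separates (axisEnds y) C) (hnested : Nested (y • C) C) : y • C ⊂ C ∨ y⁻¹ • C ⊂ C := by
  have hne : y • C ≠ C := fun h => not_separates_axisEnds_of_smul_eq h hsep
  obtain ⟨h₁, h₂⟩ := smul_mem_axisEnds_iff hC hy
  obtain ⟨p, q, hp, hq, hCp, hCq⟩ : ∃ p q : Ultrafilter G,
      (y • C ∈ p ↔ C ∈ p) ∧ (y • C ∈ q ↔ C ∈ q) ∧ C ∈ p ∧ C ∉ q := by
    by_cases h : C ∈ (axisEnds y).1
    · exact ⟨_, _, h₁, h₂, h, fun h' => hsep (iff_of_true h h')⟩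
    · exact ⟨_, _, h₂, h₁, by_contra fun h' => hsep (iff_of_false h h'), h⟩
  rcases hnested with h | h | h | h
  · exact .inl (h.ssubset_of_ne hne)
  · exact absurd hCp (Ultrafilter.compl_mem_iff_notMem.1 (Filter.mem_of_superset (hp.2 hCp) h))
  · have := Ultrafilter.compl_mem_iff_notMem.2 (hq.not.2 hCq)
    exact absurd (Filter.mem_of_superset this h) hCq
  · refine .inr ((Set.subset_smul_set_iff.1 (Set.compl_subset_compl.1 h)).ssubset_of_ne
      fun h' => hne ?_)
    rw [← h', smul_inv_smul, h']

theorem smul_set_ssubset_smul_set_iff {g : G} {A B : Set G} : g • A ⊂ g • B ↔ A ⊂ B := by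
  simp only [ssubset_iff_subset_not_subset, Set.smul_set_subset_smul_set_iff]

/-- The tree set consists of the optimal cuts for all those pairs of ends of axes which can be
separated by at most `k` edges. -/
theorem exists_isTreeSet_of_separates (hS : Subgroup.closure S = ⊤) (hSfin : S.Finite) (k : ℕ) :
    ∃ E : Set (Set G), IsTreeSet E ∧
      (∀ y : G, ¬ IsOfFinOrder y → (∃ C, (edgeBoundary (cayleyGraph S) C).Finite ∧
        Separates (axisEnds y) C ∧ (edgeBoundary (cayleyGraph S) C).ncard ≤ k) →
        ∃ C ∈ E, y • C ⊂ C) ∧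
      ∀ C ∈ E, ∃ g : G, g • C ⊂ C := by
  let Γ := cayleyGraph S
  let Ω : Set (Ultrafilter G × Ultrafilter G) :=
    {ω | (∃ C, (edgeBoundary Γ C).Finite ∧ Separates ω C ∧ (edgeBoundary Γ C).ncard ≤ k) ∧
      ∃ g y : G, ¬ IsOfFinOrder y ∧ ω = translateEnds g (axisEnds y)}
  have hΩ (g : G) (ω) (hω : ω ∈ Ω) : translateEnds g ω ∈ Ω := by
    obtain ⟨⟨C, hfin, hC, hCk⟩, g', y, hy, rfl⟩ := hω
    refine ⟨⟨g • C, ?_, ?_, ?_⟩, g * g', y, hy, ?_⟩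
    · exact edgeBoundary_smul (smul_cayleyGraph g) C ▸ hfin.smul_set
    · rwa [separates_translateEnds, inv_smul_smul]
    · rwa [edgeBoundary_smul (smul_cayleyGraph g), Set.ncard_smul_set]
    · simp [translateEnds, Ultrafilter.map_map, Function.comp_def, mul_assoc]
  have hE := isTreeSet_isOptimalCut hS hΩ fun ω hω => hω.1
  have hsub (y : G) (hy : ¬ IsOfFinOrder y) (C : Set G) (hΩy : axisEnds y ∈ Ω)
      (hC : IsOptimalCut Γ Ω (axisEnds y) C) : y • C ⊂ C ∨ y⁻¹ • C ⊂ C := by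
    have hCE : C ∈ {C | ∃ ω ∈ Ω, IsOptimalCut Γ Ω ω C} := ⟨_, hΩy, hC⟩
    exact smul_ssubset_or_of_separates hy
      ((finite_edgeBoundary_cayleyGraph_iff hS hSfin).1 hC.isMinCut.finite) hC.isMinCut.separates
      (hE.nested _ (hE.smul_mem y C hCE) _ hCE)
  refine ⟨_, hE, fun y hy hyk => ?_, ?_⟩
  · have hΩy : axisEnds y ∈ Ω := ⟨hyk, 1, y, hy, by simp [translateEnds]⟩
    obtain ⟨C, hC⟩ := exists_isOptimalCut (Ω := Ω) (hyk.imp fun _ h => ⟨h.1, h.2.1⟩)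
    rcases hsub y hy C hΩy hC with h | h
    · exact ⟨C, ⟨_, hΩy, hC⟩, h⟩
    · refine ⟨Cᶜ, ⟨_, hΩy, hC.compl⟩, ?_⟩
      rw [Set.smul_set_compl]
      rw [← smul_set_ssubset_smul_set_iff (g := y), smul_inv_smul] at h
      exact compl_lt_compl_iff_lt.2 h
  · rintro C ⟨_, hω, hC⟩
    obtain ⟨-, g, y, hy, rfl⟩ := id hω
    have hC' := hC.smul smul_cayleyGraph hΩ g⁻¹
    have hω' := hΩ g⁻¹ _ hω
    rw [translateEnds_inv_translateEnds] at hC' hω'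
    have hconj (z : G) (hz : z • g⁻¹ • C ⊂ g⁻¹ • C) : (g * z) • g⁻¹ • C ⊂ C := by
      rwa [← smul_set_ssubset_smul_set_iff (g := g), smul_inv_smul, ← mul_smul] at hz
    rcases hsub y hy _ hω' hC' with h | h
    · exact ⟨_, smul_smul (g * y) g⁻¹ C ▸ hconj y h⟩
    · exact ⟨_, smul_smul (g * y⁻¹) g⁻¹ C ▸ hconj y⁻¹ h⟩

/-- The elements of infinite order act hyperbolically on the tree of `E`: some power of each of
them translates an edge along its axis. -/
def HasAxes (E : Set (Set G)) : Prop :=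
  ∀ y : G, ¬ IsOfFinOrder y → ∃ C ∈ E, ∃ n : ℕ, y ^ n • C ⊂ C

theorem exists_isTreeSet (hvf : VirtuallyFree G) (hfg : Group.FG G) :
    ∃ E : Set (Set G), IsTreeSet E ∧ HasAxes E ∧ ∀ C ∈ E, ∃ g : G, g • C ⊂ C := by
  obtain ⟨S, hS, hSfin⟩ := Group.fg_iff.1 hfg
  obtain ⟨B, hB, hBinv, hsep⟩ := hvf.exists_finite_isAlmostInvariant hfg
  obtain ⟨k, hk⟩ := (hB.image fun C => (edgeBoundary (cayleyGraph S) C).ncard).bddAbove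
  obtain ⟨E, hE, hhyp, htrans⟩ := exists_isTreeSet_of_separates hS hSfin k
  refine ⟨E, hE, fun y hy => ?_, htrans⟩
  obtain ⟨n, hn, g, C, hC, hsepC⟩ := hsep y hy
  have hgC := edgeBoundary_smul (smul_cayleyGraph (S := S) g) C
  obtain ⟨D, hD, hyD⟩ := hhyp (y ^ n) (isOfFinOrder_pow.not.2 (by tauto)) ⟨g • C,
    hgC ▸ ((finite_edgeBoundary_cayleyGraph_iff hS hSfin).2 (hBinv C hC)).smul_set, hsepC,
    by rw [hgC, Set.ncard_smul_set]; exact hk ⟨C, hC, rfl⟩⟩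
  exact ⟨D, hD, n, hyD⟩

end TreeSet

/-! ### The tree of a tree set -/

section Tree

open scoped Pointwise

variable {G : Type*} {E : Set (Set G)} {C D X : Set G} {v w : Set (Set G)}

/-- The vertices of the tree of `E`: choices of one side of each edge which are closed under
inclusion and which, unlike the ends of the tree, contain only finitely many sets missing a given
point. A set `D ∈ v` is thought of as an oriented edge pointing towards `v`. -/
structure IsVertex (E v : Set (Set G)) : Prop where
  subset : v ⊆ E
  compl_mem_iff : ∀ D ∈ E, (Dᶜ ∈ v ↔ D ∉ v)
  mem_of_subset : ∀ D ∈ v, ∀ X ∈ E, D ⊆ X → X ∈ v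
  finite : ∀ x : G, {D ∈ v | x ∉ D}.Finite

/-- The terminal vertex of the oriented edge `C`. The initial vertex is `terminus E Cᶜ`. -/
def terminus (E : Set (Set G)) (C : Set G) : Set (Set G) := {D ∈ E | C ⊆ D ∨ Cᶜ ⊂ D}

theorem IsVertex.eq_of_subset (hv : IsVertex E v) (hw : IsVertex E w) (h : v ⊆ w) : v = w := by
  refine h.antisymm fun D hD => ?_
  by_contra hn
  exact (hw.compl_mem_iff D (hw.subset hD)).1 (h ((hv.compl_mem_iff D (hw.subset hD)).2 hn)) hD

theorem mem_terminus (hC : C ∈ E) : C ∈ terminus E C := ⟨hC, Or.inl subset_rfl⟩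

theorem compl_ssubset_comm : Cᶜ ⊂ D ↔ Dᶜ ⊂ C := by
  rw [← compl_lt_compl_iff_lt, _root_.compl_compl]

variable [Group G]

theorem IsVertex.finite_diff (hv : IsVertex E v) (hw : IsVertex E w) : (w \ v).Finite := by
  refine ((hw.finite 1).union ((hv.finite 1).image compl)).subset fun D ⟨hDw, hDv⟩ => ?_
  by_cases h : 1 ∈ D
  · exact Or.inr ⟨Dᶜ, ⟨(hv.compl_mem_iff D (hw.subset hDw)).2 hDv, fun h' => h' h⟩,
      _root_.compl_compl D⟩
  · exact Or.inl ⟨hDw, h⟩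

namespace IsTreeSet

theorem compl_mem_iff (hE : IsTreeSet E) : Cᶜ ∈ E ↔ C ∈ E :=
  ⟨fun h => _root_.compl_compl C ▸ hE.compl_mem _ h, hE.compl_mem C⟩

theorem smul_mem_iff (hE : IsTreeSet E) {g : G} : g • C ∈ E ↔ C ∈ E :=
  ⟨fun h => inv_smul_smul g C ▸ hE.smul_mem g⁻¹ _ h, hE.smul_mem g C⟩

theorem not_subset_compl (hE : IsTreeSet E) (hC : C ∈ E) : ¬ C ⊆ Cᶜ := fun h =>
  have ⟨_, hx⟩ := hE.nonempty C hC
  h hx hx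

theorem not_compl_subset (hE : IsTreeSet E) (hC : C ∈ E) : ¬ Cᶜ ⊆ C := fun h =>
  hE.not_subset_compl (hE.compl_mem C hC) (by rwa [_root_.compl_compl])

theorem compl_mem_terminus_iff (hE : IsTreeSet E) (hC : C ∈ E) (hD : D ∈ E) :
    Dᶜ ∈ terminus E C ↔ D ∉ terminus E C := by
  constructor
  · rintro ⟨-, h₁ | h₁⟩ ⟨-, h₂ | h₂⟩
    · exact hE.not_subset_compl hC (h₂.trans (Set.subset_compl_comm.1 h₁))
    · exact (compl_ssubset_comm.1 h₂).2 h₁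
    · exact (compl_lt_compl_iff_lt.1 h₁).2 h₂
    · exact hE.not_compl_subset hC (h₁.subset.trans (compl_ssubset_comm.1 h₂).subset)
  · refine fun h => ⟨hE.compl_mem D hD, ?_⟩
    have h₁ : ¬ C ⊆ D := fun h' => h ⟨hD, Or.inl h'⟩
    have h₂ : ¬ Cᶜ ⊂ D := fun h' => h ⟨hD, Or.inr h'⟩
    rcases hE.nested C hC D hD with h₃ | h₃ | h₃ | h₃
    · exact absurd h₃ h₁
    · exact Or.inl h₃
    · exact Or.inl (Set.subset_compl_comm.1 (h₃.eq_of_not_ssubset h₂).superset)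
    · exact Or.inr (h₃.ssubset_of_ne fun h' => h₁ (compl_injective h').subset)

theorem isVertex_terminus (hE : IsTreeSet E) (hC : C ∈ E) : IsVertex E (terminus E C) where
  subset := fun _ hD => hD.1
  compl_mem_iff := fun _ hD => hE.compl_mem_terminus_iff hC hD
  mem_of_subset := fun _ ⟨_, h⟩ _ hX hDX =>
    ⟨hX, h.imp (fun h => h.trans hDX) fun h => h.trans_subset hDX⟩
  finite := fun x => by
    obtain ⟨y, hy⟩ := hE.nonempty C hC
    obtain ⟨z, hz⟩ := hE.nonempty Cᶜ (hE.compl_mem C hC)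
    refine ((hE.finite y x).union (hE.finite z x)).subset ?_
    rintro D ⟨⟨hD, h | h⟩, hx⟩
    exacts [Or.inl ⟨hD, h hy, hx⟩, Or.inr ⟨hD, h.subset hz, hx⟩]

theorem notMem_terminus_compl (hE : IsTreeSet E) (hC : C ∈ E) : C ∉ terminus E Cᶜ :=
  (hE.compl_mem_terminus_iff (hE.compl_mem C hC) hC).1 (mem_terminus (hE.compl_mem C hC))

theorem smul_terminus (hE : IsTreeSet E) (g : G) (C : Set G) :
    g • terminus E C = terminus E (g • C) := by
  ext D
  rw [Set.mem_smul_set_iff_inv_smul_mem, terminus, terminus, Set.mem_sep_iff, Set.mem_sep_iff,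
    hE.smul_mem_iff, ← smul_set_ssubset_smul_set_iff (g := g),
    ← Set.smul_set_subset_smul_set_iff (a := g), smul_inv_smul, Set.smul_set_compl]

theorem smul_terminus_compl (hE : IsTreeSet E) (g : G) (C : Set G) :
    g • terminus E Cᶜ = terminus E (g • C)ᶜ := by
  rw [hE.smul_terminus, Set.smul_set_compl]

theorem stabilizer_le_stabilizer_terminus (hE : IsTreeSet E) (C : Set G) :
    MulAction.stabilizer G C ≤ MulAction.stabilizer G (terminus E C) := fun g hg => by
  rw [MulAction.mem_stabilizer_iff, hE.smul_terminus, MulAction.mem_stabilizer_iff.1 hg]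

theorem isVertex_smul (hE : IsTreeSet E) (hv : IsVertex E v) (g : G) : IsVertex E (g • v) where
  subset := fun _ hD => hE.smul_mem_iff.1 (hv.subset (Set.mem_smul_set_iff_inv_smul_mem.1 hD))
  compl_mem_iff := fun D hD => by
    rw [Set.mem_smul_set_iff_inv_smul_mem, Set.mem_smul_set_iff_inv_smul_mem, Set.smul_set_compl]
    exact hv.compl_mem_iff _ (hE.smul_mem _ _ hD)
  mem_of_subset := fun D hD X hX hDX => by
    rw [Set.mem_smul_set_iff_inv_smul_mem] at hD ⊢
    exact hv.mem_of_subset _ hD _ (hE.smul_mem _ _ hX) (Set.smul_set_mono hDX)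
  finite := fun x => by
    refine ((hv.finite (g⁻¹ • x)).image (g • ·)).subset fun D ⟨hD, hx⟩ => ?_
    refine ⟨g⁻¹ • D, ⟨Set.mem_smul_set_iff_inv_smul_mem.1 hD, fun h => hx ?_⟩, smul_inv_smul g D⟩
    exact Set.smul_mem_smul_set_iff.1 h

theorem eq_compl_or_ssubset_of_terminus_eq (hE : IsTreeSet E) (hC : C ∈ E) (hD : D ∈ E)
    (h : terminus E C = terminus E Dᶜ) : D = Cᶜ ∨ D ⊂ C := by
  rcases (h ▸ mem_terminus hC : C ∈ terminus E Dᶜ).2 with hDC | hDC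
  · refine Or.inl (Set.compl_subset_comm.1 hDC |>.eq_of_not_ssubset fun h' => ?_).symm
    exact hE.notMem_terminus_compl hD (h ▸ ⟨hD, Or.inr h'⟩)
  · exact Or.inr (_root_.compl_compl D ▸ hDC)

/-- A maximal set among those in `w` but not in `v` is the first edge of the path from `v` to
`w`. -/
theorem exists_eq_terminus_compl (hE : IsTreeSet E) (hv : IsVertex E v) (hw : IsVertex E w)
    (hne : v ≠ w) : ∃ D ∈ w, v = terminus E Dᶜ := by
  obtain ⟨D, ⟨hDw, hDv⟩, hmax⟩ := (hv.finite_diff hw).exists_maximal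
    (Set.sdiff_nonempty.2 fun h => hne (hw.eq_of_subset hv h).symm)
  have hD := hw.subset hDw
  refine ⟨D, hDw, ((hE.isVertex_terminus (hE.compl_mem D hD)).eq_of_subset hv ?_).symm⟩
  rintro X ⟨hX, hDX | hDX⟩
  · exact hv.mem_of_subset _ ((hv.compl_mem_iff D hD).2 hDv) X hX hDX
  · rw [_root_.compl_compl] at hDX
    by_contra hXv
    exact hDX.2 (hmax ⟨hw.mem_of_subset D hDw X hX hDX.subset, hXv⟩ hDX.subset)

theorem exists_eq_terminus_compl_and_smul_eq (hE : IsTreeSet E) (hv : IsVertex E v)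
    (hw : IsVertex E w) (hne : v ≠ w) :
    ∃ D ∈ E, v = terminus E Dᶜ ∧ ∀ a : G, a • v = v → a • w = w → a • D = D := by
  obtain ⟨D, hDw, hvD⟩ := hE.exists_eq_terminus_compl hv hw hne
  have hD := hw.subset hDw
  refine ⟨D, hD, hvD, fun a hav haw => ?_⟩
  have haD := hE.smul_mem a D hD
  have h : terminus E Dᶜ = terminus E (a • D)ᶜ := by
    rw [← hE.smul_terminus_compl, ← hvD, hav]
  rcases hE.eq_compl_or_ssubset_of_terminus_eq (hE.compl_mem D hD) haD h with h | h
  · rwa [_root_.compl_compl] at h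
  · refine absurd (haw ▸ Set.smul_mem_smul_set hDw) ((hw.compl_mem_iff _ haD).1 ?_)
    exact hw.mem_of_subset D hDw _ (hE.compl_mem _ haD) (Set.subset_compl_comm.1 h.subset)

theorem exists_subset_ssubset_terminus_eq (hE : IsTreeSet E) (hC : C ∈ E) (hD : D ∈ E)
    (h : D ⊂ C) : ∃ X ∈ E, D ⊆ X ∧ X ⊂ C ∧ terminus E C = terminus E Xᶜ := by
  have hDC : ∀ X ⊂ C, ¬ Dᶜ ⊂ X := fun X hX hDX =>
    hE.not_compl_subset hC ((compl_lt_compl_iff_lt.2 h).trans (hDX.trans hX)).subset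
  have hne : terminus E C ≠ terminus E D := fun h' =>
    (h' ▸ mem_terminus hD : D ∈ terminus E C).2.elim h.2 fun hCD =>
      hE.not_compl_subset hC (hCD.trans h).subset
  obtain ⟨X, hX, hCX⟩ := hE.exists_eq_terminus_compl (hE.isVertex_terminus hC)
    (hE.isVertex_terminus hD) hne
  rcases hE.eq_compl_or_ssubset_of_terminus_eq hC hX.1 hCX with rfl | hXC
  · refine absurd hX ((hE.compl_mem_terminus_iff hD hC).not.2 (not_not.2 ⟨hC, Or.inl h.subset⟩))
  · exact ⟨X, hX.1, hX.2.resolve_right (hDC X hXC), hXC, hCX⟩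

theorem not_ssubset_ssubset_of_terminus_eq (hE : IsTreeSet E) (hC : C ∈ E) (hX : X ∈ E)
    (h : terminus E C = terminus E Dᶜ) (hDX : D ⊂ X) : ¬ X ⊂ C := fun hXC =>
  have hXC' : X ∈ terminus E C := h ▸ ⟨hX, Or.inr (by rwa [_root_.compl_compl])⟩
  hXC'.2.elim hXC.2 fun hCX => hE.not_compl_subset hC (hCX.trans hXC).subset

end IsTreeSet

end Tree

section Path

open scoped Pointwise

variable {G : Type*} {E : Set (Set G)} {C D : Set G} {v w x : Set (Set G)}
  {L M : List (Set G)} {P : Set G → G}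

/-- `IsPath E v L w` means that `L` is the list of oriented edges of a path from `v` to `w`. -/
def IsPath (E : Set (Set G)) : Set (Set G) → List (Set G) → Set (Set G) → Prop
  | v, [], w => v = w
  | v, C :: L, w => C ∈ E ∧ v = terminus E Cᶜ ∧ IsPath E (terminus E C) L w

/-- A path without backtracking: consecutive half-trees are properly nested. -/
def IsReducedPath (L : List (Set G)) : Prop := L.IsChain fun C D => D ⊂ C

theorem IsPath.append (h : IsPath E v L w) (h' : IsPath E w M x) : IsPath E v (L ++ M) x := by
  induction L generalizing v with
  | nil => exact (show v = w from h) ▸ h'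
  | cons C L ih => exact ⟨h.1, h.2.1, ih h.2.2⟩

variable [Group G]

/-- Labellings of the oriented edges by group elements which respect the action and the reversal
of edges. They give rise to endomorphisms of `G`, see `IsEdgeLabelling.exists_monoidHom`. -/
structure IsEdgeLabelling (E : Set (Set G)) (P : Set G → G) : Prop where
  map_smul : ∀ g, ∀ D ∈ E, P (g • D) = g * P D * g⁻¹
  map_compl : ∀ D ∈ E, P Dᶜ = (P D)⁻¹

theorem IsPath.notMem_start (hE : IsTreeSet E) (h : IsPath E v (C :: L) w) : C ∉ v := by
  rw [h.2.1]
  exact hE.notMem_terminus_compl h.1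

theorem IsPath.isVertex (hE : IsTreeSet E) (h : IsPath E v (C :: L) w) : IsVertex E w := by
  induction L generalizing v C with
  | nil => exact (show terminus E C = w from h.2.2) ▸ hE.isVertex_terminus h.1
  | cons D L ih => exact ih h.2.2

theorem IsPath.mem_end (hE : IsTreeSet E) (h : IsPath E v (C :: L) w)
    (hr : IsReducedPath (C :: L)) : C ∈ w := by
  induction L generalizing v C with
  | nil => exact (show terminus E C = w from h.2.2) ▸ mem_terminus h.1
  | cons D L ih =>
    exact (h.isVertex hE).mem_of_subset D (ih h.2.2 hr.tail) C h.1
      (List.isChain_cons_cons.1 hr).1.subset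

theorem IsPath.smul (hE : IsTreeSet E) (h : IsPath E v L w) (g : G) :
    IsPath E (g • v) (L.map (g • ·)) (g • w) := by
  induction L generalizing v with
  | nil => exact congrArg (g • ·) h
  | cons C L ih =>
    refine ⟨hE.smul_mem g C h.1, by rw [h.2.1, hE.smul_terminus_compl], ?_⟩
    rw [← hE.smul_terminus]
    exact ih h.2.2

theorem IsPath.reverse (hE : IsTreeSet E) (h : IsPath E v L w) :
    IsPath E w (L.map compl).reverse v := by
  induction L generalizing v with
  | nil => exact Eq.symm h
  | cons C L ih =>
    rw [List.map_cons, List.reverse_cons]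
    exact (ih h.2.2).append
      ⟨hE.compl_mem C h.1, by rw [_root_.compl_compl], h.2.1.symm⟩

theorem IsTreeSet.exists_isPath (hE : IsTreeSet E) (hv : IsVertex E v) (hw : IsVertex E w) :
    ∃ L, IsPath E v L w := by
  induction hn : (w \ v).ncard using Nat.strong_induction_on generalizing v with
  | _ n ih =>
  obtain rfl | hne := eq_or_ne v w
  · exact ⟨[], rfl⟩
  obtain ⟨D, hDw, rfl⟩ := hE.exists_eq_terminus_compl hv hw hne
  have hD := hw.subset hDw
  have hlt : w \ terminus E D ⊂ w \ terminus E Dᶜ := by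
    refine ⟨fun X ⟨hXw, hXD⟩ => ⟨hXw, fun ⟨hX, h⟩ => hXD ⟨hX, ?_⟩⟩,
      fun h => (h ⟨hDw, hE.notMem_terminus_compl hD⟩).2 (mem_terminus hD)⟩
    rw [_root_.compl_compl] at h
    refine h.symm.imp (fun h => h.subset) fun h => h.ssubset_of_ne ?_
    rintro rfl
    exact (hw.compl_mem_iff D hD).1 hXw hDw
  have hD' := hE.isVertex_terminus hD
  obtain ⟨L, hL⟩ := ih _ (hn ▸ Set.ncard_lt_ncard hlt (hv.finite_diff hw)) hD' rfl
  exact ⟨D :: L, hD, rfl, hL⟩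

theorem IsPath.exists_isReducedPath (hE : IsTreeSet E) (h : IsPath E v L w) :
    ∃ M, IsPath E v M w ∧ IsReducedPath M ∧
      ∀ P, IsEdgeLabelling E P → (M.map P).prod = (L.map P).prod := by
  induction L generalizing v with
  | nil => exact ⟨[], h, List.IsChain.nil, fun _ _ => rfl⟩
  | cons C L ih =>
    obtain ⟨M, hM, hMred, hMP⟩ := ih h.2.2
    rcases M with _ | ⟨D, M⟩
    · refine ⟨[C], ⟨h.1, h.2.1, hM⟩, List.IsChain.singleton _, fun P hP => ?_⟩
      rw [List.map_cons, List.map_cons, List.prod_cons, List.prod_cons, hMP P hP]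
    rcases hE.eq_compl_or_ssubset_of_terminus_eq h.1 hM.1 hM.2.1 with rfl | hDC
    · refine ⟨M, ?_, hMred.tail, fun P hP => ?_⟩
      · rw [h.2.1]
        exact hM.2.2
      · simp [← hMP P hP, hP.map_compl C h.1]
    · refine ⟨C :: D :: M, ⟨h.1, h.2.1, hM⟩, List.IsChain.cons_cons hDC hMred, fun P hP => ?_⟩
      rw [List.map_cons, List.prod_cons, hMP P hP, List.map_cons, List.prod_cons]

theorem IsTreeSet.exists_isPath_isReducedPath (hE : IsTreeSet E) (hv : IsVertex E v)
    (hw : IsVertex E w) : ∃ L, IsPath E v L w ∧ IsReducedPath L :=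
  have ⟨_, hL⟩ := hE.exists_isPath hv hw
  have ⟨M, hM, hred, _⟩ := hL.exists_isReducedPath hE
  ⟨M, hM, hred⟩

namespace IsEdgeLabelling

theorem prod_map_reverse (hP : IsEdgeLabelling E P) (h : IsPath E v L w) :
    ((L.map compl).reverse.map P).prod = (L.map P).prod⁻¹ := by
  induction L generalizing v with
  | nil => simp
  | cons C L ih =>
    simp only [List.map_cons, List.reverse_cons, List.map_append, List.prod_append, ih h.2.2,
      List.map_nil, List.prod_cons, List.prod_nil, hP.map_compl C h.1, mul_one, mul_inv_rev]

theorem prod_map_smul (hP : IsEdgeLabelling E P) (h : IsPath E v L w) (g : G) :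
    ((L.map (g • ·)).map P).prod = g * (L.map P).prod * g⁻¹ := by
  induction L generalizing v with
  | nil => simp
  | cons C L ih =>
    rw [List.map_cons, List.map_cons, List.prod_cons, ih h.2.2, hP.map_smul g C h.1, List.map_cons,
      List.prod_cons]
    group

theorem prod_map_eq_one (hE : IsTreeSet E) (hP : IsEdgeLabelling E P) (h : IsPath E v L v) :
    (L.map P).prod = 1 := by
  obtain ⟨M, hM, hred, hMP⟩ := h.exists_isReducedPath hE
  rw [← hMP P hP]
  rcases M with _ | ⟨C, M⟩
  · rfl
  · exact absurd (hM.mem_end hE hred) (hM.notMem_start hE)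

theorem prod_map_eq (hE : IsTreeSet E) (hP : IsEdgeLabelling E P) (h : IsPath E v L w)
    (h' : IsPath E v M w) : (L.map P).prod = (M.map P).prod := by
  have := prod_map_eq_one hE hP (h.append (h'.reverse hE))
  rwa [List.map_append, List.prod_append, hP.prod_map_reverse h', mul_inv_eq_one] at this

/-- Multiplying the labels along a path from `v` to `g • v` defines a cocycle on `G`. -/
theorem exists_monoidHom (hE : IsTreeSet E) (hP : IsEdgeLabelling E P) (hv : IsVertex E v) :
    ∃ φ : G →* G, ∀ g L, IsPath E v L (g • v) → φ g = (L.map P).prod * g := by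
  choose L hL using fun g => hE.exists_isPath hv (hE.isVertex_smul hv g)
  refine ⟨MonoidHom.mk' (fun g => ((L g).map P).prod * g) fun g h => ?_, fun g M hM => ?_⟩
  · have hgh := (hL g).append ((hL h).smul hE g)
    rw [smul_smul] at hgh
    rw [prod_map_eq hE hP (hL (g * h)) hgh, List.map_append, List.prod_append,
      hP.prod_map_smul (hL h)]
    group
  · rw [MonoidHom.mk'_apply, prod_map_eq hE hP (hL g) hM]

end IsEdgeLabelling

end Path

/-! ### Centralizers of edge stabilizers contain no translations of the edge -/

section Orbit

open scoped Pointwise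

variable {G : Type*} [Group G] {E : Set (Set G)} {C D : Set G} {g z p : G}

/-- The translates of the two orientations of the edge `C`. Its tree is obtained from the tree of
any tree set containing `C` by collapsing the other edges. -/
def edgeOrbit (C : Set G) : Set (Set G) := {D | ∃ g : G, D = g • C ∨ D = g • Cᶜ}

theorem mem_edgeOrbit (C : Set G) : C ∈ edgeOrbit C := ⟨1, Or.inl (one_smul G C).symm⟩

theorem IsTreeSet.edgeOrbit_subset (hE : IsTreeSet E) (hC : C ∈ E) : edgeOrbit C ⊆ E := by
  rintro D ⟨g, rfl | rfl⟩
  · exact hE.smul_mem _ _ hC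
  · exact hE.smul_mem _ _ (hE.compl_mem _ hC)

theorem IsTreeSet.edgeOrbit (hE : IsTreeSet E) (hC : C ∈ E) : IsTreeSet (edgeOrbit C) where
  smul_mem := fun h _ ⟨g, hg⟩ =>
    ⟨h * g, hg.imp (fun hg => by rw [hg, smul_smul]) fun hg => by rw [hg, smul_smul]⟩
  compl_mem := fun _ ⟨g, hg⟩ => ⟨g, hg.symm.imp
    (fun hg => by rw [hg, Set.smul_set_compl, _root_.compl_compl])
    fun hg => by rw [hg, Set.smul_set_compl]⟩
  nonempty := fun _ hD => hE.nonempty _ (hE.edgeOrbit_subset hC hD)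
  nested := fun _ hD _ hX =>
    hE.nested _ (hE.edgeOrbit_subset hC hD) _ (hE.edgeOrbit_subset hC hX)
  finite := fun x y =>
    (hE.finite x y).subset fun _ ⟨hD, h⟩ => ⟨hE.edgeOrbit_subset hC hD, h⟩

/-- The centralizer of the stabilizer of an oriented edge. -/
def edgeCentralizer (C : Set G) : Subgroup G :=
  Subgroup.centralizer (MulAction.stabilizer G C : Set G)

theorem mem_edgeCentralizer_iff : z ∈ edgeCentralizer C ↔ ∀ k : G, k • C = C → k * z = z * k :=
  Subgroup.mem_centralizer_iff

theorem smul_compl_eq_of_smul_eq_compl (h : g • C = Cᶜ) : g • Cᶜ = C := by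
  rw [Set.smul_set_compl, h, _root_.compl_compl]

theorem inv_smul_eq_compl (h : g • C = Cᶜ) : g⁻¹ • C = Cᶜ := by
  rw [inv_smul_eq_iff, smul_compl_eq_of_smul_eq_compl h]

theorem conj_eq_conj_of_smul_eq (hz : z ∈ edgeCentralizer C) {h : G} (hgh : g • C = h • C) :
    g * z * g⁻¹ = h * z * h⁻¹ := by
  have := mem_edgeCentralizer_iff.1 hz (h⁻¹ * g) (by rw [mul_smul, hgh, inv_smul_smul])
  calc g * z * g⁻¹ = h * ((h⁻¹ * g) * z) * g⁻¹ := by group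
    _ = h * z * h⁻¹ := by rw [this]; group

theorem conj_mem_edgeCentralizer (hg : g • C = Cᶜ) (hz : z ∈ edgeCentralizer C) :
    g * z * g⁻¹ ∈ edgeCentralizer C := by
  rw [mem_edgeCentralizer_iff] at hz ⊢
  intro k hk
  have := hz (g⁻¹ * k * g) (by
    rw [mul_smul, mul_smul, hg, Set.smul_set_compl, hk, inv_smul_eq_iff, hg])
  calc k * (g * z * g⁻¹) = g * ((g⁻¹ * k * g) * z) * g⁻¹ := by group
    _ = g * z * g⁻¹ * k := by rw [this]; group

theorem exists_isEdgeLabelling (hz : z ∈ edgeCentralizer C)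
    (hinv : ∀ g : G, g • C = Cᶜ → g * z * g⁻¹ = z⁻¹) :
    ∃ P : Set G → G, IsEdgeLabelling (edgeOrbit C) P ∧ P C = z := by
  have hcompl : ∀ g h : G, g • C = h • Cᶜ → g * z * g⁻¹ = h * z⁻¹ * h⁻¹ := fun g h hgh => by
    rw [← hinv (h⁻¹ * g) (by rw [mul_smul, hgh, inv_smul_smul])]
    group
  have hlabel : ∀ D : Set G, ∃ p : G, (∀ g : G, D = g • C → p = g * z * g⁻¹) ∧
      ∀ g : G, D = g • Cᶜ → p = g * z⁻¹ * g⁻¹ := fun D => by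
    by_cases h : ∃ g : G, D = g • C
    · obtain ⟨g, rfl⟩ := h
      exact ⟨_, fun h => conj_eq_conj_of_smul_eq hz, fun h => hcompl g h⟩
    by_cases h' : ∃ g : G, D = g • Cᶜ
    · obtain ⟨g, rfl⟩ := h'
      refine ⟨g * z⁻¹ * g⁻¹, fun h₁ hh => absurd ⟨h₁, hh⟩ h, fun h₁ hh => ?_⟩
      rw [Set.smul_set_compl, Set.smul_set_compl, compl_inj_iff] at hh
      exact conj_eq_conj_of_smul_eq (inv_mem hz) hh
    · exact ⟨1, fun g hg => absurd ⟨g, hg⟩ h, fun g hg => absurd ⟨g, hg⟩ h'⟩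
  choose P hP hP' using hlabel
  refine ⟨P, ⟨?_, ?_⟩, by simpa using hP C 1 (one_smul G C).symm⟩
  · rintro g D ⟨h, rfl | rfl⟩
    · rw [hP _ h rfl, hP _ (g * h) (smul_smul _ _ _)]
      group
    · rw [hP' _ h rfl, hP' _ (g * h) (smul_smul _ _ _)]
      group
  · rintro D ⟨h, rfl | rfl⟩
    · rw [hP _ h rfl, hP' _ h (by rw [Set.smul_set_compl])]
      group
    · rw [hP' _ h rfl, hP _ h (by rw [Set.smul_set_compl, _root_.compl_compl])]
      group

theorem conj_mul_conj_inv_eq_inv {g₀ : G} (h₀ : g₀ • C = Cᶜ) (hp : p ∈ edgeCentralizer C)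
    (hg : g • C = Cᶜ) :
    g * (p * (g₀ * p⁻¹ * g₀⁻¹)) * g⁻¹ = (p * (g₀ * p⁻¹ * g₀⁻¹))⁻¹ := by
  have hz : p * (g₀ * p⁻¹ * g₀⁻¹) ∈ edgeCentralizer C :=
    mul_mem hp (conj_mem_edgeCentralizer h₀ (inv_mem hp))
  have hcomm := mem_edgeCentralizer_iff.1 hp (g₀ * g₀)
    (by rw [mul_smul, h₀, smul_compl_eq_of_smul_eq_compl h₀])
  rw [conj_eq_conj_of_smul_eq hz (hg.trans h₀.symm)]
  calc g₀ * (p * (g₀ * p⁻¹ * g₀⁻¹)) * g₀⁻¹ = g₀ * p * g₀ * ((g₀ * g₀) * p)⁻¹ := by group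
    _ = g₀ * p * g₀ * (p * (g₀ * g₀))⁻¹ := by rw [hcomm]
    _ = (p * (g₀ * p⁻¹ * g₀⁻¹))⁻¹ := by group

end Orbit

section Contracting

open scoped Pointwise

variable {G : Type*} [Group G] {E : Set (Set G)} {P : Set G → G} {C D : Set G}
  {v w : Set (Set G)} {L : List (Set G)} {φ : G →* G} {g : G}

theorem mem_prod_map_smul_of_isReducedPath (hE : IsTreeSet E) (hPE : ∀ D ∈ E, P D • D ⊆ D)
    (h : IsPath E v (D :: L) w) (hred : IsReducedPath (D :: L)) :
    D ∈ ((D :: L).map P).prod • w := by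
  suffices hD : D ∈ (L.map P).prod • w by
    rw [List.map_cons, List.prod_cons, mul_smul]
    have hV := hE.isVertex_smul (hE.isVertex_smul (h.isVertex hE) (L.map P).prod) (P D)
    exact hV.mem_of_subset _ (Set.smul_mem_smul_set hD) D h.1 (hPE D h.1)
  induction L generalizing v D with
  | nil =>
    rw [List.map_nil, List.prod_nil, one_smul]
    exact h.mem_end hE hred
  | cons D' L ih =>
    have hV := hE.isVertex_smul (h.isVertex hE) ((D' :: L).map P).prod
    refine hV.mem_of_subset D' ?_ D h.1 (List.isChain_cons_cons.1 hred).1.subset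
    rw [List.map_cons, List.prod_cons, mul_smul]
    have hV' := hE.isVertex_smul (hE.isVertex_smul (h.isVertex hE) (L.map P).prod) (P D')
    exact hV'.mem_of_subset _ (Set.smul_mem_smul_set (ih h.2.2 hred.tail)) D' h.2.2.1
      (hPE D' h.2.2.1)

variable (hE : IsTreeSet E) (hPE : ∀ D ∈ E, P D • D ⊆ D) (hv : IsVertex E v)
  (hφ : ∀ g L, IsPath E v L (g • v) → φ g = (L.map P).prod * g)
include hE hPE

include hv hφ in
theorem injective_of_smul_subset : Function.Injective φ := by
  rw [injective_iff_map_eq_one]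
  intro g hg
  obtain ⟨L, hL, hred⟩ := hE.exists_isPath_isReducedPath hv (hE.isVertex_smul hv g)
  have hφg := hφ g L hL
  rw [hg] at hφg
  rcases L with _ | ⟨D, L⟩
  · simpa using hφg.symm
  · have := mem_prod_map_smul_of_isReducedPath hE hPE hL hred
    rw [smul_smul, ← hφg, one_smul] at this
    exact absurd this (hL.notMem_start hE)

/-- If `P C = φ g`, the path from the initial vertex of `C` to its translate by `g` is nonempty;
it starts with `C`, and cannot continue. -/
theorem notMem_range_of_smul_ssubset (hC : C ∈ E) (hPC : P C • C ⊂ C)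
    (hφ : ∀ g L, IsPath E (terminus E Cᶜ) L (g • terminus E Cᶜ) → φ g = (L.map P).prod * g) :
    P C ∉ φ.range := by
  rintro ⟨g, hg⟩
  have hv := hE.isVertex_terminus (hE.compl_mem C hC)
  have hCv : C ∉ terminus E Cᶜ := hE.notMem_terminus_compl hC
  have hCPv : C ∈ P C • terminus E Cᶜ := by
    rw [hE.smul_terminus_compl]
    exact ⟨hC, Or.inr (by rwa [_root_.compl_compl])⟩
  obtain ⟨L, hL, hred⟩ := hE.exists_isPath_isReducedPath hv (hE.isVertex_smul hv g)
  have hφg := hφ g L hL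
  rcases L with _ | ⟨D, L⟩
  · rw [hg, List.map_nil, List.prod_nil, one_mul] at hφg
    rw [hφg, ← show terminus E Cᶜ = g • terminus E Cᶜ from hL] at hCPv
    exact hCv hCPv
  have hD := hL.1
  obtain rfl : D = C := by
    rcases hE.eq_compl_or_ssubset_of_terminus_eq (hE.compl_mem C hC) hD hL.2.1 with h | h
    · rwa [_root_.compl_compl] at h
    · have hDv := mem_prod_map_smul_of_isReducedPath hE hPE hL hred
      rw [smul_smul, ← hφg, hg] at hDv
      have hV := hE.isVertex_smul hv (P C)
      exact absurd hDv ((hV.compl_mem_iff D hD).1 (hV.mem_of_subset C hCPv _ (hE.compl_mem D hD)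
        (Set.subset_compl_comm.1 h.subset)))
  rw [hg, List.map_cons, List.prod_cons, mul_assoc, eq_comm, mul_eq_left] at hφg
  rcases L with _ | ⟨D', L⟩
  · rw [List.map_nil, List.prod_nil, one_mul] at hφg
    have := hL.mem_end hE hred
    rw [hφg, one_smul] at this
    exact hCv this
  · have hD' := mem_prod_map_smul_of_isReducedPath hE hPE hL.2.2 hred.tail
    rw [smul_smul, hφg, one_smul] at hD'
    exact hCv (hv.mem_of_subset D' hD' D hD (List.isChain_cons_cons.1 hred).1.subset)

end Contracting

section Translation

open scoped Pointwise

variable {G : Type*} [Group G] {E : Set (Set G)} {C : Set G} {p : G}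

theorem inv_smul_compl_ssubset_compl (h : p • C ⊂ C) : p⁻¹ • Cᶜ ⊂ Cᶜ := by
  rw [Set.smul_set_compl, ← smul_set_ssubset_smul_set_iff (g := p), Set.smul_set_compl,
    smul_inv_smul, Set.smul_set_compl]
  exact compl_lt_compl_iff_lt.2 h

theorem not_smul_ssubset_of_conj_eq_inv (hco : CoHopfian G) (hE : IsTreeSet E) (hC : C ∈ E)
    (hp : p ∈ edgeCentralizer C) (hinv : ∀ g : G, g • C = Cᶜ → g * p * g⁻¹ = p⁻¹) :
    ¬ p • C ⊂ C := by
  intro hpC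
  have hO := hE.edgeOrbit hC
  have hCO := mem_edgeOrbit C
  obtain ⟨P, hP, rfl⟩ := exists_isEdgeLabelling hp hinv
  have hPO : ∀ D ∈ edgeOrbit C, P D • D ⊆ D := by
    rintro D ⟨g, rfl | rfl⟩
    · rw [hP.map_smul g C hCO, smul_smul, inv_mul_cancel_right, mul_smul]
      exact Set.smul_set_mono hpC.subset
    · rw [hP.map_smul g Cᶜ (hO.compl_mem C hCO), hP.map_compl C hCO, smul_smul,
        inv_mul_cancel_right, mul_smul]
      exact Set.smul_set_mono (inv_smul_compl_ssubset_compl hpC).subset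
  have hv := hO.isVertex_terminus (hO.compl_mem C hCO)
  obtain ⟨φ, hφ⟩ := hP.exists_monoidHom hO hv
  exact notMem_range_of_smul_ssubset hO hPO hCO hpC hφ
    (hco φ (injective_of_smul_subset hO hPO hv hφ) _)

/-- If `g₀` inverts `C`, replace `p` by `p * (g₀ * p⁻¹ * g₀⁻¹)`, which every inversion of `C`
conjugates to its inverse. -/
theorem not_smul_ssubset_of_mem_edgeCentralizer (hco : CoHopfian G) (hE : IsTreeSet E)
    (hC : C ∈ E) (hp : p ∈ edgeCentralizer C) : ¬ p • C ⊂ C := by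
  by_cases h : ∃ g₀ : G, g₀ • C = Cᶜ
  · obtain ⟨g₀, h₀⟩ := h
    intro hpC
    refine not_smul_ssubset_of_conj_eq_inv hco hE hC
      (mul_mem hp (conj_mem_edgeCentralizer h₀ (inv_mem hp)))
      (fun g hg => conj_mul_conj_inv_eq_inv h₀ hp hg) ?_
    have hconj : (g₀ * p⁻¹ * g₀⁻¹) • C ⊂ C := by
      rw [mul_smul, mul_smul, inv_smul_eq_compl h₀]
      conv_rhs => rw [← smul_compl_eq_of_smul_eq_compl h₀]
      exact smul_set_ssubset_smul_set_iff.2 (inv_smul_compl_ssubset_compl hpC)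
    rw [mul_smul]
    exact (smul_set_ssubset_smul_set_iff.2 hconj).trans hpC
  · push Not at h
    exact not_smul_ssubset_of_conj_eq_inv hco hE hC hp fun g hg => absurd hg (h g)

end Translation

/-! ### Edges with an infinite centralizer of the stabilizer -/

section Stabilizers

open scoped Pointwise

variable {G : Type*} [Group G] {E : Set (Set G)} {v : Set (Set G)} {C D : Set G} {a g : G}

theorem pow_smul_subset (h : a • C ⊆ C) (n : ℕ) : a ^ n • C ⊆ C := by
  induction n with
  | zero => rw [pow_zero, one_smul]
  | succ n ih =>
    rw [pow_succ, mul_smul]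
    exact (Set.smul_set_mono h).trans ih

theorem strictAnti_pow_smul (h : a • C ⊂ C) : StrictAnti fun n : ℕ => a ^ n • C :=
  strictAnti_nat_of_succ_lt fun n => by
    rw [pow_succ, mul_smul]
    exact smul_set_ssubset_smul_set_iff.2 h

theorem pow_smul_eq_self {α : Type*} [MulAction G α] {x : α} (h : a • x = x) (n : ℕ) :
    a ^ n • x = x :=
  pow_mem (S := MulAction.stabilizer G x) h n

theorem IsTreeSet.not_smul_ssubset_of_mem (hE : IsTreeSet E) (hv : IsVertex E v)
    (hav : a • v = v) (hC : C ∈ v) : ¬ a • C ⊂ C := by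
  intro h
  obtain ⟨y, hy⟩ := hE.nonempty Cᶜ (hE.compl_mem C (hv.subset hC))
  refine Set.infinite_range_of_injective (strictAnti_pow_smul h).injective
    ((hv.finite y).subset ?_)
  rintro _ ⟨n, rfl⟩
  exact ⟨pow_smul_eq_self hav n ▸ Set.smul_mem_smul_set hC,
    fun hyn => hy (pow_smul_subset h.subset n hyn)⟩

theorem HasAxes.isOfFinOrder_of_smul_eq (hax : HasAxes E) (hE : IsTreeSet E) (hv : IsVertex E v)
    (hav : a • v = v) : IsOfFinOrder a := by
  by_contra ha
  obtain ⟨C, hC, n, h⟩ := hax a ha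
  have hn := pow_smul_eq_self hav n
  by_cases hCv : C ∈ v
  · exact hE.not_smul_ssubset_of_mem hv hn hCv h
  · exact hE.not_smul_ssubset_of_mem hv (inv_smul_eq_iff.2 hn.symm) ((hv.compl_mem_iff C hC).2 hCv)
      (inv_smul_compl_ssubset_compl h)

theorem HasAxes.finite_stabilizer_of_isVertex (hax : HasAxes E) (hvf : VirtuallyFree G)
    (hE : IsTreeSet E) (hv : IsVertex E v) : (MulAction.stabilizer G v : Set G).Finite := by
  by_contra h
  obtain ⟨y, hyv, hy⟩ := hvf.exists_not_isOfFinOrder h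
  exact hy (hax.isOfFinOrder_of_smul_eq hE hv hyv)

theorem HasAxes.finite_stabilizer (hax : HasAxes E) (hvf : VirtuallyFree G)
    (hE : IsTreeSet E) (hC : C ∈ E) : (MulAction.stabilizer G C : Set G).Finite :=
  (hax.finite_stabilizer_of_isVertex hvf hE (hE.isVertex_terminus hC)).subset
    (hE.stabilizer_le_stabilizer_terminus C)

theorem isOfFinOrder_of_smul_eq (hfin : (MulAction.stabilizer G C : Set G).Finite)
    (h : a • C = C) : IsOfFinOrder a := by
  have := hfin.to_subtype
  exact (MulAction.stabilizer G C).subtype.isOfFinOrder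
    (isOfFinOrder_of_finite (⟨a, h⟩ : MulAction.stabilizer G C))

theorem isOfFinOrder_of_smul_eq_compl (hfin : (MulAction.stabilizer G C : Set G).Finite)
    (h : a • C = Cᶜ) : IsOfFinOrder a := by
  have ha := isOfFinOrder_of_smul_eq hfin (a := a ^ 2)
    (by rw [pow_two, mul_smul, h, smul_compl_eq_of_smul_eq_compl h])
  exact (isOfFinOrder_pow.1 ha).resolve_right two_ne_zero

theorem finite_setOf_smul_eq_or_eq_compl (hfin : (MulAction.stabilizer G C : Set G).Finite) :
    {y : G | y • C = C ∨ y • C = Cᶜ}.Finite := by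
  by_cases hinv : ∃ g : G, g • C = Cᶜ
  · obtain ⟨g, hg⟩ := hinv
    refine (hfin.union (hfin.image (g * ·))).subset fun y hy => hy.imp id fun hy => ?_
    refine ⟨g⁻¹ * y, ?_, mul_inv_cancel_left g y⟩
    rw [SetLike.mem_coe, MulAction.mem_stabilizer_iff, mul_smul, inv_smul_eq_iff, hg]
    exact hy
  · exact hfin.subset fun y hy => hy.resolve_right fun h => hinv ⟨y, h⟩

theorem ncard_stabilizer_eq_of_mem_edgeOrbit (h : D ∈ edgeOrbit C) :
    (MulAction.stabilizer G D : Set G).ncard = (MulAction.stabilizer G C : Set G).ncard := by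
  have hsmul (g : G) (X : Set G) : (MulAction.stabilizer G (g • X) : Set G).ncard =
      (MulAction.stabilizer G X : Set G).ncard := by
    rw [MulAction.stabilizer_smul_eq_stabilizer_map_conj, Subgroup.coe_map]
    exact Set.ncard_image_of_injective _ (MulAut.conj g).injective
  obtain ⟨g, rfl | rfl⟩ := h
  · exact hsmul g C
  · rw [hsmul, stabilizer_compl]

theorem stabilizer_eq_of_le (hDC : D ∈ edgeOrbit C)
    (hfin : (MulAction.stabilizer G D : Set G).Finite)
    (hle : MulAction.stabilizer G C ≤ MulAction.stabilizer G D) :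
    MulAction.stabilizer G C = MulAction.stabilizer G D :=
  SetLike.coe_injective <| Set.eq_of_subset_of_ncard_le hle
    (ncard_stabilizer_eq_of_mem_edgeOrbit hDC).le hfin

theorem edgeOrbit_eq_of_mem (h : D ∈ edgeOrbit C) : edgeOrbit D = edgeOrbit C := by
  have hsub {C D : Set G} : D ∈ edgeOrbit C → edgeOrbit D ⊆ edgeOrbit C := by
    rintro ⟨g, rfl | rfl⟩ X ⟨h, rfl | rfl⟩
    · exact ⟨h * g, Or.inl (smul_smul _ _ _)⟩
    · exact ⟨h * g, Or.inr (by rw [← Set.smul_set_compl, smul_smul])⟩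
    · exact ⟨h * g, Or.inr (smul_smul _ _ _)⟩
    · exact ⟨h * g, Or.inl (by rw [← Set.smul_set_compl, _root_.compl_compl, smul_smul])⟩
  refine (hsub h).antisymm (hsub ?_)
  obtain ⟨g, rfl | rfl⟩ := h
  · exact ⟨g⁻¹, Or.inl (inv_smul_smul g C).symm⟩
  · exact ⟨g⁻¹, Or.inr (by rw [← Set.smul_set_compl, _root_.compl_compl, inv_smul_smul])⟩

end Stabilizers

section Inversions

open scoped Pointwise

variable {G : Type*} [Group G] {E : Set (Set G)} {C : Set G} {g z : G}

theorem exists_ne_zero_commute_pow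
    (h : (Set.range fun n : ℕ => z ^ n * (g * (z ^ n)⁻¹ * g⁻¹)).Finite) :
    ∃ m : ℕ, m ≠ 0 ∧ Commute g (z ^ m) := by
  obtain ⟨i, j, hij, heq⟩ : ∃ i j : ℕ, i < j ∧
      z ^ i * (g * (z ^ i)⁻¹ * g⁻¹) = z ^ j * (g * (z ^ j)⁻¹ * g⁻¹) := by
    by_contra! hne
    refine Set.infinite_range_of_injective (fun i j hij => ?_) h
    by_contra hij'
    rcases lt_or_gt_of_ne hij' with hlt | hlt
    · exact hne i j hlt hij
    · exact hne j i hlt hij.symm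
  obtain ⟨m, rfl⟩ := Nat.exists_eq_add_of_le hij.le
  refine ⟨m, by omega, ?_⟩
  rw [pow_add, mul_assoc (z ^ i), mul_right_inj] at heq
  calc g * z ^ m = g * (z ^ i)⁻¹ * g⁻¹ * (g * (z ^ i * z ^ m)) := by group
    _ = z ^ m * (g * (z ^ i * z ^ m)⁻¹ * g⁻¹) * (g * (z ^ i * z ^ m)) := by rw [heq]
    _ = z ^ m * g := by group

theorem smul_eq_or_subset_compl_or_compl_subset (hco : CoHopfian G) (hE : IsTreeSet E)
    (hC : C ∈ E) (hz : z ∈ edgeCentralizer C) :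
    z • C = C ∨ z • C ⊆ Cᶜ ∨ Cᶜ ⊆ z • C := by
  rcases hE.nested _ (hE.smul_mem z C hC) _ hC with h | h | h | h
  · exact Or.inl (h.eq_of_not_ssubset (not_smul_ssubset_of_mem_edgeCentralizer hco hE hC hz))
  · exact Or.inr (Or.inl h)
  · exact Or.inr (Or.inr (Set.compl_subset_comm.1 h))
  · refine Or.inl (Eq.symm <| (Set.compl_subset_compl.1 h).eq_of_not_ssubset fun hlt =>
      not_smul_ssubset_of_mem_edgeCentralizer hco hE hC (inv_mem hz) ?_)
    rwa [← smul_set_ssubset_smul_set_iff (g := z), smul_inv_smul]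

theorem smul_eq_or_eq_compl_of_conj_eq_inv (hco : CoHopfian G) (hE : IsTreeSet E) (hC : C ∈ E)
    (hz : z ∈ edgeCentralizer C) (hg : g • C = Cᶜ) (hinv : g * z * g⁻¹ = z⁻¹) :
    z • C = C ∨ z • C = Cᶜ := by
  have hgz : z⁻¹ • Cᶜ = g • z • C := by
    rw [← hinv, mul_smul, mul_smul, Set.smul_set_compl, inv_smul_eq_compl hg,
      _root_.compl_compl]
  have hg' := smul_compl_eq_of_smul_eq_compl hg
  refine (smul_eq_or_subset_compl_or_compl_subset hco hE hC hz).imp id fun h => ?_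
  suffices hzC : z⁻¹ • Cᶜ = C by rw [inv_smul_eq_iff.1 hzC]
  rcases h with h | h
  · refine Set.Subset.antisymm ?_ ?_
    · rw [hgz]
      exact (Set.smul_set_mono h).trans hg'.subset
    · rwa [Set.subset_smul_set_iff, inv_inv]
  · refine Set.Subset.antisymm ?_ ?_
    · rwa [Set.smul_set_subset_iff_subset_inv_smul_set, inv_inv]
    · rw [hgz]
      exact hg'.superset.trans (Set.smul_set_mono h)

theorem smul_ne_compl_of_commute (hco : CoHopfian G) (hE : IsTreeSet E) (hC : C ∈ E)
    (hfin : (MulAction.stabilizer G C : Set G).Finite) (hz : z ∈ edgeCentralizer C)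
    (hz' : ¬ IsOfFinOrder z) (hgz : Commute g z) : g • C ≠ Cᶜ := by
  intro hg
  have hg' := smul_compl_eq_of_smul_eq_compl hg
  have hgzC : g • z • C = (z • C)ᶜ := by
    rw [smul_smul, hgz.eq, mul_smul, hg, Set.smul_set_compl]
  have hzC : z • C = Cᶜ := by
    rcases smul_eq_or_subset_compl_or_compl_subset hco hE hC hz with h | h | h
    · exact absurd (isOfFinOrder_of_smul_eq hfin h) hz'
    · have := Set.smul_set_mono (a := g) h
      rw [hgzC, hg', Set.compl_subset_comm] at this
      exact h.antisymm this
    · have := Set.smul_set_mono (a := g) h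
      rw [hgzC, hg', Set.subset_compl_comm] at this
      exact this.antisymm h
  exact hz' (isOfFinOrder_of_smul_eq_compl hfin hzC)

/-- If `g` inverts `C`, then `z ^ n * (g * (z ^ n)⁻¹ * g⁻¹)` preserves the pair `{C, Cᶜ}`, which
leaves finitely many possibilities, so `g` commutes with a power of `z`. -/
theorem smul_ne_compl_of_mem_edgeCentralizer (hco : CoHopfian G) (hE : IsTreeSet E) (hC : C ∈ E)
    (hfin : (MulAction.stabilizer G C : Set G).Finite) (hz : z ∈ edgeCentralizer C)
    (hz' : ¬ IsOfFinOrder z) (g : G) : g • C ≠ Cᶜ := by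
  intro hg
  obtain ⟨m, hm, hcomm⟩ := exists_ne_zero_commute_pow (g := g) (z := z)
    ((finite_setOf_smul_eq_or_eq_compl hfin).subset (by
      rintro _ ⟨n, rfl⟩
      have hzn := pow_mem hz n
      exact smul_eq_or_eq_compl_of_conj_eq_inv hco hE hC
        (mul_mem hzn (conj_mem_edgeCentralizer hg (inv_mem hzn))) hg
        (conj_mul_conj_inv_eq_inv hg hzn hg)))
  exact smul_ne_compl_of_commute hco hE hC hfin (pow_mem hz m)
    (fun h => hz' ((isOfFinOrder_pow.1 h).resolve_right hm)) hcomm hg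

end Inversions

section Adjacent

open scoped Pointwise

variable {G : Type*} [Group G] {E : Set (Set G)} {C D X Y : Set G} {k z : G}

theorem IsTreeSet.smul_eq_of_smul_terminus_compl_eq (hE : IsTreeSet E) (hX : X ∈ E) (hY : Y ∈ E)
    (hYX : Y ⊆ X) (hkY : k • Y = Y) (hk : k • terminus E Xᶜ = terminus E Xᶜ) : k • X = X := by
  have hkX := hE.smul_mem k X hX
  have hYkX : Y ⊆ k • X := hkY ▸ Set.smul_set_mono hYX
  rw [hE.smul_terminus_compl] at hk
  rcases hE.eq_compl_or_ssubset_of_terminus_eq (hE.compl_mem X hX) hkX hk.symm with h | h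
  · rwa [_root_.compl_compl] at h
  · obtain ⟨y, hy⟩ := hE.nonempty Y hY
    exact absurd (hYX hy) (h.subset (hYkX hy))

theorem not_smul_subset_compl_of_terminus_eq (hco : CoHopfian G) (hE : IsTreeSet E)
    (hDC : D ∈ edgeOrbit C) (hC : C ∈ E) (hX : X ∈ edgeOrbit C)
    (hfin : (MulAction.stabilizer G X : Set G).Finite) (hz : z ∈ edgeCentralizer X)
    (hz' : ¬ IsOfFinOrder z)
    (heq : terminus (edgeOrbit C) Dᶜ = terminus (edgeOrbit C) Xᶜ) (hzD : z • D ⊂ X) :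
    ¬ z • X ⊆ Xᶜ := by
  intro h
  have hO := hE.edgeOrbit hC
  have hzX := hO.smul_mem z⁻¹ X hX
  have hDzX : D ⊂ z⁻¹ • X := by rwa [← smul_set_ssubset_smul_set_iff (g := z), smul_inv_smul]
  have hXzX : X ⊆ (z⁻¹ • X)ᶜ := by
    rwa [← Set.smul_set_compl, Set.subset_smul_set_iff, inv_inv]
  have hne : X ≠ (z⁻¹ • X)ᶜ := fun h' =>
    smul_ne_compl_of_mem_edgeCentralizer hco hE (hE.edgeOrbit_subset hC hX) hfin (inv_mem hz)
      (by rwa [isOfFinOrder_inv_iff]) z⁻¹ (by conv_rhs => rw [h', _root_.compl_compl])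
  exact hO.not_ssubset_ssubset_of_terminus_eq (hO.compl_mem D hDC) (hO.compl_mem _ hzX) heq
    (hXzX.ssubset_of_ne hne) (compl_lt_compl_iff_lt.2 hDzX)

/-- Among the edges of the orbit between `z • D` and `Dᶜ`, take `X` adjacent to `Dᶜ`. It is
preserved by the stabilizer of `D`. -/
theorem smul_terminus_eq_or_exists_between (hco : CoHopfian G) (hE : IsTreeSet E) (hC : C ∈ E)
    (hfin : ∀ X ∈ E, (MulAction.stabilizer G X : Set G).Finite) (hD : D ∈ edgeOrbit C)
    (hz : z ∈ edgeCentralizer D) (hz' : ¬ IsOfFinOrder z) (hzD : z • D ⊆ Dᶜ) :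
    z • terminus (edgeOrbit C) Dᶜ = terminus (edgeOrbit C) Dᶜ ∨
      ∃ X ∈ edgeOrbit C, z • D ⊂ X ∧ X ⊂ Dᶜ ∧ z ∈ edgeCentralizer X ∧ Xᶜ ⊆ z • X := by
  have hO := hE.edgeOrbit hC
  have hsub := hE.edgeOrbit_subset hC
  have hDE := hsub hD
  have hzDO := hO.smul_mem z D hD
  obtain ⟨X, hX, hDX, hXD, heq⟩ := hO.exists_subset_ssubset_terminus_eq (hO.compl_mem D hD) hzDO
    (hzD.ssubset_of_ne (smul_ne_compl_of_mem_edgeCentralizer hco hE hDE (hfin D hDE) hz hz' z))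
  by_cases hXz : z • D = X
  · left
    rw [hO.smul_terminus_compl, hXz, heq]
  right
  have hzDX := hDX.ssubset_of_ne hXz
  have hle : MulAction.stabilizer G D ≤ MulAction.stabilizer G X := fun k hk => by
    have hkD : k • D = D := hk
    refine hO.smul_eq_of_smul_terminus_compl_eq hX hzDO hDX ?_ ?_
    · rw [smul_smul, mem_edgeCentralizer_iff.1 hz k hkD, mul_smul, hkD]
    · rw [← heq, hO.smul_terminus_compl, hkD]
  have hstab := stabilizer_eq_of_le (edgeOrbit_eq_of_mem hD ▸ hX) (hfin X (hsub hX)) hle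
  have hzX : z ∈ edgeCentralizer X := by rwa [edgeCentralizer, ← hstab]
  refine ⟨X, hX, hzDX, hXD, hzX, ?_⟩
  rcases smul_eq_or_subset_compl_or_compl_subset hco hE (hsub hX) hzX with h | h | h
  · exact absurd (isOfFinOrder_of_smul_eq (hfin X (hsub hX)) h) hz'
  · exact absurd h (not_smul_subset_compl_of_terminus_eq hco hE hD hC hX (hfin X (hsub hX)) hzX hz'
      heq hzDX)
  · exact h

theorem edgeCentralizer_compl (C : Set G) : edgeCentralizer Cᶜ = edgeCentralizer C := by
  rw [edgeCentralizer, stabilizer_compl, edgeCentralizer]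

theorem exists_smul_terminus_eq_of_mem_edgeCentralizer (hco : CoHopfian G) (hE : IsTreeSet E)
    (hC : C ∈ E) (hfin : ∀ X ∈ E, (MulAction.stabilizer G X : Set G).Finite)
    (hz : z ∈ edgeCentralizer C) (hz' : ¬ IsOfFinOrder z) :
    ∃ D ∈ edgeOrbit C, z ∈ edgeCentralizer D ∧
      z • terminus (edgeOrbit C) Dᶜ = terminus (edgeOrbit C) Dᶜ := by
  have hO := hE.edgeOrbit hC
  have hcompl {X : Set G} (h : Xᶜ ⊆ z • X) : z • Xᶜ ⊆ Xᶜᶜ := by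
    rw [Set.smul_set_compl]
    exact Set.compl_subset_compl.2 h
  have hne : ∃ D, D ∈ edgeOrbit C ∧ z ∈ edgeCentralizer D ∧ z • D ⊆ Dᶜ := by
    rcases smul_eq_or_subset_compl_or_compl_subset hco hE hC hz with h | h | h
    · exact absurd (isOfFinOrder_of_smul_eq (hfin C hC) h) hz'
    · exact ⟨C, mem_edgeOrbit C, hz, h⟩
    · exact ⟨Cᶜ, hO.compl_mem C (mem_edgeOrbit C), edgeCentralizer_compl C ▸ hz, hcompl h⟩
  let between (D : Set G) : Set (Set G) := {X ∈ edgeOrbit C | z • D ⊂ X ∧ X ⊂ Dᶜ}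
  obtain ⟨D, ⟨hD, hzD, hdisj⟩, hmin⟩ := exists_minimalFor_of_wellFoundedLT
    (fun D => D ∈ edgeOrbit C ∧ z ∈ edgeCentralizer D ∧ z • D ⊆ Dᶜ)
    (fun D => (between D).ncard) hne
  refine ⟨D, hD, hzD, ?_⟩
  refine (smul_terminus_eq_or_exists_between hco hE hC hfin hD hzD hz' hdisj).resolve_right ?_
  rintro ⟨X, hX, hDX, hXD, hzX, hXX⟩
  obtain ⟨x, hx⟩ := hO.nonempty _ (hO.smul_mem z D hD)
  obtain ⟨y, hy⟩ := hO.nonempty D hD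
  have hfinD : (between D).Finite := (hO.finite x y).subset fun Y hY =>
    ⟨hY.1, hY.2.1.subset hx, fun hyY => hY.2.2.subset hyY hy⟩
  have hlt : between Xᶜ ⊂ between D := by
    refine Set.ssubset_iff_of_subset ?_ |>.2 ⟨X, ⟨hX, hDX, hXD⟩, fun h => ?_⟩
    · rintro Y ⟨hY, hzY, hYX⟩
      rw [_root_.compl_compl] at hYX
      refine ⟨hY, (smul_set_ssubset_smul_set_iff.2 ?_).trans hzY, hYX.trans hXD⟩
      rw [← compl_lt_compl_iff_lt, _root_.compl_compl]
      exact hXD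
    · exact h.2.2.ne (_root_.compl_compl X).symm
  exact (Set.ncard_lt_ncard hlt hfinD).not_ge (hmin
    ⟨hO.compl_mem X hX, edgeCentralizer_compl X ▸ hzX, hcompl hXX⟩
    (Set.ncard_le_ncard hlt.subset hfinD))

end Adjacent

/-! ### Dehn twists -/

section Twist

open scoped Pointwise

variable {G : Type*} [Group G] {E : Set (Set G)} {P : Set G → G} {A : Set (Set G)}
  {C D D' : Set G} {v w : Set (Set G)} {L : List (Set G)} {φ : G →* G} {y : G}

/-- An edge labelling that defines a Dehn twist: `A` is an invariant orientation of the edges, and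
the label of an edge in `A` fixes its initial vertex. -/
structure IsTwist (E : Set (Set G)) (P : Set G → G) (A : Set (Set G)) : Prop
    extends IsEdgeLabelling E P where
  smul_mem : ∀ (g : G), ∀ D ∈ A, g • D ∈ A
  compl_mem_iff : ∀ D ∈ E, (Dᶜ ∈ A ↔ D ∉ A)
  smul_terminus : ∀ D ∈ E, D ∈ A → P D • terminus E Dᶜ = terminus E Dᶜ

open Classical in
/-- The first edge of the image, under a Dehn twist, of a path starting with `D`. -/
noncomputable def twistedEdge (P : Set G → G) (A : Set (Set G)) (D : Set G) : Set G :=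
  if D ∈ A then P D • D else D

theorem twistedEdge_of_mem (h : D ∈ A) : twistedEdge P A D = P D • D := if_pos h

theorem twistedEdge_of_notMem (h : D ∉ A) : twistedEdge P A D = D := if_neg h

theorem twistedEdge_mem (hE : IsTreeSet E) (hD : D ∈ E) : twistedEdge P A D ∈ E := by
  unfold twistedEdge
  split_ifs
  · exact hE.smul_mem _ _ hD
  · exact hD

theorem IsTwist.terminus_twistedEdge_compl (hP : IsTwist E P A) (hE : IsTreeSet E) (hD : D ∈ E) :
    terminus E (twistedEdge P A D)ᶜ = terminus E Dᶜ := by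
  by_cases h : D ∈ A
  · rw [twistedEdge_of_mem h, ← hE.smul_terminus_compl, hP.smul_terminus D hD h]
  · rw [twistedEdge_of_notMem h]

theorem IsTwist.terminus_inv_smul_twistedEdge (hP : IsTwist E P A) (hE : IsTreeSet E)
    (hD : D ∈ E) : terminus E ((P D)⁻¹ • twistedEdge P A D) = terminus E D := by
  by_cases h : D ∈ A
  · rw [twistedEdge_of_mem h, inv_smul_smul]
  · have := hP.smul_terminus Dᶜ (hE.compl_mem D hD) ((hP.compl_mem_iff D hD).2 h)
    rw [hP.map_compl D hD, _root_.compl_compl] at this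
    rw [twistedEdge_of_notMem h, ← hE.smul_terminus, this]

theorem IsTwist.twistedEdge_ne_compl (hP : IsTwist E P A) (hE : IsTreeSet E) (hD : D ∈ E)
    (hD' : D' ∈ E) (hne : D' ≠ Dᶜ) :
    twistedEdge P A D' ≠ ((P D)⁻¹ • twistedEdge P A D)ᶜ := by
  intro h
  by_cases hDA : D ∈ A
  · rw [twistedEdge_of_mem hDA, inv_smul_smul] at h
    by_cases hDA' : D' ∈ A
    · rw [twistedEdge_of_mem hDA'] at h
      exact (hP.compl_mem_iff D hD).1 (h ▸ hP.smul_mem _ D' hDA') hDA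
    · exact hne (by rwa [twistedEdge_of_notMem hDA'] at h)
  rw [twistedEdge_of_notMem hDA, ← Set.smul_set_compl] at h
  by_cases hDA' : D' ∈ A
  · rw [twistedEdge_of_mem hDA'] at h
    have hlabel := congrArg P h
    rw [hP.map_smul _ D' hD', hP.map_smul _ Dᶜ (hE.compl_mem D hD), hP.map_compl D hD,
      mul_inv_cancel_right, mul_inv_cancel_right] at hlabel
    rw [hlabel, smul_left_cancel_iff] at h
    exact hne h
  · rw [twistedEdge_of_notMem hDA'] at h
    exact hDA' (h ▸ hP.smul_mem _ Dᶜ ((hP.compl_mem_iff D hD).2 hDA))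

theorem IsTwist.twistedEdge_mem_prod_map_smul (hP : IsTwist E P A) (hE : IsTreeSet E)
    (h : IsPath E v (D :: L) w) (hred : IsReducedPath (D :: L)) :
    twistedEdge P A D ∈ ((D :: L).map P).prod • w := by
  suffices hY : (P D)⁻¹ • twistedEdge P A D ∈ (L.map P).prod • w by
    rw [List.map_cons, List.prod_cons, mul_smul]
    exact Set.mem_smul_set_iff_inv_smul_mem.2 hY
  have hYE := hE.smul_mem (P D)⁻¹ _ (twistedEdge_mem (P := P) (A := A) hE h.1)
  have hYD := hP.terminus_inv_smul_twistedEdge hE h.1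
  induction L generalizing v D with
  | nil =>
    rw [List.map_nil, List.prod_nil, one_smul, ← show terminus E D = w from h.2.2, ← hYD]
    exact mem_terminus hYE
  | cons D' L ih =>
    have hD' := h.2.2.1
    have hD'E := twistedEdge_mem (P := P) (A := A) hE hD'
    have hX : twistedEdge P A D' ∈ ((D' :: L).map P).prod • w := by
      rw [List.map_cons, List.prod_cons, mul_smul]
      exact Set.mem_smul_set_iff_inv_smul_mem.2 (ih h.2.2 hred.tail (hE.smul_mem _ _ hD'E)
        (hP.terminus_inv_smul_twistedEdge hE hD'))
    have hDD' := (List.isChain_cons_cons.1 hred).1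
    rcases hE.eq_compl_or_ssubset_of_terminus_eq hYE hD'E (by
      rw [hYD, hP.terminus_twistedEdge_compl hE hD', h.2.2.2.1]) with he | hlt
    · exact absurd he (hP.twistedEdge_ne_compl hE h.1 hD'
        fun he => hE.not_compl_subset h.1 (he ▸ hDD'.subset))
    · exact (hE.isVertex_smul (h.isVertex hE) _).mem_of_subset _ hX _ hYE hlt.subset

theorem IsTwist.injective (hP : IsTwist E P A) (hE : IsTreeSet E) (hv : IsVertex E v)
    (hφ : ∀ g L, IsPath E v L (g • v) → φ g = (L.map P).prod * g) : Function.Injective φ := by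
  rw [injective_iff_map_eq_one]
  intro g hg
  obtain ⟨L, hL, hred⟩ := hE.exists_isPath_isReducedPath hv (hE.isVertex_smul hv g)
  have hφg := hφ g L hL
  rw [hg] at hφg
  rcases L with _ | ⟨D, L⟩
  · simpa using hφg.symm
  · have := hP.twistedEdge_mem_prod_map_smul hE hL hred
    rw [smul_smul, ← hφg, one_smul, hL.2.1, ← hP.terminus_twistedEdge_compl hE hL.1] at this
    exact absurd this (hE.notMem_terminus_compl (twistedEdge_mem hE hL.1))

theorem isTwist_of_smul_ne_compl (hO : IsTreeSet (edgeOrbit C))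
    (hP : IsEdgeLabelling (edgeOrbit C) P)
    (hPC : P C • terminus (edgeOrbit C) Cᶜ = terminus (edgeOrbit C) Cᶜ)
    (hinv : ∀ g : G, g • C ≠ Cᶜ) : IsTwist (edgeOrbit C) P (Set.range fun g : G => g • C) where
  toIsEdgeLabelling := hP
  smul_mem := by
    rintro g _ ⟨h, rfl⟩
    exact ⟨g * h, mul_smul g h C⟩
  compl_mem_iff := by
    have hne (g h : G) : g • C ≠ h • Cᶜ := fun e =>
      hinv (h⁻¹ * g) (by rw [mul_smul, e, inv_smul_smul])
    rintro D ⟨g, rfl | rfl⟩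
    · refine ⟨fun ⟨h, hh⟩ => absurd (hh.trans (Set.smul_set_compl ..).symm) (hne h g), fun h => ?_⟩
      exact absurd ⟨g, rfl⟩ h
    · refine ⟨fun _ ⟨h, hh⟩ => hne h g hh, fun _ => ⟨g, ?_⟩⟩
      rw [Set.smul_set_compl, _root_.compl_compl]
  smul_terminus := by
    rintro _ - ⟨g, rfl⟩
    rw [hP.map_smul g C (mem_edgeOrbit C), ← hO.smul_terminus_compl, smul_smul,
      inv_mul_cancel_right, mul_smul, hPC]

theorem exists_injective_twist (hO : IsTreeSet (edgeOrbit C)) (hy : y ∈ edgeCentralizer C)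
    (hyu : y • terminus (edgeOrbit C) Cᶜ = terminus (edgeOrbit C) Cᶜ)
    (hinv : ∀ g : G, g • C ≠ Cᶜ) :
    ∃ φ : G →* G, Function.Injective φ ∧
      (∀ a : G, a • terminus (edgeOrbit C) Cᶜ = terminus (edgeOrbit C) Cᶜ → φ a = a) ∧
      ∀ b : G, b • terminus (edgeOrbit C) C = terminus (edgeOrbit C) C → φ b = y * b * y⁻¹ := by
  have hC := mem_edgeOrbit C
  have hCc := hO.compl_mem C hC
  obtain ⟨P, hP, rfl⟩ := exists_isEdgeLabelling hy fun g hg => absurd hg (hinv g)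
  have hv := hO.isVertex_terminus hCc
  obtain ⟨φ, hφ⟩ := hP.exists_monoidHom hO hv
  refine ⟨φ, (isTwist_of_smul_ne_compl hO hP hyu hinv).injective hO hv hφ, fun a ha => ?_,
    fun b hb => ?_⟩
  · simpa using hφ a [] ha.symm
  · have hpath : IsPath (edgeOrbit C) (terminus (edgeOrbit C) Cᶜ) [C, b • Cᶜ]
        (b • terminus (edgeOrbit C) Cᶜ) := by
      refine ⟨hC, rfl, hO.smul_mem b _ hCc, ?_, (hO.smul_terminus b Cᶜ).symm⟩
      rw [← Set.smul_set_compl, _root_.compl_compl, ← hO.smul_terminus, hb]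
    rw [hφ b _ hpath, List.map_cons, List.map_cons, List.map_nil, List.prod_cons, List.prod_cons,
      List.prod_nil, hP.map_smul b _ hCc, hP.map_compl C hC]
    group

end Twist

/-! ### Finiteness of the centralizers of edge stabilizers -/

section TwistConjugacy

open scoped Pointwise

variable {G : Type*} [Group G] {E T : Set (Set G)} {v : Set (Set G)} {C D : Set G}
  {a g h t z : G}

theorem OutFinite.exists_lt_eq_conj (hout : OutFinite G) (hco : CoHopfian G) (φ : ℕ → G →* G)
    (hφ : ∀ n, Function.Injective (φ n)) :
    ∃ j k : ℕ, j < k ∧ ∃ g : G, ∀ x, φ k x = g * φ j x * g⁻¹ := by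
  let α (n : ℕ) : MulAut G := MulEquiv.ofBijective (φ n) ⟨hφ n, hco _ (hφ n)⟩
  have : (MulAut.conj : G →* MulAut G).range.FiniteIndex := hout
  obtain ⟨j, k, hjk, hα⟩ : ∃ j k : ℕ, j < k ∧
      (α j : MulAut G ⧸ (MulAut.conj : G →* MulAut G).range) = α k := by
    obtain ⟨a, b, hne, h⟩ := Finite.exists_ne_map_eq_of_infinite
      fun n : ℕ => (α n : MulAut G ⧸ (MulAut.conj : G →* MulAut G).range)
    rcases lt_or_gt_of_ne hne with hlt | hlt
    · exact ⟨a, b, hlt, h⟩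
    · exact ⟨b, a, hlt, h.symm⟩
  obtain ⟨g, hg⟩ := QuotientGroup.eq.1 hα
  refine ⟨j, k, hjk, φ j g, fun x => ?_⟩
  have hkj : φ j (g * x * g⁻¹) = φ k x :=
    DFunLike.congr_fun (show α j * MulAut.conj g = α k by rw [hg, mul_inv_cancel_left]) x
  rw [← hkj, map_mul, map_mul, map_inv]

theorem not_isOfFinOrder_of_smul_ssubset (ht : t • C ⊂ C) : ¬ IsOfFinOrder t :=
  injective_pow_iff_not_isOfFinOrder.1 fun _ _ hij =>
    (strictAnti_pow_smul ht).injective (congrArg (· • C) hij)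

theorem IsVertex.mem_of_smul_ssubset (hv : IsVertex T v) (htv : t • v = v)
    (ht : t • C ⊂ C) (hC : C.Nonempty) (hD : D ∈ T)
    (hfin : (MulAction.stabilizer G D : Set G).Finite) (hCD : C ⊆ D) : D ∈ v := by
  by_contra hDv
  obtain ⟨x, hx⟩ := hC
  have hmem (i : ℕ) : (t ^ i)⁻¹ • Dᶜ ∈ {X ∈ v | x ∉ X} := by
    constructor
    · rw [← Set.mem_smul_set_iff_inv_smul_mem, pow_smul_eq_self htv i]
      exact (hv.compl_mem_iff D hD).2 hDv
    · rw [Set.smul_set_compl, Set.notMem_compl_iff, Set.mem_smul_set_iff_inv_smul_mem, inv_inv]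
      exact hCD (pow_smul_subset ht.subset i (Set.smul_mem_smul_set hx))
  refine Set.infinite_of_injective_forall_mem (fun i j hij => ?_) hmem (hv.finite x)
  have hfix : (t ^ j * (t ^ i)⁻¹) • D = D := by
    rw [← compl_inj_iff, ← Set.smul_set_compl, mul_smul, show (t ^ i)⁻¹ • Dᶜ = _ from hij,
      smul_inv_smul]
  have hzpow : t ^ j * (t ^ i)⁻¹ = t ^ ((j : ℤ) - i) := by
    rw [zpow_sub, zpow_natCast, zpow_natCast]
  obtain ⟨n, hn, hpow⟩ := isOfFinOrder_iff_zpow_eq_one.1 (isOfFinOrder_of_smul_eq hfin hfix)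
  rw [hzpow, ← zpow_mul] at hpow
  by_contra hne
  exact not_isOfFinOrder_of_smul_ssubset ht
    (isOfFinOrder_iff_zpow_eq_one.2 ⟨_, mul_ne_zero (by omega) hn, hpow⟩)

/-- Otherwise some power `t` of `g` translates an edge `C` of `E`. The axis of `t` is collapsed to
`v`, so that `v` is determined by `C`; hence the stabilizer of `C` fixes `v` and commutes with `t`,
contrary to `not_smul_ssubset_of_mem_edgeCentralizer`. -/
theorem isOfFinOrder_of_commute_stabilizer (hco : CoHopfian G) (hE : IsTreeSet E)
    (hax : HasAxes E) (hT : IsTreeSet T) (hTE : T ⊆ E)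
    (hfin : ∀ X ∈ T, (MulAction.stabilizer G X : Set G).Finite) (hv : IsVertex T v)
    (hgv : g • v = v) (hcomm : ∀ a : G, a • v = v → Commute a g) : IsOfFinOrder g := by
  by_contra hg
  obtain ⟨C, hC, n, ht⟩ := hax g hg
  have htv := pow_smul_eq_self hgv n
  have hCv : ∀ D ∈ T, C ⊆ D → D ∈ v := fun D hD =>
    hv.mem_of_smul_ssubset htv ht (hE.nonempty C hC) hD (hfin D hD)
  have hCcv : ∀ D ∈ T, Cᶜ ⊆ D → D ∈ v := fun D hD =>
    hv.mem_of_smul_ssubset (inv_smul_eq_iff.2 htv.symm) (inv_smul_compl_ssubset_compl ht)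
      (hE.nonempty _ (hE.compl_mem C hC)) hD (hfin D hD)
  have hmem (D : Set G) : D ∈ v ↔ D ∈ T ∧ (C ⊆ D ∨ Cᶜ ⊆ D) := by
    refine ⟨fun hD => ?_, fun ⟨hD, h⟩ => h.elim (hCv D hD) (hCcv D hD)⟩
    have hDT := hv.subset hD
    have hDc : Dᶜ ∉ v := fun h => (hv.compl_mem_iff D hDT).1 h hD
    rcases hE.nested C hC D (hTE hDT) with h | h | h | h
    · exact ⟨hDT, Or.inl h⟩
    · exact absurd (hCv _ (hT.compl_mem D hDT) h) hDc
    · exact ⟨hDT, Or.inr h⟩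
    · exact absurd (hCcv _ (hT.compl_mem D hDT) h) hDc
  refine not_smul_ssubset_of_mem_edgeCentralizer hco hE hC ?_ ht
  rw [mem_edgeCentralizer_iff]
  intro a ha
  refine (hcomm a ?_).pow_right n
  ext D
  rw [Set.mem_smul_set_iff_inv_smul_mem, hmem, hmem, hT.smul_mem_iff, Set.subset_smul_set_iff,
    Set.subset_smul_set_iff, inv_inv, Set.smul_set_compl, ha]

theorem IsTreeSet.smul_eq_of_commute (hT : IsTreeSet T)
    (hfin : ∀ X ∈ T, (MulAction.stabilizer G X : Set G).Finite) (hv : IsVertex T v)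
    (hz : ¬ IsOfFinOrder z) (hzv : z • v = v) (hgz : Commute g z) : g • v = v := by
  by_contra hne
  obtain ⟨D, hD, -, hfix⟩ :=
    hT.exists_eq_terminus_compl_and_smul_eq hv (hT.isVertex_smul hv g) (Ne.symm hne)
  refine hz (isOfFinOrder_of_smul_eq (hfin D hD) (hfix z hzv ?_))
  rw [smul_smul, ← hgz.eq, mul_smul, hzv]

variable (hO : IsTreeSet (edgeOrbit C))
  (hfin : ∀ X ∈ edgeOrbit C, (MulAction.stabilizer G X : Set G).Finite)
  (hz : ¬ IsOfFinOrder z)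
  (hzu : z • terminus (edgeOrbit C) Cᶜ = terminus (edgeOrbit C) Cᶜ)
  (htrans : ∃ g : G, g • C ⊂ C)
include hO hfin hz hzu htrans

theorem not_stabilizer_terminus_le :
    ¬ MulAction.stabilizer G (terminus (edgeOrbit C) C) ≤ MulAction.stabilizer G C := by
  intro hle
  have hC := mem_edgeOrbit C
  obtain ⟨g, hg⟩ := htrans
  obtain ⟨X, hX, -, hXC, heq⟩ := hO.exists_subset_ssubset_terminus_eq hC (hO.smul_mem g C hC) hg
  obtain ⟨k, rfl | rfl⟩ := hX
  · have hfix : (MulAut.conj k z) • C = C := hle <| by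
      rw [MulAction.mem_stabilizer_iff, heq, MulAut.conj_apply, ← hO.smul_terminus_compl,
        smul_smul, inv_mul_cancel_right, mul_smul, hzu]
    exact hz ((MulAut.conj k).injective.isOfFinOrder_iff (f := (MulAut.conj k).toMonoidHom) |>.1
      (isOfFinOrder_of_smul_eq (hfin C hC) hfix))
  · rw [← Set.smul_set_compl, _root_.compl_compl, ← hO.smul_terminus] at heq
    have hkC : k • C = C := hle heq.symm
    rw [Set.smul_set_compl, hkC] at hXC
    exact hO.not_compl_subset hC hXC.subset

theorem smul_terminus_eq_of_commute_stabilizer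
    (hcomm : ∀ b : G, b • terminus (edgeOrbit C) C = terminus (edgeOrbit C) C → Commute b h) :
    h • terminus (edgeOrbit C) C = terminus (edgeOrbit C) C := by
  by_contra hne
  have hw := hO.isVertex_terminus (mem_edgeOrbit C)
  obtain ⟨D, hD, -, hfix⟩ :=
    hO.exists_eq_terminus_compl_and_smul_eq hw (hO.isVertex_smul hw h) (Ne.symm hne)
  have hwD : MulAction.stabilizer G (terminus (edgeOrbit C) C) ≤ MulAction.stabilizer G D :=
    fun b hb => hfix b hb (by rw [smul_smul, hcomm b hb, mul_smul, hb])
  have hCD := stabilizer_eq_of_le hD (hfin D hD)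
    ((hO.stabilizer_le_stabilizer_terminus C).trans hwD)
  exact not_stabilizer_terminus_le hO hfin hz hzu htrans (hCD ▸ hwD)

/-- The hypotheses `hu` and `hw` express that conjugation by `g` carries the Dehn twist along `C` by
`z ^ j` to the Dehn twist by `z ^ k`. -/
theorem not_isOfFinOrder_and_smul_eq_of_twists {j k : ℕ} (hjk : j < k)
    (hu : ∀ a : G, a • terminus (edgeOrbit C) Cᶜ = terminus (edgeOrbit C) Cᶜ → Commute a g)
    (hw : ∀ b : G, b • terminus (edgeOrbit C) C = terminus (edgeOrbit C) C →
      Commute b ((z ^ k)⁻¹ * g * z ^ j)) :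
    ¬ IsOfFinOrder g ∧ g • terminus (edgeOrbit C) Cᶜ = terminus (edgeOrbit C) Cᶜ := by
  have hC := mem_edgeOrbit C
  have huV := hO.isVertex_terminus (hO.compl_mem C hC)
  have hwV := hO.isVertex_terminus hC
  have hgz : Commute g z := (hu z hzu).symm
  have hgu := hO.smul_eq_of_commute hfin huV hz hzu hgz
  refine ⟨fun hg => ?_, hgu⟩
  set h := (z ^ k)⁻¹ * g * z ^ j with hh
  have hhu : h • terminus (edgeOrbit C) Cᶜ = terminus (edgeOrbit C) Cᶜ := by
    have hpow := pow_smul_eq_self hzu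
    rw [hh, mul_smul, mul_smul, hpow, hgu, inv_smul_eq_iff, hpow]
  have hhw := smul_terminus_eq_of_commute_stabilizer hO hfin hz hzu htrans hw
  have hne : terminus (edgeOrbit C) Cᶜ ≠ terminus (edgeOrbit C) C := fun heq =>
    hO.notMem_terminus_compl hC (heq ▸ mem_terminus hC)
  obtain ⟨D, hD, -, hfix⟩ := hO.exists_eq_terminus_compl_and_smul_eq huV hwV hne
  have hhfin := isOfFinOrder_of_smul_eq (hfin D hD) (hfix h hhu hhw)
  have hcomm : Commute h g := ((hgz.symm.pow_left k).inv_left.mul_left (.refl g)).mul_left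
    (hgz.symm.pow_left j)
  have hpow : h⁻¹ * g = z ^ (k - j) := by
    rw [inv_mul_eq_iff_eq_mul, hh, mul_assoc, ← pow_add, Nat.add_sub_cancel' hjk.le, mul_assoc,
      (hgz.pow_right k).eq, inv_mul_cancel_left]
  have hzfin := hpow ▸ hcomm.inv_left.isOfFinOrder_mul hhfin.inv hg
  exact hz ((isOfFinOrder_pow.1 hzfin).resolve_right (by omega))

end TwistConjugacy

section FiniteEdgeCentralizer

open scoped Pointwise

variable {G : Type*} [Group G] {E : Set (Set G)} {C : Set G} {z : G}

theorem not_smul_terminus_eq_of_outFinite (hco : CoHopfian G) (hout : OutFinite G)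
    (hE : IsTreeSet E) (hax : HasAxes E) (htrans : ∃ g : G, g • C ⊂ C)
    (hfin : ∀ X ∈ E, (MulAction.stabilizer G X : Set G).Finite) (hC : C ∈ E)
    (hz : z ∈ edgeCentralizer C) (hz' : ¬ IsOfFinOrder z) :
    z • terminus (edgeOrbit C) Cᶜ ≠ terminus (edgeOrbit C) Cᶜ := by
  intro hzu
  have hO := hE.edgeOrbit hC
  have hsub := hE.edgeOrbit_subset hC
  have hfinO := fun X hX => hfin X (hsub hX)
  have hinv := smul_ne_compl_of_mem_edgeCentralizer hco hE hC (hfin C hC) hz hz'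
  choose φ hφ hφu hφw using fun n =>
    exists_injective_twist hO (pow_mem hz n) (pow_smul_eq_self hzu n) hinv
  obtain ⟨j, k, hjk, g, hg⟩ := hout.exists_lt_eq_conj hco φ hφ
  have hu : ∀ a : G, a • terminus (edgeOrbit C) Cᶜ = terminus (edgeOrbit C) Cᶜ →
      Commute a g := fun a ha => by
    have := hg a
    rwa [hφu k a ha, hφu j a ha, eq_mul_inv_iff_mul_eq] at this
  have hw : ∀ b : G, b • terminus (edgeOrbit C) C = terminus (edgeOrbit C) C →
      Commute b ((z ^ k)⁻¹ * g * z ^ j) := fun b hb => by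
    have := hg b
    rw [hφw k b hb, hφw j b hb] at this
    calc b * ((z ^ k)⁻¹ * g * z ^ j)
        = (z ^ k)⁻¹ * (z ^ k * b * (z ^ k)⁻¹) * g * z ^ j := by group
      _ = (z ^ k)⁻¹ * g * z ^ j * b := by rw [this]; group
  obtain ⟨hgfin, hgu⟩ :=
    not_isOfFinOrder_and_smul_eq_of_twists hO hfinO hz' hzu htrans hjk hu hw
  exact hgfin (isOfFinOrder_of_commute_stabilizer hco hE hax hO hsub hfinO
    (hO.isVertex_terminus (hO.compl_mem C (mem_edgeOrbit C))) hgu hu)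

theorem finite_edgeCentralizer (hvf : VirtuallyFree G) (hco : CoHopfian G) (hout : OutFinite G)
    (hE : IsTreeSet E) (hax : HasAxes E) (htrans : ∀ C ∈ E, ∃ g : G, g • C ⊂ C) (hC : C ∈ E) :
    (edgeCentralizer C : Set G).Finite := by
  by_contra hinf
  have hfin : ∀ X ∈ E, (MulAction.stabilizer G X : Set G).Finite :=
    fun X hX => hax.finite_stabilizer hvf hE hX
  obtain ⟨z, hzC, hz⟩ := hvf.exists_not_isOfFinOrder hinf
  obtain ⟨D, hD, hzD, hzu⟩ :=
    exists_smul_terminus_eq_of_mem_edgeCentralizer hco hE hC hfin hzC hz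
  have hDE := hE.edgeOrbit_subset hC hD
  rw [← edgeOrbit_eq_of_mem hD] at hzu
  exact not_smul_terminus_eq_of_outFinite hco hout hE hax (htrans D hDE) hfin hDE hzD hz hzu

end FiniteEdgeCentralizer

/-! ### Finite subgroups -/

section FiniteSubgroups

open scoped Pointwise

variable {G : Type*} [Group G] {E : Set (Set G)} {Q : Subgroup G} {C D : Set G} {x y : G}

theorem ncard_smul_inter (hx : x ∈ Q) : (x • D ∩ Q).ncard = (D ∩ Q).ncard := by
  conv_lhs => rw [← smul_coe_set hx, ← Set.smul_set_inter, Set.ncard_smul_set]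

theorem ncard_inter_add_ncard_compl_inter (hQ : (Q : Set G).Finite) (D : Set G) :
    (D ∩ Q).ncard + (Dᶜ ∩ Q).ncard = (Q : Set G).ncard := by
  rw [Set.inter_comm, ← Set.sdiff_eq_compl_inter]
  exact Set.ncard_inter_add_ncard_sdiff_eq_ncard _ _ hQ

theorem not_smul_ssubset_smul (hQ : (Q : Set G).Finite) (hx : x ∈ Q) (hy : y ∈ Q) :
    ¬ x • D ⊂ y • D := fun h => by
  have := hQ.to_subtype
  refine not_isOfFinOrder_of_smul_ssubset (C := D) (t := y⁻¹ * x) ?_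
    (Q.subtype.isOfFinOrder (isOfFinOrder_of_finite (⟨_, mul_mem (inv_mem hy) hx⟩ : Q)))
  rwa [← smul_set_ssubset_smul_set_iff (g := y), mul_smul, smul_inv_smul]

/-- The sides `D` of edges which win the vote among the elements of `Q`, a tie being broken in
favour of `D` if `D` contains the complement of one of its translates by `Q`. Unless `Q` preserves
an edge, this is a vertex fixed by `Q`. -/
def medianVertex (E : Set (Set G)) (Q : Subgroup G) : Set (Set G) :=
  {D ∈ E | (Dᶜ ∩ Q).ncard < (D ∩ Q).ncard ∨
    (Dᶜ ∩ Q).ncard = (D ∩ Q).ncard ∧ ∃ q ∈ Q, (q • D)ᶜ ⊂ D}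

theorem IsTreeSet.smul_mem_medianVertex (hE : IsTreeSet E) (hx : x ∈ Q)
    (hD : D ∈ medianVertex E Q) : x • D ∈ medianVertex E Q := by
  refine ⟨hE.smul_mem x D hD.1, ?_⟩
  rw [← Set.smul_set_compl, ncard_smul_inter hx, ncard_smul_inter hx]
  refine hD.2.imp_right (And.imp_right fun ⟨q, hq, hqD⟩ =>
    ⟨x * q * x⁻¹, mul_mem (mul_mem hx hq) (inv_mem hx), ?_⟩)
  rwa [smul_smul, inv_mul_cancel_right, mul_smul, ← Set.smul_set_compl,
    smul_set_ssubset_smul_set_iff]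

theorem IsTreeSet.smul_medianVertex (hE : IsTreeSet E) (hx : x ∈ Q) :
    x • medianVertex E Q = medianVertex E Q := by
  ext D
  rw [Set.mem_smul_set_iff_inv_smul_mem]
  exact ⟨fun h => smul_inv_smul x D ▸ hE.smul_mem_medianVertex hx h,
    hE.smul_mem_medianVertex (inv_mem hx)⟩

theorem IsTreeSet.exists_compl_smul_ssubset (hE : IsTreeSet E) (hQ : (Q : Set G).Finite)
    (hD : D ∈ E) (hx : x ∈ Q) (hxD : x • D ≠ D) (hxDc : x • D ≠ Dᶜ) :
    (x • D)ᶜ ⊂ D ∨ (x • Dᶜ)ᶜ ⊂ Dᶜ := by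
  have hlt := not_smul_ssubset_smul (D := D) hQ hx (one_mem Q)
  have hgt := not_smul_ssubset_smul (D := D) hQ (one_mem Q) hx
  rw [one_smul] at hlt hgt
  rw [Set.smul_set_compl, _root_.compl_compl, compl_ssubset_comm]
  rcases hE.nested _ (hE.smul_mem x D hD) D hD with h | h | h | h
  · exact absurd (h.ssubset_of_ne hxD) hlt
  · exact Or.inr (h.ssubset_of_ne hxDc)
  · exact Or.inl ((Set.compl_subset_comm.1 h).ssubset_of_ne hxDc.symm)
  · exact absurd ((Set.compl_subset_compl.1 h).ssubset_of_ne hxD.symm) hgt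

theorem IsTreeSet.isVertex_medianVertex (hE : IsTreeSet E) (hQ : (Q : Set G).Finite)
    (h : ∀ D ∈ E, ∃ q ∈ Q, q • D ≠ D ∧ q • D ≠ Dᶜ) : IsVertex E (medianVertex E Q) where
  subset D hD := hD.1
  compl_mem_iff D hD := by
    have hnot : ¬ ((∃ q ∈ Q, (q • D)ᶜ ⊂ D) ∧ ∃ q ∈ Q, (q • Dᶜ)ᶜ ⊂ Dᶜ) := by
      rintro ⟨⟨q, hq, hqD⟩, r, hr, hrD⟩
      rw [Set.smul_set_compl, _root_.compl_compl] at hrD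
      exact not_smul_ssubset_smul hQ hr hq (hrD.trans (compl_ssubset_comm.1 hqD))
    obtain ⟨q, hq, hqD, hqDc⟩ := h D hD
    have hor : (∃ q ∈ Q, (q • D)ᶜ ⊂ D) ∨ ∃ q ∈ Q, (q • Dᶜ)ᶜ ⊂ Dᶜ :=
      (hE.exists_compl_smul_ssubset hQ hD hq hqD hqDc).imp (⟨q, hq, ·⟩) (⟨q, hq, ·⟩)
    simp only [medianVertex, Set.mem_sep_iff, _root_.compl_compl, hD, hE.compl_mem D hD, true_and]
    grind
  mem_of_subset D hD X hX hDX := by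
    refine ⟨hX, ?_⟩
    have hle : (D ∩ Q).ncard ≤ (X ∩ Q).ncard :=
      Set.ncard_le_ncard (Set.inter_subset_inter_left _ hDX) (hQ.inter_of_right X)
    have hcD := ncard_inter_add_ncard_compl_inter hQ D
    have hcX := ncard_inter_add_ncard_compl_inter hQ X
    rcases hD.2 with hlt | ⟨heq, q, hq, hqD⟩
    · exact Or.inl (by omega)
    · rcases hle.lt_or_eq with hlt | hle
      · exact Or.inl (by omega)
      · refine Or.inr ⟨by omega, q, hq, ?_⟩
        exact (Set.compl_subset_compl.2 (Set.smul_set_mono hDX)).trans_ssubset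
          (hqD.trans_subset hDX)
  finite x := by
    refine (hQ.biUnion fun q _ => hE.finite q x).subset fun D ⟨hD, hxD⟩ => ?_
    have hcD := ncard_inter_add_ncard_compl_inter hQ D
    have hpos : 0 < (Q : Set G).ncard := (Set.ncard_pos hQ).2 ⟨1, one_mem Q⟩
    have hne : (D ∩ Q).ncard ≠ 0 := by
      have := hD.2
      omega
    obtain ⟨q, hqD, hq⟩ := Set.nonempty_of_ncard_ne_zero hne
    exact Set.mem_biUnion hq ⟨hD.1, hqD, hxD⟩

theorem IsTreeSet.exists_isVertex_or_exists_mem_of_finite (hE : IsTreeSet E)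
    (hQ : (Q : Set G).Finite) :
    (∃ v, IsVertex E v ∧ ∀ q ∈ Q, q • v = v) ∨ ∃ D ∈ E, ∀ q ∈ Q, q • D = D ∨ q • D = Dᶜ := by
  refine or_iff_not_imp_right.2 fun h => ?_
  push Not at h
  exact ⟨_, hE.isVertex_medianVertex hQ h, fun q hq => hE.smul_medianVertex hq⟩

/-- The vertex of `E` given by the sets containing `x`. -/
def principalVertex (E : Set (Set G)) (x : G) : Set (Set G) := {D ∈ E | x ∈ D}

theorem IsTreeSet.isVertex_principalVertex (hE : IsTreeSet E) (x : G) :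
    IsVertex E (principalVertex E x) where
  subset _ h := h.1
  compl_mem_iff D hD := ⟨fun h h' => h.2 h'.2, fun h => ⟨hE.compl_mem D hD, fun h' => h ⟨hD, h'⟩⟩⟩
  mem_of_subset _ hD _ hX h := ⟨hX, h hD.2⟩
  finite y := (hE.finite x y).subset fun _ h => ⟨h.1.1, h.1.2, h.2⟩

theorem IsTreeSet.exists_finite_forall_exists_smul_mem (hE : IsTreeSet E) (hfg : Group.FG G) :
    ∃ R ⊆ E, R.Finite ∧ ∀ D ∈ E, ∃ g : G, g • D ∈ R := by
  obtain ⟨S, hS⟩ := hfg.out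
  refine ⟨⋃ s ∈ S, {D ∈ E | 1 ∈ D ∧ s ∉ D} ∪ {D ∈ E | s ∈ D ∧ 1 ∉ D}, by
    simp only [Set.iUnion_subset_iff, Set.union_subset_iff]
    exact fun _ _ => ⟨Set.sep_subset _ _, Set.sep_subset _ _⟩,
    S.finite_toSet.biUnion fun s _ => (hE.finite 1 s).union (hE.finite s 1), fun D hD => ?_⟩
  by_contra! hno
  have hgen : ∀ s ∈ S, ∀ g : G, g ∈ D ↔ g * s ∈ D := fun s hs g => by
    by_contra hn
    refine hno g⁻¹ (Set.mem_biUnion hs ?_)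
    have h₁ : (1 : G) ∈ g⁻¹ • D ↔ g ∈ D := by simp [Set.mem_smul_set_iff_inv_smul_mem]
    have hs : s ∈ g⁻¹ • D ↔ g * s ∈ D := by simp [Set.mem_smul_set_iff_inv_smul_mem]
    have := hE.smul_mem g⁻¹ D hD
    simp only [Set.mem_union, Set.mem_sep_iff, h₁, hs]
    tauto
  have hall (h : G) : ∀ g : G, g ∈ D ↔ g * h ∈ D := by
    have hh : h ∈ Subgroup.closure (S : Set G) := hS ▸ Subgroup.mem_top h
    induction hh using Subgroup.closure_induction with
    | mem x hx => exact hgen x hx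
    | one => simp
    | mul x y _ _ hx hy => exact fun g => by rw [hx g, hy (g * x), mul_assoc]
    | inv x _ hx => exact fun g => by rw [hx (g * x⁻¹), inv_mul_cancel_right]
  obtain ⟨x, hx⟩ := hE.nonempty D hD
  obtain ⟨y, hy⟩ := hE.nonempty Dᶜ (hE.compl_mem D hD)
  exact hy (mul_inv_cancel_left x y ▸ (hall (x⁻¹ * y) x).1 hx)

theorem HasAxes.exists_finite_conj_mem (hax : HasAxes E) (hvf : VirtuallyFree G)
    (hfg : Group.FG G) (hE : IsTreeSet E) :
    ∃ B : Set G, B.Finite ∧ ∀ Q : Subgroup G, (Q : Set G).Finite →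
      ∃ g : G, ∀ q ∈ Q, g * q * g⁻¹ ∈ B := by
  obtain ⟨R, hRE, hR, hRo⟩ := hE.exists_finite_forall_exists_smul_mem hfg
  refine ⟨(MulAction.stabilizer G (principalVertex E 1) : Set G) ∪ ⋃ D ∈ R,
    (MulAction.stabilizer G (terminus E D) : Set G) ∪ {y : G | y • D = D ∨ y • D = Dᶜ},
    (hax.finite_stabilizer_of_isVertex hvf hE (hE.isVertex_principalVertex 1)).union
      (hR.biUnion fun D hD => ?_), fun Q hQ => ?_⟩
  · exact (hax.finite_stabilizer_of_isVertex hvf hE (hE.isVertex_terminus (hRE hD))).union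
      (finite_setOf_smul_eq_or_eq_compl (hax.finite_stabilizer hvf hE (hRE hD)))
  have conj_mem {α : Type _} [MulAction G α] {a b : α} (g : G) {q : G} (h : q • a = b) :
      (g * q * g⁻¹) • g • a = g • b := by
    rw [smul_smul, inv_mul_cancel_right, mul_smul, h]
  rcases hE.exists_isVertex_or_exists_mem_of_finite hQ with ⟨v, hv, hQv⟩ | ⟨D, hD, hQD⟩
  · by_cases hne : v = principalVertex E 1
    · exact ⟨1, fun q hq => Or.inl (by simpa [← hne] using hQv q hq)⟩
    · obtain ⟨D, hD, rfl⟩ := hE.exists_eq_terminus_compl hv (hE.isVertex_principalVertex 1) hne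
      obtain ⟨g, hg⟩ := hRo _ (hE.compl_mem D hD.1)
      refine ⟨g, fun q hq => Or.inr (Set.mem_biUnion hg (Or.inl ?_))⟩
      rw [SetLike.mem_coe, MulAction.mem_stabilizer_iff, ← hE.smul_terminus]
      exact conj_mem g (hQv q hq)
  · obtain ⟨g, hg⟩ := hRo D hD
    refine ⟨g, fun q hq => Or.inr (Set.mem_biUnion hg (Or.inr ?_))⟩
    rw [Set.mem_ofPred_eq, ← Set.smul_set_compl]
    exact (hQD q hq).imp (conj_mem g) (conj_mem g)

end FiniteSubgroups

/-! ### Homomorphisms with finite centralizers on edge stabilizers -/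

section FiniteCentralizers

open scoped Pointwise

variable {G N : Type*} [Group G] [Group N] {E : Set (Set G)} {v w : Set (Set G)}
  {Φ : Set (G →* N)} {B : Set N}

/-- The elements of `G` with only finitely many images under the homomorphisms in `Φ`. -/
def finiteImages (Φ : Set (G →* N)) : Subgroup G where
  carrier := {x | ((fun φ : G →* N => φ x) '' Φ).Finite}
  one_mem' := (Set.finite_singleton 1).subset (by simp)
  mul_mem' {x y} hx hy := (hx.mul hy).subset <| by
    rintro _ ⟨φ, hφ, rfl⟩
    exact ⟨φ x, ⟨φ, hφ, rfl⟩, φ y, ⟨φ, hφ, rfl⟩, (map_mul φ x y).symm⟩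
  inv_mem' {x} hx := hx.inv.subset <| by
    rintro _ ⟨φ, hφ, rfl⟩
    exact ⟨φ, hφ, by simp⟩

theorem finite_image_of_finite_conj {K : Set G} (hK : K.Finite) (g : (G →* N) → N)
    (hKΦ : ∀ k ∈ K, k ∈ finiteImages Φ)
    (hconj : ∀ k ∈ K, ((fun φ : G →* N => g φ * φ k * (g φ)⁻¹) '' Φ).Finite)
    (hc : ∀ φ ∈ Φ, (Set.centralizer (φ '' K)).Finite) : (g '' Φ).Finite := by
  have := hK.to_subtype
  let F : (G →* N) → K → N × N := fun φ k => (φ k, g φ * φ k * (g φ)⁻¹)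
  have hF : (F '' Φ).Finite := by
    refine (Set.Finite.pi fun k : K => (hKΦ k k.2).prod (hconj k k.2)).subset ?_
    rintro _ ⟨φ, hφ, rfl⟩ k -
    exact ⟨⟨φ, hφ, rfl⟩, ⟨φ, hφ, rfl⟩⟩
  have hfiber : ∀ φ₀ ∈ Φ, (g '' {φ ∈ Φ | F φ = F φ₀}).Finite := fun φ₀ hφ₀ => by
    refine ((hc φ₀ hφ₀).image (g φ₀ * ·)).subset ?_
    rintro _ ⟨φ, ⟨-, hφ⟩, rfl⟩
    refine ⟨(g φ₀)⁻¹ * g φ, ?_, mul_inv_cancel_left _ _⟩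
    rintro _ ⟨k, hk, rfl⟩
    obtain ⟨hφk, hconjk⟩ : φ k = φ₀ k ∧ g φ * φ k * (g φ)⁻¹ = g φ₀ * φ₀ k * (g φ₀)⁻¹ :=
      Prod.ext_iff.1 (congrFun hφ ⟨k, hk⟩)
    rw [hφk, mul_inv_eq_iff_eq_mul] at hconjk
    rw [mul_assoc _ (g φ), hconjk]
    group
  refine (hF.biUnion (t := fun p => g '' {φ ∈ Φ | F φ = p}) ?_).subset ?_
  · rintro _ ⟨φ₀, hφ₀, rfl⟩
    exact hfiber φ₀ hφ₀
  · rintro _ ⟨φ, hφ, rfl⟩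
    exact Set.mem_biUnion ⟨φ, hφ, rfl⟩ ⟨φ, ⟨hφ, rfl⟩, rfl⟩

theorem finite_centralizer_image {M : Type*} [Group M] (e : M ≃* N) {S : Set M}
    (hS : (Set.centralizer S).Finite) : (Set.centralizer (e '' S)).Finite := by
  refine (hS.preimage e.symm.injective.injOn).subset fun c hc m hm => ?_
  exact e.injective (by simpa using hc (e m) ⟨m, hm, rfl⟩)

theorem exists_finite_forall_injective_of_finite (hΦ : Φ.Finite) :
    ∃ F : Set G, F.Finite ∧ 1 ∉ F ∧ ∀ φ ∈ Φ, (∀ f ∈ F, φ f ≠ 1) → Function.Injective φ := by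
  have hex : ∀ φ : G →* N, ¬ Function.Injective φ → ∃ f, φ f = 1 ∧ f ≠ 1 := fun φ hφ => by
    rw [injective_iff_map_eq_one] at hφ
    push Not at hφ
    exact hφ
  choose! f hf hf₁ using hex
  refine ⟨f '' {φ ∈ Φ | ¬ Function.Injective φ}, (hΦ.sep _).image f, ?_, fun φ hφ hF => ?_⟩
  · rintro ⟨φ, ⟨-, hφ⟩, h⟩
    exact hf₁ φ hφ h
  · by_contra hinj
    exact hF (f φ) ⟨φ, ⟨hφ, hinj⟩, rfl⟩ (hf φ hinj)

section ConjugateIntoFinite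

variable (hB : B.Finite)
  (hconj : ∀ Q : Subgroup N, (Q : Set N).Finite → ∃ g : N, ∀ q ∈ Q, g * q * g⁻¹ ∈ B)
include hB hconj

theorem le_finiteImages_of_le {K L : Subgroup G} (hL : (L : Set G).Finite) (hKL : K ≤ L)
    (hK : K ≤ finiteImages Φ) (hc : ∀ φ ∈ Φ, (Set.centralizer (φ '' (K : Set G))).Finite) :
    L ≤ finiteImages Φ := by
  have hg : ∀ φ : G →* N, ∃ g : N, ∀ l ∈ L, g * φ l * g⁻¹ ∈ B := fun φ => by
    obtain ⟨g, hg⟩ := hconj (L.map φ) (hL.image φ)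
    exact ⟨g, fun l hl => hg _ (Subgroup.mem_map_of_mem φ hl)⟩
  choose g hg using hg
  have hfin : (g '' Φ).Finite := by
    refine finite_image_of_finite_conj (hL.subset hKL) g hK (fun k hk => hB.subset ?_) hc
    rintro _ ⟨φ, -, rfl⟩
    exact hg φ k (hKL hk)
  refine fun l hl => ((hfin.inv.mul hB).mul hfin).subset ?_
  rintro _ ⟨φ, hφ, rfl⟩
  have hgφ : g φ ∈ g '' Φ := ⟨φ, hφ, rfl⟩
  have := Set.mul_mem_mul (Set.mul_mem_mul (Set.inv_mem_inv.2 hgφ) (hg φ l hl)) hgφ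
  simpa only [mul_assoc, inv_mul_cancel_left, inv_mul_cancel, mul_one] using this

variable (hE : IsTreeSet E) (hfin : ∀ v, IsVertex E v → (MulAction.stabilizer G v : Set G).Finite)
  (hc : ∀ φ ∈ Φ, ∀ D ∈ E, (Set.centralizer (φ '' (MulAction.stabilizer G D : Set G))).Finite)
include hE hfin hc

theorem IsPath.stabilizer_le_finiteImages {L : List (Set G)} (h : IsPath E v L w)
    (hv : MulAction.stabilizer G v ≤ finiteImages Φ) :
    MulAction.stabilizer G w ≤ finiteImages Φ := by
  induction L generalizing v with
  | nil => exact (show v = w from h) ▸ hv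
  | cons D L ih =>
    refine ih h.2.2 (le_finiteImages_of_le hB hconj (hfin _ (hE.isVertex_terminus h.1))
      (hE.stabilizer_le_stabilizer_terminus D) (le_trans ?_ hv) fun φ hφ => hc φ hφ D h.1)
    rw [h.2.1, ← stabilizer_compl]
    exact hE.stabilizer_le_stabilizer_terminus Dᶜ

theorem finiteImages_eq_top (hv : IsVertex E v)
    (hvΦ : MulAction.stabilizer G v ≤ finiteImages Φ) : finiteImages Φ = ⊤ := by
  refine eq_top_iff.2 fun s _ => ?_
  obtain ⟨L, hL⟩ := hE.exists_isPath hv (hE.isVertex_smul hv s)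
  have hsv := hL.stabilizer_le_finiteImages hB hconj hE hfin hc hvΦ
  rcases L with _ | ⟨D, L⟩
  · exact hvΦ (show v = s • v from hL).symm
  have hD : MulAction.stabilizer G D ≤ MulAction.stabilizer G v := by
    rw [hL.2.1, ← stabilizer_compl]
    exact hE.stabilizer_le_stabilizer_terminus Dᶜ
  refine finite_image_of_finite_conj ((hfin v hv).subset hD) (fun φ => φ s)
    (fun k hk => hvΦ (hD hk)) (fun k hk => ?_) fun φ hφ => hc φ hφ D hL.1
  have hsk : ((fun φ : G →* N => φ (s * k * s⁻¹)) '' Φ).Finite := hsv <| by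
    rw [MulAction.mem_stabilizer_iff, smul_smul, inv_mul_cancel_right, mul_smul, hD hk]
  simpa only [map_mul, map_inv] using hsk

theorem finite_of_finite_centralizer (hfg : Group.FG G) (hv : IsVertex E v)
    (hvB : ∀ φ ∈ Φ, ∀ h : G, h • v = v → φ h ∈ B) : Φ.Finite := by
  have htop := finiteImages_eq_top hB hconj hE hfin hc hv fun h hh =>
    hB.subset (by
      rintro _ ⟨φ, hφ, rfl⟩
      exact hvB φ hφ h hh)
  obtain ⟨S, hS⟩ := hfg.out
  have hF : ((fun (φ : G →* N) (s : S) => φ s) '' Φ).Finite := by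
    have hmem : ∀ s : S, s.1 ∈ finiteImages Φ := fun s => htop ▸ Subgroup.mem_top s.1
    refine (Set.Finite.pi hmem).subset ?_
    rintro _ ⟨φ, hφ, rfl⟩ s -
    exact ⟨φ, hφ, rfl⟩
  exact hF.of_finite_image fun φ _ ψ _ h =>
    MonoidHom.eq_of_eqOn_dense hS fun s hs => congrFun h ⟨s, hs⟩

end ConjugateIntoFinite

theorem finite_centralizer_image_of_smul {φ : G →* N} {a : G} {D : Set G}
    (h : (Set.centralizer (φ '' (MulAction.stabilizer G (a • D) : Set G))).Finite) :
    (Set.centralizer (φ '' (MulAction.stabilizer G D : Set G))).Finite := by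
  convert finite_centralizer_image (MulAut.conj (φ a)⁻¹) h using 2
  rw [MulAction.stabilizer_smul_eq_stabilizer_map_conj, Subgroup.coe_map, Set.image_image,
    Set.image_image]
  simp [mul_assoc]

theorem exists_finite_forall_injective_of_finite_centralizer (hfg : Group.FG G)
    (hE : IsTreeSet E)
    (hfin : ∀ v, IsVertex E v → (MulAction.stabilizer G v : Set G).Finite)
    (hB : B.Finite)
    (hconj : ∀ Q : Subgroup N, (Q : Set N).Finite → ∃ g : N, ∀ q ∈ Q, g * q * g⁻¹ ∈ B) :
    ∃ R ⊆ E, R.Finite ∧ ∃ F : Set G, F.Finite ∧ 1 ∉ F ∧ ∀ φ : G →* N,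
      (∀ D ∈ R, (Set.centralizer (φ '' (MulAction.stabilizer G D : Set G))).Finite) →
      (∀ f ∈ F, φ f ≠ 1) → Function.Injective φ := by
  obtain ⟨R, hRE, hR, hRo⟩ := hE.exists_finite_forall_exists_smul_mem hfg
  have hv := hE.isVertex_principalVertex 1
  set v := principalVertex E 1
  have hΦ := finite_of_finite_centralizer hB hconj hE hfin (v := v)
    (Φ := {φ | (∀ D ∈ E, (Set.centralizer (φ '' (MulAction.stabilizer G D : Set G))).Finite) ∧
      ∀ h : G, h • v = v → φ h ∈ B}) (fun φ hφ => hφ.1) hfg hv fun φ hφ => hφ.2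
  obtain ⟨F, hF, h1F, hFΦ⟩ := exists_finite_forall_injective_of_finite hΦ
  refine ⟨R, hRE, hR, F, hF, h1F, fun φ hφR hφF => ?_⟩
  obtain ⟨g, hg⟩ := hconj ((MulAction.stabilizer G v).map φ) ((hfin v hv).image φ)
  refine .of_comp (f := MulAut.conj g)
    (hFΦ ((MulAut.conj g).toMonoidHom.comp φ) ⟨fun D hD => ?_, fun h hh => ?_⟩ fun f hf => ?_)
  · obtain ⟨a, ha⟩ := hRo D hD
    have := finite_centralizer_image (MulAut.conj g) (finite_centralizer_image_of_smul (hφR _ ha))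
    rwa [Set.image_image] at this
  · exact hg _ (Subgroup.mem_map_of_mem φ hh)
  · exact (map_ne_one_iff _ (MulAut.conj g).injective).2 (hφF f hf)

end FiniteCentralizers

/-! ### Elementary embeddings of finitely presented groups -/

section Prime

variable {G : Type*} [Group G]

theorem definable_forall_mem {L : FirstOrder.Language} {M σ ι : Type*} [L.Structure M]
    {A : Set M} {I : Set ι} (hI : I.Finite) {T : ι → Set (σ → M)}
    (hT : ∀ i ∈ I, A.Definable L (T i)) : A.Definable L {x | ∀ i ∈ I, x ∈ T i} := by
  have := hI.to_subtype
  convert Set.definable_iInter_of_finite fun i : I => hT i i.2 using 1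
  ext x
  simp

theorem exists_comp_eq_lift {N σ : Type*} [Group N] {π : FreeGroup σ →* G}
    (hπ : Function.Surjective π) {S : Set (FreeGroup σ)} (hS : Subgroup.normalClosure S = π.ker)
    {x : σ → N} (hx : ∀ r ∈ S, FreeGroup.lift x r = 1) :
    ∃ φ : G →* N, φ.comp π = FreeGroup.lift x := by
  have hker : π.ker ≤ (FreeGroup.lift x).ker := hS ▸ Subgroup.normalClosure_le_normal hx
  exact ⟨π.liftOfSurjective hπ ⟨FreeGroup.lift x, hker⟩, MonoidHom.liftOfRightInverse_comp ..⟩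

theorem nonempty_elementaryEmbedding_of_forall_bijective [Group.IsFinitelyPresented G]
    {R : Set (Set G)} (hR : R.Finite) (hRfin : ∀ K ∈ R, K.Finite)
    (hcent : ∀ K ∈ R, (Set.centralizer K).Finite) {F : Set G} (hF : F.Finite) (hF₁ : 1 ∉ F)
    (hbij : ∀ φ : G →* G, (∀ K ∈ R, (Set.centralizer (φ '' K)).Finite) →
      (∀ f ∈ F, φ f ≠ 1) → Function.Bijective φ)
    {G' : Type*} [Group G'] (h : G ≅[groupLang] G') : Nonempty (G ↪ₑ[groupLang] G') := by
  obtain ⟨n, π, hπ, S, hSfin, hS⟩ := Group.IsFinitelyPresented.out (G := G)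
  choose word hword using hπ
  have image_word (ψ : FreeGroup (Fin n) →* G) (φ : G →* G) (hφ : φ.comp π = ψ) (K : Set G) :
      ψ '' (word '' K) = φ '' K := by
    simp [← hφ, Set.image_image, hword]
  let s : Fin n → G := π ∘ FreeGroup.of
  have lift_s : FreeGroup.lift s = π := by ext; simp [s]
  refine nonempty_elementaryEmbedding_of_definable (s := s)
    (T := {x | ∀ r ∈ S, x ∈ {x | FreeGroup.lift x r = 1}} ∩
      {x | ∀ K ∈ R, x ∈ {x | (Set.centralizer (FreeGroup.lift x '' (word '' K))).encard ≤
        (Set.centralizer K).ncard}} ∩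
      {x | ∀ f ∈ F, x ∈ {x | FreeGroup.lift x (word f) = 1}ᶜ})
    (fun g => ?_) ?_ ⟨⟨fun r hr => ?_, fun K hK => ?_⟩, fun f hf hf₁ => ?_⟩ ?_ h
  · obtain ⟨t, ht⟩ := exists_term_realize_eq_lift (word g) G
    exact ⟨t, by rw [ht, lift_s, hword]⟩
  · exact ((definable_forall_mem hSfin fun r _ => definable_lift_eq_one r).inter
      (definable_forall_mem hR fun K hK =>
        definable_encard_centralizer_le ((hRfin K hK).image word) _)).inter
      (definable_forall_mem hF fun f _ => (definable_lift_eq_one (word f)).compl)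
  · have : r ∈ π.ker := hS ▸ Subgroup.subset_normalClosure hr
    rwa [Set.mem_ofPred_eq, lift_s]
  · rw [Set.mem_ofPred_eq, image_word _ (MonoidHom.id G) (by rw [lift_s]; rfl),
      (hcent K hK).cast_ncard_eq]
    simp
  · rw [Set.mem_ofPred_eq, lift_s, hword] at hf₁
    exact hF₁ (hf₁ ▸ hf)
  · rintro x ⟨⟨hxS, hxR⟩, hxF⟩
    obtain ⟨φ, hφ⟩ := exists_comp_eq_lift (fun g => ⟨word g, hword g⟩) hS hxS
    have hφbij : Function.Bijective φ := hbij φ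
      (fun K hK => Set.finite_of_encard_le_coe (by
        rw [← image_word _ φ hφ]; exact hxR K hK))
      fun f hf hφf => hxF f hf (by
        rw [Set.mem_ofPred_eq, ← hφ, MonoidHom.comp_apply, hword, hφf])
    refine ⟨groupLangEquiv (MulEquiv.ofBijective φ hφbij), funext fun i => ?_⟩
    have hi := DFunLike.congr_fun hφ (FreeGroup.of i)
    rw [FreeGroup.lift_apply_of] at hi
    exact hi.symm

open scoped Pointwise in
theorem exists_finite_forall_bijective (hfg : Group.FG G) (hvf : VirtuallyFree G)
    (hco : CoHopfian G) (hout : OutFinite G) :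
    ∃ R : Set (Set G), R.Finite ∧ (∀ K ∈ R, K.Finite) ∧ (∀ K ∈ R, (Set.centralizer K).Finite) ∧
      ∃ F : Set G, F.Finite ∧ 1 ∉ F ∧ ∀ φ : G →* G,
        (∀ K ∈ R, (Set.centralizer (φ '' K)).Finite) → (∀ f ∈ F, φ f ≠ 1) →
          Function.Bijective φ := by
  obtain ⟨E, hE, hax, htrans⟩ := exists_isTreeSet hvf hfg
  obtain ⟨B, hB, hconj⟩ := hax.exists_finite_conj_mem hvf hfg hE
  obtain ⟨R, hRE, hR, F, hF, hF₁, hinj⟩ := exists_finite_forall_injective_of_finite_centralizer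
    (N := G) hfg hE (fun _ hv => hax.finite_stabilizer_of_isVertex hvf hE hv) hB hconj
  refine ⟨(fun D => (MulAction.stabilizer G D : Set G)) '' R, hR.image _,
    Set.forall_mem_image.2 fun D hD => hax.finite_stabilizer hvf hE (hRE hD),
    Set.forall_mem_image.2 fun D hD =>
      finite_edgeCentralizer hvf hco hout hE hax htrans (hRE hD), F, hF, hF₁, fun φ hφR hφF => ?_⟩
  have hφ := hinj φ (fun D hD => hφR _ ⟨D, hD, rfl⟩) hφF
  exact ⟨hφ, hco φ hφ⟩

end Prime

/-- A finitely generated co-Hopfian virtually free group with finite outer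
automorphism group is a prime model: it elementarily embeds into every group
elementarily equivalent to it. -/
theorem coHopfian_outFinite_prime
    (G : Type*) [Group G] (hfg : Group.FG G) (hvf : VirtuallyFree G)
    (hco : CoHopfian G) (hout : OutFinite G) :
    ∀ (G' : Type*) [Group G'], (G ≅[groupLang] G') → Nonempty (G ↪ₑ[groupLang] G') := by
  intro G' _ h
  have := hvf.isFinitelyPresented hfg
  obtain ⟨R, hR, hRfin, hcent, F, hF, hF₁, hbij⟩ :=
    exists_finite_forall_bijective hfg hvf hco hout
  exact nonempty_elementaryEmbedding_of_forall_bijective hR hRfin hcent hF hF₁ hbij h
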